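/- arXiv:2109.02835 — 2 statements merged into one kernel-verified Lean document; each statement's English description precedes it below -/
import Mathlib

section
/- For every nonnegative integer k there exists a family (P_e) of positive rational numbers, indexed by the covering edges e of L7(k), with the following property: let V be the complex vector space with basis {v_t : t ∈ L7(k)} and, for each node i of the E7 Dynkin diagram, define linear operators on V by X_i v_r := Σ √(P_e)·v_s (sum over color-i edges e: r ⋖ s out of r), Y_i v_s := Σ √(P_e)·v_r (sum over color-i edges e: r ⋖ s into s), and H_i v_t := m_i(t)·v_t; then there is a Lie algebra homomorphism φ : 𝔤(E7) → End(V) with φ(x_i) = X_i, φ(y_i) = Y_i, φ(h_i) = H_i for every node i. Moreover, for any such family and homomorphism, the resulting 𝔤(E7)-module V is irreducible (its only 𝔤(E7)-invariant subspaces are 0 and V) and has highest weight kω_1: the vector v_{t_max} indexed by the maximal element t_max of L7(k) satisfies X_i v_{t_max} = 0 for every node i, H_1 v_{t_max} = k·v_{t_max}, and H_j v_{t_max} = 0 for every node j ≠ 1. -/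
noncomputable section

namespace CL

variable {N : Type} [DecidableEq N] [Fintype N]

/-- One-step relation generating the partial order on the poset of positions. -/
def step (adj : N → N → Prop) (pos : Finset (N × ℕ)) (x y : N × ℕ) : Prop :=
  x ∈ pos ∧ y ∈ pos ∧ adj x.1 y.1 ∧ y.2 = x.2 + 1

/-- The partial order on positions, generated by `step`. -/
def ple (adj : N → N → Prop) (pos : Finset (N × ℕ)) : N × ℕ → N × ℕ → Prop :=
  Relation.ReflTransGen (step adj pos)

/-- The lattice of `ℕ`-labellings of the positions which are bounded by `k`, order-reversing,
and satisfy a further constraint `extra`. -/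
def Elt (adj : N → N → Prop) (pos : Finset (N × ℕ)) (k : ℕ)
    (extra : ({x : N × ℕ // x ∈ pos} → ℕ) → Prop) : Type :=
  {c : {x : N × ℕ // x ∈ pos} → ℕ //
    (∀ x, c x ≤ k) ∧ (∀ x y, ple adj pos y.1 x.1 → c x ≤ c y) ∧ extra c}

variable {adj : N → N → Prop} {pos : Finset (N × ℕ)} {k : ℕ}
  {extra : ({x : N × ℕ // x ∈ pos} → ℕ) → Prop}

instance : Finite (Elt adj pos k extra) := by
  apply Finite.of_injective
    (fun c : Elt adj pos k extra =>
      fun x => (⟨c.1 x, Nat.lt_succ_of_le (c.2.1 x)⟩ : Fin (k + 1)))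
  intro c d h
  apply Subtype.ext
  funext x
  exact congrArg Fin.val (congrFun h x)

instance : Fintype (Elt adj pos k extra) := Fintype.ofFinite _

instance : DecidableEq (Elt adj pos k extra) := by unfold Elt; infer_instance

/-- Componentwise comparison of labellings. -/
def elLe (r s : Elt adj pos k extra) : Prop := ∀ x, r.1 x ≤ s.1 x

/-- The covering edge of color `i`: exactly one entry, at a position of color `i`,
is increased by one. -/
def edge (i : N) (r s : Elt adj pos k extra) : Prop :=
  ∃ x : {x : N × ℕ // x ∈ pos}, x.1.1 = i ∧ s.1 x = r.1 x + 1 ∧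
    ∀ y, y ≠ x → s.1 y = r.1 y

instance (i : N) (r s : Elt adj pos k extra) : Decidable (edge i r s) := by
  unfold edge; infer_instance

/-- The rank function: the sum of all entries. -/
def rk (t : Elt adj pos k extra) : ℕ := ∑ x ∈ pos.attach, t.1 x

/-- The connected component of `t` in the graph of color-`i` covering edges. -/
def comp (i : N) (t : Elt adj pos k extra) : Set (Elt adj pos k extra) :=
  {s | Relation.ReflTransGen (fun a b => edge i a b ∨ edge i b a) t s}

/-- The integer `m_i(t) = (ρ(t) − min ρ on comp_i(t)) − (max ρ on comp_i(t) − ρ(t))`. -/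
def mwt (i : N) (t : Elt adj pos k extra) : ℤ :=
  ((rk t : ℤ) - ((sInf (rk '' comp i t) : ℕ) : ℤ)) -
    (((sSup (rk '' comp i t) : ℕ) : ℤ) - (rk t : ℤ))

end CL

namespace CL

/-- Generators `x_i, y_i, h_i` for the Serre presentation. -/
inductive SGen (I : Type) : Type
  | X : I → SGen I
  | Y : I → SGen I
  | H : I → SGen I

variable {I : Type}

/-- The generator `x_i` in the free Lie algebra. -/
def gx (i : I) : FreeLieAlgebra ℂ (SGen I) := FreeLieAlgebra.of ℂ (SGen.X i)

/-- The generator `y_i` in the free Lie algebra. -/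
def gy (i : I) : FreeLieAlgebra ℂ (SGen I) := FreeLieAlgebra.of ℂ (SGen.Y i)

/-- The generator `h_i` in the free Lie algebra. -/
def gh (i : I) : FreeLieAlgebra ℂ (SGen I) := FreeLieAlgebra.of ℂ (SGen.H i)

/-- The Serre relations determined by the matrix `A`:
`[h_i,h_j] = 0`; `[x_i,y_i] = h_i` and `[x_i,y_j] = 0` for `i ≠ j`;
`[h_i,x_j] = A_{j,i}·x_j`; `[h_i,y_j] = −A_{j,i}·y_j`; and
`ad(x_i)^{1−A_{j,i}}(x_j) = 0 = ad(y_i)^{1−A_{j,i}}(y_j)` for `i ≠ j`. -/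
def serreSet (A : I → I → ℤ) : Set (FreeLieAlgebra ℂ (SGen I)) :=
  {z | ∃ i j : I, z = ⁅gh i, gh j⁆} ∪
  {z | ∃ i : I, z = ⁅gx i, gy i⁆ - gh i} ∪
  {z | ∃ i j : I, i ≠ j ∧ z = ⁅gx i, gy j⁆} ∪
  {z | ∃ i j : I, z = ⁅gh i, gx j⁆ - (A j i) • gx j} ∪
  {z | ∃ i j : I, z = ⁅gh i, gy j⁆ + (A j i) • gy j} ∪
  {z | ∃ i j : I, i ≠ j ∧
    z = ((LieAlgebra.ad ℂ (FreeLieAlgebra ℂ (SGen I)) (gx i)) ^ (1 - A j i).toNat) (gx j)} ∪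
  {z | ∃ i j : I, i ≠ j ∧
    z = ((LieAlgebra.ad ℂ (FreeLieAlgebra ℂ (SGen I)) (gy i)) ^ (1 - A j i).toNat) (gy j)}

/-- The Lie ideal generated by the Serre relations. -/
def serreIdeal (A : I → I → ℤ) : LieIdeal ℂ (FreeLieAlgebra ℂ (SGen I)) :=
  LieSubmodule.lieSpan ℂ _ (serreSet A)

/-- The Lie algebra `𝔤(A)` presented by generators `x_i, y_i, h_i` subject to
the Serre relations determined by `A`. -/
abbrev gLie (A : I → I → ℤ) : Type := FreeLieAlgebra ℂ (SGen I) ⧸ serreIdeal A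

/-- The image of `x_i` in `𝔤(A)`. -/
def px (A : I → I → ℤ) (i : I) : gLie A := LieSubmodule.Quotient.mk (N := serreIdeal A) (gx i)

/-- The image of `y_i` in `𝔤(A)`. -/
def py (A : I → I → ℤ) (i : I) : gLie A := LieSubmodule.Quotient.mk (N := serreIdeal A) (gy i)

/-- The image of `h_i` in `𝔤(A)`. -/
def ph (A : I → I → ℤ) (i : I) : gLie A := LieSubmodule.Quotient.mk (N := serreIdeal A) (gh i)

end CL

namespace CL

variable {N : Type} [DecidableEq N] [Fintype N]
variable {adj : N → N → Prop} {pos : Finset (N × ℕ)} {k : ℕ}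
  {extra : ({x : N × ℕ // x ∈ pos} → ℕ) → Prop}

/-- The raising operator `x_i·`, with coefficient `√(P_e)` on each color-`i` edge `e`. -/
def opX (P : Elt adj pos k extra → Elt adj pos k extra → ℚ) (i : N) :
    Module.End ℂ (Elt adj pos k extra → ℂ) :=
  Matrix.mulVecLin fun s r => if edge i r s then (↑(Real.sqrt (P r s)) : ℂ) else 0

/-- The lowering operator `y_i·`, with coefficient `√(P_e)` on each color-`i` edge `e`. -/
def opY (P : Elt adj pos k extra → Elt adj pos k extra → ℚ) (i : N) :
    Module.End ℂ (Elt adj pos k extra → ℂ) :=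
  Matrix.mulVecLin fun r s => if edge i r s then (↑(Real.sqrt (P r s)) : ℂ) else 0

/-- The diagonal operator `h_i·`, acting on `v_t` by the eigenvalue `m_i(t)`. -/
def opH (i : N) : Module.End ℂ (Elt adj pos k extra → ℂ) :=
  Matrix.mulVecLin (Matrix.diagonal fun t => ((mwt i t : ℤ) : ℂ))

end CL

/-! ### Type `E₇` data -/

/-- The nodes `1, 2, 3, 4, 5, 5', 6'` of the `E₇` Dynkin diagram. -/
inductive N7 : Type
  | n1 | n2 | n3 | n4 | n5 | n5p | n6p
  deriving DecidableEq

instance : Fintype N7 where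
  elems := Finset.mk (↑[N7.n1, N7.n2, N7.n3, N7.n4, N7.n5, N7.n5p, N7.n6p]) (by decide)
  complete := by intro x; cases x <;> decide

open N7

/-- Adjacency in the `E₇` Dynkin diagram: edges `1-2, 2-3, 3-4, 4-5, 4-5', 5'-6'`. -/
abbrev adj7 : N7 → N7 → Prop := fun a b =>
  (a, b) ∈ ([(n1, n2), (n2, n3), (n3, n4), (n4, n5), (n4, n5p), (n5p, n6p)] : List (N7 × N7)) ∨
  (b, a) ∈ ([(n1, n2), (n2, n3), (n3, n4), (n4, n5), (n4, n5p), (n5p, n6p)] : List (N7 × N7))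

/-- The 27 (color, rank) positions of the minuscule poset `P₇ = P_{E₇}(ω₁)`. -/
def pos7 : Finset (N7 × ℕ) :=
  {(n1, 0), (n2, 1), (n3, 2), (n4, 3), (n5, 4), (n5p, 4), (n4, 5), (n6p, 5), (n3, 6),
   (n5p, 6), (n2, 7), (n4, 7), (n1, 8), (n3, 8), (n5, 8), (n2, 9), (n4, 9), (n3, 10),
   (n5p, 10), (n4, 11), (n6p, 11), (n5, 12), (n5p, 12), (n4, 13), (n3, 14), (n2, 15), (n1, 16)}

/-- The lattice `L7(k) = L_{E₇}(kω₁)` of order-reversing labellings of `P₇` by `{0,…,k}`. -/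
abbrev L7 (k : ℕ) : Type := CL.Elt adj7 pos7 k (fun _ => True)

/-- The Cartan matrix of type `E₇`, indexed by the nodes. -/
def A7 : N7 → N7 → ℤ := fun i j => if i = j then 2 else if adj7 i j then -1 else 0

/-- The maximal element of `L7(k)`: the constant function with value `k`. -/
def top7 (k : ℕ) : L7 k :=
  ⟨fun _ => k, fun _ => le_rfl, fun _ _ _ => le_rfl, trivial⟩

attribute [local instance 100] LieRing.ofAssociativeRing

/-! ### Abstract tools -/

namespace E7aux

open Polynomial in
/-- Sum of residues, for pairwise distinct nodes. -/
theorem lagrange_aux {ι : Type*} [DecidableEq ι] (G : Finset ι) (v w : ι → ℚ)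
    (hinj : Set.InjOn v G) :
    ∑ p ∈ G, (∏ q ∈ G, (v p - w q)) / ∏ q ∈ G.erase p, (v p - v q) = ∑ p ∈ G, (v p - w p) := by
  rcases G.eq_empty_or_nonempty with rfl | hne
  · simp
  have hpos : 0 < G.card := hne.card_pos
  have hdeg : (∏ q ∈ G, (X - C (w q)) - ∏ q ∈ G, (X - C (v q)) : ℚ[X]).degree < G.card := by
    have h1 : (∏ q ∈ G, (X - C (w q)) : ℚ[X]).degree = G.card := by
      rw [degree_prod]; simp
    have h2 : (∏ q ∈ G, (X - C (v q)) : ℚ[X]).degree = G.card := by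
      rw [degree_prod]; simp
    have := degree_sub_lt_left (h1.trans h2.symm) (monic_prod_X_sub_C w G).ne_zero
      ((monic_prod_X_sub_C w G).leadingCoeff.trans (monic_prod_X_sub_C v G).leadingCoeff.symm)
    rwa [h1] at this
  have key := Lagrange.coeff_eq_sum hinj hdeg
  rw [coeff_sub, prod_X_sub_C_coeff_card_pred _ _ hpos, prod_X_sub_C_coeff_card_pred _ _ hpos]
    at key
  rw [Finset.sum_sub_distrib]
  rw [show ∑ p ∈ G, v p - ∑ p ∈ G, w p = - ∑ p ∈ G, w p - - ∑ p ∈ G, v p by ring, key]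
  apply Finset.sum_congr rfl
  intro p hp
  congr 1
  rw [eval_sub, eval_prod, eval_prod]
  rw [Finset.prod_eq_zero hp (f := fun j => eval (v p) (X - C (v j))) (by simp)]
  simp

/-- Sum of residues, allowing cancelling pairs. -/
theorem residue_sum {ι : Type*} [DecidableEq ι] (S : Finset ι) (v w : ι → ℚ)
    (h : ∀ p ∈ S, v p ≠ w p → ∀ q ∈ S, q ≠ p → v p ≠ v q) :
    ∑ p ∈ S, (∏ q ∈ S, (v p - w q)) / ∏ q ∈ S.erase p, (v p - v q) = ∑ p ∈ S, (v p - w p) := by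
  set G := S.filter (fun p => v p ≠ w p) with hG
  have hGS : G ⊆ S := Finset.filter_subset _ _
  have hinj : Set.InjOn v G := by
    intro p hp q hq hpq
    by_contra hne
    have hp' := (Finset.mem_filter.1 (Finset.mem_coe.1 hp))
    have hq' := (Finset.mem_filter.1 (Finset.mem_coe.1 hq))
    exact h p hp'.1 hp'.2 q hq'.1 (Ne.symm hne) hpq
  have key := lagrange_aux G v w hinj
  have e2 : ∑ p ∈ G, (v p - w p) = ∑ p ∈ S, (v p - w p) := by
    apply Finset.sum_subset hGS
    intro p hp hpG
    have : v p = w p := by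
      by_contra hne
      exact hpG (Finset.mem_filter.2 ⟨hp, hne⟩)
    rw [this, sub_self]
  rw [← e2, ← key]
  symm
  have e1 : ∑ p ∈ G, (∏ q ∈ S, (v p - w q)) / ∏ q ∈ S.erase p, (v p - v q)
      = ∑ p ∈ S, (∏ q ∈ S, (v p - w q)) / ∏ q ∈ S.erase p, (v p - v q) := by
    apply Finset.sum_subset hGS
    intro p hp hpG
    have : v p = w p := by
      by_contra hne
      exact hpG (Finset.mem_filter.2 ⟨hp, hne⟩)
    rw [Finset.prod_eq_zero hp (by rw [this, sub_self]), zero_div]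
  rw [← e1]
  apply Finset.sum_congr rfl
  intro p hp
  have hp' := (Finset.mem_filter.1 hp)
  have hsub : G.erase p ⊆ S.erase p := Finset.erase_subset_erase _ hGS
  rw [← Finset.prod_sdiff hGS, ← Finset.prod_sdiff hsub]
  have hsd : S.erase p \ G.erase p = S \ G := by
    ext q
    simp only [Finset.mem_sdiff, Finset.mem_erase]
    constructor
    · rintro ⟨⟨h1, h2⟩, h3⟩
      exact ⟨h2, fun hh => h3 ⟨h1, hh⟩⟩
    · rintro ⟨h1, h2⟩
      refine ⟨⟨?_, h1⟩, fun hh => h2 hh.2⟩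
      rintro rfl
      exact h2 hp
  rw [hsd]
  have hcancel : ∏ q ∈ S \ G, (v p - w q) = ∏ q ∈ S \ G, (v p - v q) := by
    apply Finset.prod_congr rfl
    intro q hq
    have hq' := Finset.mem_sdiff.1 hq
    have : v q = w q := by
      by_contra hne
      exact hq'.2 (Finset.mem_filter.2 ⟨hq'.1, hne⟩)
    rw [this]
  rw [hcancel, mul_div_mul_left]
  rw [Finset.prod_ne_zero_iff]
  intro q hq
  have hq' := Finset.mem_sdiff.1 hq
  apply sub_ne_zero.2
  apply h p hp'.1 hp'.2 q hq'.1
  rintro rfl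
  exact hq'.2 hp

/-- The `sl₂` argument for the Serre relations, in a finite-dimensional Lie algebra. -/
theorem serre_of_sl2 {L : Type*} [LieRing L] [LieAlgebra ℂ L] [FiniteDimensional ℂ L]
    (e f h x : L) (a : ℤ) (ha : a = 0 ∨ a = -1)
    (hef : ⁅e, f⁆ = h) (hhe : ⁅h, e⁆ = (2 : ℤ) • e) (hhf : ⁅h, f⁆ = -((2 : ℤ) • f))
    (hfx : ⁅f, x⁆ = 0) (hhx : ⁅h, x⁆ = a • x) :
    ((LieAlgebra.ad ℂ L e) ^ (1 - a).toNat) x = 0 := by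
  by_cases h0 : h = 0
  · have he : e = 0 := by
      rw [h0, zero_lie] at hhe
      have h2 : (2 : ℂ) • e = 0 := by
        rw [two_smul]; rw [two_smul] at hhe; exact hhe.symm
      exact (smul_eq_zero.1 h2).resolve_left (by norm_num)
    subst he
    rcases ha with rfl | rfl
    · simp
    · rw [show (1 - (-1) : ℤ).toNat = 2 from rfl]; simp [pow_two]
  have t : IsSl2Triple (-h) f e := by
    refine ⟨neg_ne_zero.2 h0, by rw [← hef, lie_skew], ?_, ?_⟩
    · rw [neg_lie, hhf, neg_neg]; norm_cast
    · rw [neg_lie, hhe]; norm_cast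
  have hfe : ⁅f, e⁆ = -h := by rw [← hef, lie_skew]
  by_contra hne
  rcases ha with rfl | rfl
  · rw [show (1 - 0 : ℤ).toNat = 1 from rfl, pow_one, LieAlgebra.ad_apply] at hne
    have P : IsSl2Triple.HasPrimitiveVectorWith t ⁅e, x⁆ (-2 : ℂ) := by
      refine ⟨hne, ?_, ?_⟩
      · rw [neg_lie, leibniz_lie, hhe, hhx]
        simp only [zero_smul, lie_zero, add_zero, smul_lie]
        rw [neg_smul, two_smul, two_smul]
      · rw [leibniz_lie, hfe, hfx, neg_lie, hhx]; simp
    obtain ⟨n, hn⟩ := P.exists_nat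
    have h3 : ((n + 2 : ℕ) : ℂ) = 0 := by push_cast; rw [← hn]; ring
    rw [Nat.cast_eq_zero] at h3
    omega
  · rw [show (1 - (-1) : ℤ).toNat = 2 from rfl, pow_two, Module.End.mul_apply,
      LieAlgebra.ad_apply, LieAlgebra.ad_apply] at hne
    have hw : ⁅h, ⁅e, x⁆⁆ = ⁅e, x⁆ := by
      rw [leibniz_lie, hhe, hhx]
      rw [two_smul, add_lie, neg_one_smul, lie_neg]
      abel
    have hfw : ⁅f, ⁅e, x⁆⁆ = x := by
      rw [leibniz_lie, hfe, hfx, neg_lie, hhx]; simp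
    have P : IsSl2Triple.HasPrimitiveVectorWith t ⁅e, ⁅e, x⁆⁆ (-3 : ℂ) := by
      refine ⟨hne, ?_, ?_⟩
      · rw [neg_lie, leibniz_lie, hhe, hw]
        simp only [smul_lie]
        module
      · rw [leibniz_lie, hfe, hfw, neg_lie, hw, neg_add_cancel]
    obtain ⟨n, hn⟩ := P.exists_nat
    have h3 : ((n + 3 : ℕ) : ℂ) = 0 := by push_cast; rw [← hn]; ring
    rw [Nat.cast_eq_zero] at h3
    omega

/-- Homomorphisms out of the Serre presentation. -/
theorem exists_gLie_hom {I : Type} {L : Type*} [LieRing L] [LieAlgebra ℂ L]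
    [FiniteDimensional ℂ L] (A : I → I → ℤ) (hA : ∀ i j, i ≠ j → A j i = 0 ∨ A j i = -1)
    (hA2 : ∀ i, A i i = 2)
    (x y h : I → L)
    (hhh : ∀ i j, ⁅h i, h j⁆ = 0)
    (hxy : ∀ i, ⁅x i, y i⁆ = h i)
    (hxy' : ∀ i j, i ≠ j → ⁅x i, y j⁆ = 0)
    (hhx : ∀ i j, ⁅h i, x j⁆ = A j i • x j)
    (hhy : ∀ i j, ⁅h i, y j⁆ = -(A j i • y j)) :
    ∃ φ : CL.gLie A →ₗ⁅ℂ⁆ L, ∀ i, φ (CL.px A i) = x i ∧ φ (CL.py A i) = y i ∧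
      φ (CL.ph A i) = h i := by
  let g : CL.SGen I → L := fun s => match s with
    | .X i => x i
    | .Y i => y i
    | .H i => h i
  let ψ : FreeLieAlgebra ℂ (CL.SGen I) →ₗ⁅ℂ⁆ L := FreeLieAlgebra.lift ℂ g
  have gx : ∀ i, ψ (CL.gx i) = x i := fun i => FreeLieAlgebra.lift_of_apply g _
  have gy : ∀ i, ψ (CL.gy i) = y i := fun i => FreeLieAlgebra.lift_of_apply g _
  have gh : ∀ i, ψ (CL.gh i) = h i := fun i => FreeLieAlgebra.lift_of_apply g _
  have hpow : ∀ (u z : FreeLieAlgebra ℂ (CL.SGen I)) (n : ℕ),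
      ψ (((LieAlgebra.ad ℂ _ u) ^ n) z) = ((LieAlgebra.ad ℂ L (ψ u)) ^ n) (ψ z) := by
    intro u z n
    induction n with
    | zero => simp
    | succ n ih =>
      rw [pow_succ', pow_succ', Module.End.mul_apply, Module.End.mul_apply, ← ih,
        LieAlgebra.ad_apply, LieAlgebra.ad_apply, LieHom.map_lie]
  have hle : CL.serreIdeal A ≤ ψ.ker := by
    unfold CL.serreIdeal
    rw [LieSubmodule.lieSpan_le]
    intro z hz
    rw [SetLike.mem_coe, LieHom.mem_ker]
    rcases hz with (((((⟨i, j, rfl⟩ | ⟨i, rfl⟩) | ⟨i, j, hij, rfl⟩) | ⟨i, j, rfl⟩) | ⟨i, j, rfl⟩) |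
      ⟨i, j, hij, rfl⟩) | ⟨i, j, hij, rfl⟩
    · rw [LieHom.map_lie, gh, gh, hhh]
    · rw [map_sub, LieHom.map_lie, gx, gy, gh, hxy, sub_self]
    · rw [LieHom.map_lie, gx, gy, hxy' i j hij]
    · rw [map_sub, LieHom.map_lie, map_zsmul, gh, gx, hhx, sub_self]
    · rw [map_add, LieHom.map_lie, map_zsmul, gh, gy, hhy, neg_add_cancel]
    · rw [hpow, gx, gx]
      refine serre_of_sl2 (x i) (y i) (h i) (x j) _ (hA i j hij) (hxy i) ?_ ?_ ?_ (hhx i j)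
      · rw [hhx, hA2]
      · rw [hhy, hA2]
      · rw [← lie_skew, hxy' j i hij.symm, neg_zero]
    · rw [hpow, gy, gy]
      refine serre_of_sl2 (y i) (x i) (-h i) (y j) _ (hA i j hij) ?_ ?_ ?_ (hxy' i j hij) ?_
      · rw [← lie_skew, hxy]
      · rw [neg_lie, hhy, hA2, neg_neg]
      · rw [neg_lie, hhx, hA2]
      · rw [neg_lie, hhy, neg_neg]
  have hle' : (CL.serreIdeal A).toSubmodule ≤ LinearMap.ker (ψ : _ →ₗ[ℂ] L) := by
    intro z hz
    have := hle hz
    rw [LieHom.mem_ker] at this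
    exact this
  let φ : CL.gLie A →ₗ⁅ℂ⁆ L :=
    { Submodule.liftQ (CL.serreIdeal A).toSubmodule (ψ : _ →ₗ[ℂ] L) hle' with
      map_lie' := by
        intro u w
        induction u using Submodule.Quotient.induction_on with | _ u
        induction w using Submodule.Quotient.induction_on with | _ w
        exact LieHom.map_lie ψ u w }
  refine ⟨φ, fun i => ⟨gx i, gy i, gh i⟩⟩

end E7aux

/-! ### Combinatorics of `P₇` -/

namespace E7aux

/-- Positions of color `i`. -/
def col (i : N7) : Finset (N7 × ℕ) := pos7.filter (fun p => p.1 = i)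

/-- Positions whose color is adjacent to `i`. -/
def nb (i : N7) : Finset (N7 × ℕ) := pos7.filter (fun p => adj7 i p.1)

/-- Upper covers. -/
def up (p : N7 × ℕ) : Finset (N7 × ℕ) := pos7.filter (fun q => adj7 p.1 q.1 ∧ q.2 = p.2 + 1)

/-- Lower covers. -/
def dn (p : N7 × ℕ) : Finset (N7 × ℕ) := pos7.filter (fun q => adj7 q.1 p.1 ∧ p.2 = q.2 + 1)

/-- Upper bound for the value at `p` imposed by its lower covers. -/
def hi (k : ℕ) (g : N7 × ℕ → ℕ) (p : N7 × ℕ) : ℕ := (dn p).fold min k g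

/-- Lower bound for the value at `p` imposed by its upper covers. -/
def lo (g : N7 × ℕ → ℕ) (p : N7 × ℕ) : ℕ := (up p).fold max 0 g

theorem min_max_mul {M : Type*} [CommMonoid M] (f : ℕ → M) (a b : ℕ) :
    f (min a b) * f (max a b) = f a * f b := by
  rcases le_total a b with h | h
  · simp [h]
  · simp [h, mul_comm]

theorem max_min_mul {M : Type*} [CommMonoid M] (f : ℕ → M) (a b : ℕ) :
    f (max a b) * f (min a b) = f a * f b := by
  rw [mul_comm, min_max_mul]

theorem dn_tab :
    dn (n1, 0) = ∅ ∧ dn (n2, 1) = {(n1, 0)} ∧ dn (n3, 2) = {(n2, 1)} ∧ dn (n4, 3) = {(n3, 2)} ∧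
    dn (n5, 4) = {(n4, 3)} ∧ dn (n5p, 4) = {(n4, 3)} ∧ dn (n4, 5) = {(n5, 4), (n5p, 4)} ∧
    dn (n6p, 5) = {(n5p, 4)} ∧ dn (n3, 6) = {(n4, 5)} ∧ dn (n5p, 6) = {(n4, 5), (n6p, 5)} ∧
    dn (n2, 7) = {(n3, 6)} ∧ dn (n4, 7) = {(n3, 6), (n5p, 6)} ∧ dn (n1, 8) = {(n2, 7)} ∧
    dn (n3, 8) = {(n2, 7), (n4, 7)} ∧ dn (n5, 8) = {(n4, 7)} ∧ dn (n2, 9) = {(n1, 8), (n3, 8)} ∧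
    dn (n4, 9) = {(n3, 8), (n5, 8)} ∧ dn (n3, 10) = {(n2, 9), (n4, 9)} ∧
    dn (n5p, 10) = {(n4, 9)} ∧ dn (n4, 11) = {(n3, 10), (n5p, 10)} ∧ dn (n6p, 11) = {(n5p, 10)} ∧
    dn (n5, 12) = {(n4, 11)} ∧ dn (n5p, 12) = {(n4, 11), (n6p, 11)} ∧
    dn (n4, 13) = {(n5, 12), (n5p, 12)} ∧ dn (n3, 14) = {(n4, 13)} ∧ dn (n2, 15) = {(n3, 14)} ∧
    dn (n1, 16) = {(n2, 15)} := by
  refine ⟨?_, ?_, ?_, ?_, ?_, ?_, ?_, ?_, ?_, ?_, ?_, ?_, ?_, ?_, ?_, ?_, ?_, ?_, ?_, ?_, ?_, ?_,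
    ?_, ?_, ?_, ?_, ?_⟩ <;> decide +kernel

theorem up_tab :
    up (n1, 0) = {(n2, 1)} ∧ up (n2, 1) = {(n3, 2)} ∧ up (n3, 2) = {(n4, 3)} ∧
    up (n4, 3) = {(n5, 4), (n5p, 4)} ∧
    up (n5, 4) = {(n4, 5)} ∧ up (n5p, 4) = {(n4, 5), (n6p, 5)} ∧ up (n4, 5) = {(n3, 6), (n5p, 6)} ∧
    up (n6p, 5) = {(n5p, 6)} ∧ up (n3, 6) = {(n2, 7), (n4, 7)} ∧ up (n5p, 6) = {(n4, 7)} ∧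
    up (n2, 7) = {(n1, 8), (n3, 8)} ∧ up (n4, 7) = {(n3, 8), (n5, 8)} ∧ up (n1, 8) = {(n2, 9)} ∧
    up (n3, 8) = {(n2, 9), (n4, 9)} ∧ up (n5, 8) = {(n4, 9)} ∧ up (n2, 9) = {(n3, 10)} ∧
    up (n4, 9) = {(n3, 10), (n5p, 10)} ∧ up (n3, 10) = {(n4, 11)} ∧
    up (n5p, 10) = {(n4, 11), (n6p, 11)} ∧ up (n4, 11) = {(n5, 12), (n5p, 12)} ∧
    up (n6p, 11) = {(n5p, 12)} ∧
    up (n5, 12) = {(n4, 13)} ∧ up (n5p, 12) = {(n4, 13)} ∧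
    up (n4, 13) = {(n3, 14)} ∧ up (n3, 14) = {(n2, 15)} ∧ up (n2, 15) = {(n1, 16)} ∧
    up (n1, 16) = ∅ := by
  refine ⟨?_, ?_, ?_, ?_, ?_, ?_, ?_, ?_, ?_, ?_, ?_, ?_, ?_, ?_, ?_, ?_, ?_, ?_, ?_, ?_, ?_, ?_,
    ?_, ?_, ?_, ?_, ?_⟩ <;> decide +kernel

theorem col_tab : col n1 = {(n1, 0), (n1, 8), (n1, 16)} ∧
    col n2 = {(n2, 1), (n2, 7), (n2, 9), (n2, 15)} ∧
    col n3 = {(n3, 2), (n3, 6), (n3, 8), (n3, 10), (n3, 14)} ∧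
    col n4 = {(n4, 3), (n4, 5), (n4, 7), (n4, 9), (n4, 11), (n4, 13)} ∧
    col n5 = {(n5, 4), (n5, 8), (n5, 12)} ∧
    col n5p = {(n5p, 4), (n5p, 6), (n5p, 10), (n5p, 12)} ∧
    col n6p = {(n6p, 5), (n6p, 11)} := by
  decide +kernel

theorem nb_tab : nb n1 = col n2 ∧ nb n2 = col n1 ∪ col n3 ∧ nb n3 = col n2 ∪ col n4 ∧
    nb n4 = col n3 ∪ (col n5 ∪ col n5p) ∧ nb n5 = col n4 ∧ nb n5p = col n4 ∪ col n6p ∧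
    nb n6p = col n5p := by
  decide +kernel

/-- The bounds imposed by the neighbours of color `i` positions are, with the appropriate rank
shifts, a rearrangement of the values at the neighbours. -/
theorem gap_identity {M : Type*} [CommMonoid M] (k : ℕ) (g : N7 × ℕ → ℕ) (hg : ∀ p, g p ≤ k)
    (f : ℕ → ℕ → M) (i : N7) :
    ∏ x ∈ col i, (f (hi k g x) x.2 * f (lo g x) (x.2 + 2)) =
      (∏ y ∈ nb i, f (g y) (y.2 + 1)) * (if i = n1 then f k 0 * f 0 18 else 1) := by
  obtain ⟨d1, d2, d3, d4, d5, d6, d7, d8, d9, d10, d11, d12, d13, d14, d15, d16, d17, d18, d19,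
    d20, d21, d22, d23, d24, d25, d26, d27⟩ := dn_tab
  obtain ⟨u1, u2, u3, u4, u5, u6, u7, u8, u9, u10, u11, u12, u13, u14, u15, u16, u17, u18, u19,
    u20, u21, u22, u23, u24, u25, u26, u27⟩ := up_tab
  obtain ⟨c1, c2, c3, c4, c5, c6, c7⟩ := col_tab
  obtain ⟨b1, b2, b3, b4, b5, b6, b7⟩ := nb_tab
  have hm : ∀ p, min (g p) k = g p := fun p => min_eq_left (hg p)
  have mm : ∀ (a b r : ℕ) (z : M), f (max a b) r * (f (min a b) r * z) = f a r * (f b r * z) :=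
    fun a b r z => by rw [← mul_assoc, max_min_mul (fun z => f z r) a b, mul_assoc]
  cases i
  · rw [b1, c1, c2]
    simp [hi, lo, d1, d13, d27, u1, u13, u27, hm]
    ac_rfl
  · rw [b2, c1, c2, c3]
    simp [hi, lo, d2, d11, d16, d26, u2, u11, u16, u26, hm]
    simp only [mul_assoc, mm]
    ac_rfl
  · rw [b3, c2, c3, c4]
    simp [hi, lo, d3, d9, d14, d18, d25, u3, u9, u14, u18, u25, hm]
    simp only [mul_assoc, mm]
    ac_rfl
  · rw [b4, c3, c4, c5, c6]
    simp [hi, lo, d4, d7, d12, d17, d20, d24, u4, u7, u12, u17, u20, u24, hm]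
    simp only [mul_assoc, mm]
    ac_rfl
  · rw [b5, c4, c5]
    simp [hi, lo, d5, d15, d22, u5, u15, u22, hm]
    ac_rfl
  · rw [b6, c4, c6, c7]
    simp [hi, lo, d6, d10, d19, d23, u6, u10, u19, u23, hm]
    simp only [mul_assoc, mm]
    ac_rfl
  · rw [b7, c6, c7]
    simp [hi, lo, d8, d21, u8, u21, hm]
    ac_rfl

end E7aux

/-! ### Valid labellings and edge coefficients -/

namespace E7aux

/-- Order-reversing labellings bounded by `k`. -/
structure Valid (k : ℕ) (g : N7 × ℕ → ℕ) : Prop where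
  le : ∀ p, g p ≤ k
  anti : ∀ p ∈ pos7, ∀ q ∈ up p, g q ≤ g p

/-- Positions reachable from `p` by `n` upward steps. -/
def cl : ℕ → N7 × ℕ → Finset (N7 × ℕ)
  | 0, p => {p}
  | n + 1, p => (cl n p).biUnion up

theorem mem_pos_of_up {p q : N7 × ℕ} (h : q ∈ up p) : q ∈ pos7 := (Finset.mem_filter.1 h).1

theorem mem_pos_of_dn {p q : N7 × ℕ} (h : q ∈ dn p) : q ∈ pos7 := (Finset.mem_filter.1 h).1

theorem mem_up_of_dn {p q : N7 × ℕ} (hp : p ∈ pos7) (h : q ∈ dn p) : p ∈ up q :=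
  Finset.mem_filter.2 ⟨hp, (Finset.mem_filter.1 h).2⟩

theorem mem_dn_of_up {p q : N7 × ℕ} (hp : p ∈ pos7) (h : q ∈ up p) : p ∈ dn q :=
  Finset.mem_filter.2 ⟨hp, (Finset.mem_filter.1 h).2⟩

theorem mem_col {i : N7} {p : N7 × ℕ} : p ∈ col i ↔ p ∈ pos7 ∧ p.1 = i := Finset.mem_filter

theorem mem_nb {i : N7} {p : N7 × ℕ} : p ∈ nb i ↔ p ∈ pos7 ∧ adj7 i p.1 := Finset.mem_filter

theorem adj_irrefl : ∀ i : N7, ¬ adj7 i i := by decide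

theorem adj_symm : ∀ i j : N7, adj7 i j → adj7 j i := by decide

theorem Valid.cl_le {k : ℕ} {g : N7 × ℕ → ℕ} (hg : Valid k g) (n : ℕ) (p : N7 × ℕ)
    (hp : p ∈ pos7) : ∀ q ∈ cl n p, q ∈ pos7 ∧ g q ≤ g p := by
  induction n with
  | zero => intro q hq; rw [cl, Finset.mem_singleton] at hq; subst hq; exact ⟨hp, le_rfl⟩
  | succ n ih =>
    intro q hq
    rw [cl, Finset.mem_biUnion] at hq
    obtain ⟨r, hr, hq⟩ := hq
    exact ⟨mem_pos_of_up hq, (hg.anti r (ih r hr).1 q hq).trans (ih r hr).2⟩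

theorem same_color_fact : ∀ p ∈ pos7, ∀ q ∈ pos7, p.1 = q.1 → p.2 < q.2 →
    p.2 + 2 ≤ q.2 ∧ ∃ y ∈ up p, ∃ z ∈ dn q, z ∈ cl (z.2 - y.2) y := by
  decide +kernel

theorem le_hi_iff {k : ℕ} {g : N7 × ℕ → ℕ} {p : N7 × ℕ} {n : ℕ} :
    n ≤ hi k g p ↔ n ≤ k ∧ ∀ q ∈ dn p, n ≤ g q := Finset.le_fold_min _

theorem lt_hi_iff {k : ℕ} {g : N7 × ℕ → ℕ} {p : N7 × ℕ} {n : ℕ} :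
    n < hi k g p ↔ n < k ∧ ∀ q ∈ dn p, n < g q := Finset.lt_fold_min _

theorem lo_le_iff {g : N7 × ℕ → ℕ} {p : N7 × ℕ} {n : ℕ} :
    lo g p ≤ n ↔ ∀ q ∈ up p, g q ≤ n := by
  rw [lo, Finset.fold_max_le]; simp

theorem lo_lt_iff {g : N7 × ℕ → ℕ} {p : N7 × ℕ} {n : ℕ} :
    lo g p < n ↔ 0 < n ∧ ∀ q ∈ up p, g q < n := Finset.fold_max_lt _

theorem Valid.le_hi {k : ℕ} {g : N7 × ℕ → ℕ} (hg : Valid k g) {p : N7 × ℕ} (hp : p ∈ pos7) :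
    g p ≤ hi k g p :=
  le_hi_iff.2 ⟨hg.le p, fun q hq => hg.anti q (mem_pos_of_dn hq) p (mem_up_of_dn hp hq)⟩

theorem Valid.lo_le {k : ℕ} {g : N7 × ℕ → ℕ} (hg : Valid k g) {p : N7 × ℕ} (hp : p ∈ pos7) :
    lo g p ≤ g p :=
  lo_le_iff.2 (hg.anti p hp)

theorem Valid.hi_le_lo {k : ℕ} {g : N7 × ℕ → ℕ} (hg : Valid k g) {p q : N7 × ℕ} (hp : p ∈ pos7)
    (hq : q ∈ pos7) (hc : p.1 = q.1) (hr : p.2 < q.2) : hi k g q ≤ lo g p := by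
  obtain ⟨-, y, hy, z, hz, hyz⟩ := same_color_fact p hp q hq hc hr
  have h1 : hi k g q ≤ g z := (le_hi_iff.1 le_rfl).2 z hz
  have h2 := (hg.cl_le _ y (mem_pos_of_up hy) z hyz).2
  have h3 : g y ≤ lo g p := (lo_le_iff.1 le_rfl) y hy
  omega

/-- Shifted value. -/
def el (g : N7 × ℕ → ℕ) (p : N7 × ℕ) : ℚ := (g p : ℚ) - (p.2 : ℚ) / 2

/-- Pairwise factor in the edge coefficient. -/
def K (p q : N7 × ℕ) (δ : ℚ) : ℚ :=
  (if q.1 = p.1 ∧ q ≠ p then (δ * (δ + 1))⁻¹ else 1) * (if adj7 p.1 q.1 then δ + 1 / 2 else 1)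

/-- The two boundary factors for color `1`. -/
def fl (k : ℕ) (i : N7) (z : ℚ) : ℚ := if i = n1 then (z - k) * (z + 9) else 1

/-- The edge coefficient for raising the value at `p`. -/
def Pc (k : ℕ) (g : N7 × ℕ → ℕ) (p : N7 × ℕ) : ℚ :=
  -(fl k p.1 (el g p) * ∏ q ∈ pos7, K p q (el g p - el g q))

theorem K_diamond (p q : N7 × ℕ) (hpq : p ≠ q) (δ : ℚ) :
    K p q (δ - 1) * K q p (-δ - 1) = K p q δ * K q p (-δ) := by
  unfold K
  by_cases hc : q.1 = p.1
  · have ha : ¬ adj7 p.1 q.1 := by rw [hc]; exact adj_irrefl _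
    have ha' : ¬ adj7 q.1 p.1 := by rw [hc]; exact adj_irrefl _
    have e1 : q.1 = p.1 ∧ q ≠ p := ⟨hc, hpq.symm⟩
    have e2 : p.1 = q.1 ∧ p ≠ q := ⟨hc.symm, hpq⟩
    simp only [if_pos e1, if_pos e2, if_neg ha, if_neg ha', mul_one]
    rw [← mul_inv, ← mul_inv]
    congr 1
    ring
  · have hc' : ¬ p.1 = q.1 := fun h => hc h.symm
    simp only [hc, hc', false_and, if_false, one_mul]
    by_cases ha : adj7 p.1 q.1
    · have ha' := adj_symm _ _ ha
      rw [if_pos ha, if_pos ha', if_pos ha, if_pos ha']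
      ring
    · have ha' : ¬ adj7 q.1 p.1 := fun h => ha (adj_symm _ _ h)
      rw [if_neg ha, if_neg ha', if_neg ha, if_neg ha']

/-- `g'` is obtained from `g` by adding one at `p`. -/
def Add (p : N7 × ℕ) (g g' : N7 × ℕ → ℕ) : Prop := ∀ r, g' r = g r + if r = p then 1 else 0

theorem Add.el_ne {p : N7 × ℕ} {g g' : N7 × ℕ → ℕ} (h : Add p g g') {r : N7 × ℕ} (hr : r ≠ p) :
    el g' r = el g r := by
  simp [el, h r, hr]

theorem Add.el_self {p : N7 × ℕ} {g g' : N7 × ℕ → ℕ} (h : Add p g g') :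
    el g' p = el g p + 1 := by
  simp [el, h p]; ring

theorem Pc_split {k : ℕ} {g g' : N7 × ℕ → ℕ} {p q : N7 × ℕ} (hq : q ∈ pos7) (hpq : p ≠ q)
    (h : Add q g g') :
    ∃ A : ℚ, Pc k g p = A * K p q (el g p - el g q) ∧
      Pc k g' p = A * K p q (el g p - el g q - 1) := by
  refine ⟨-(fl k p.1 (el g p) * ∏ r ∈ pos7.erase q, K p r (el g p - el g r)), ?_, ?_⟩
  · rw [Pc, ← Finset.mul_prod_erase pos7 _ hq]; ring
  · rw [Pc, ← Finset.mul_prod_erase pos7 _ hq, h.el_ne hpq, h.el_self]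
    have : ∏ r ∈ pos7.erase q, K p r (el g p - el g' r)
        = ∏ r ∈ pos7.erase q, K p r (el g p - el g r) := by
      apply Finset.prod_congr rfl
      intro r hr
      rw [h.el_ne (Finset.ne_of_mem_erase hr)]
    rw [this, show el g p - (el g q + 1) = el g p - el g q - 1 by ring]
    ring

theorem Pc_diamond {k : ℕ} {g gp gq : N7 × ℕ → ℕ} {p q : N7 × ℕ} (hp : p ∈ pos7) (hq : q ∈ pos7)
    (hpq : p ≠ q) (h : Add p g gp) (h' : Add q g gq) :
    Pc k gp q * Pc k gq p = Pc k g p * Pc k g q := by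
  obtain ⟨A, a1, a2⟩ := Pc_split (k := k) hq hpq h'
  obtain ⟨B, b1, b2⟩ := Pc_split (k := k) hp hpq.symm h
  have := K_diamond p q hpq (el g p - el g q)
  rw [a1, a2, b1, b2, show el g q - el g p = -(el g p - el g q) by ring]
  linear_combination A * B * this

/-- Numerator polynomial. -/
def Num (k : ℕ) (g : N7 × ℕ → ℕ) (i : N7) (z : ℚ) : ℚ :=
  (∏ y ∈ nb i, (z - el g y + 1 / 2)) * fl k i z

theorem Pc_eq (k : ℕ) (g : N7 × ℕ → ℕ) (p : N7 × ℕ) :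
    Pc k g p = -(Num k g p.1 (el g p) *
      ∏ q ∈ (col p.1).erase p, ((el g p - el g q) * (el g p - el g q + 1))⁻¹) := by
  unfold Pc K Num
  rw [Finset.prod_mul_distrib, ← Finset.prod_filter, ← Finset.prod_filter]
  have : pos7.filter (fun q => q.1 = p.1 ∧ q ≠ p) = (col p.1).erase p := by
    ext q
    simp only [Finset.mem_filter, Finset.mem_erase, mem_col]
    tauto
  rw [this]
  unfold nb
  ring

theorem Num_eq {k : ℕ} {g : N7 × ℕ → ℕ} (hg : ∀ p, g p ≤ k) (i : N7) (z : ℚ) :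
    Num k g i z = ∏ x ∈ col i, ((z - ((hi k g x : ℚ) - (x.2 : ℚ) / 2)) *
      (z - ((lo g x : ℚ) - (x.2 : ℚ) / 2 - 1))) := by
  have := gap_identity k g hg (fun v r => (z - ((v : ℚ) - (r : ℚ) / 2))) i
  have h1 : ∏ x ∈ col i, ((z - ((hi k g x : ℚ) - (x.2 : ℚ) / 2)) *
      (z - ((lo g x : ℚ) - (x.2 : ℚ) / 2 - 1))) =
      ∏ x ∈ col i, ((z - ((hi k g x : ℚ) - (x.2 : ℚ) / 2)) *
        (z - ((lo g x : ℚ) - ((x.2 + 2 : ℕ) : ℚ) / 2))) := by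
    apply Finset.prod_congr rfl
    intro x _
    push_cast
    ring
  rw [h1, this, Num, fl]
  congr 1
  · apply Finset.prod_congr rfl
    intro y _
    rw [el]; push_cast; ring
  · split_ifs
    · push_cast; ring
    · rfl

theorem hi_lo_sum {k : ℕ} {g : N7 × ℕ → ℕ} (hg : ∀ p, g p ≤ k) (i : N7) :
    ∑ x ∈ col i, ((hi k g x : ℤ) + (lo g x : ℤ)) =
      ∑ y ∈ nb i, (g y : ℤ) + if i = n1 then (k : ℤ) else 0 := by
  have := gap_identity k g hg (fun v _ => Multiplicative.ofAdd (v : ℤ)) i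
  have h2 := congrArg Multiplicative.toAdd this
  rw [toAdd_mul, toAdd_prod, toAdd_prod] at h2
  simp only [toAdd_mul, toAdd_ofAdd] at h2
  rw [h2]
  congr 1

theorem color_tri {k : ℕ} {g : N7 × ℕ → ℕ} (hg : Valid k g) {p q : N7 × ℕ} (hp : p ∈ pos7)
    (hq : q ∈ pos7) (hc : p.1 = q.1) (hne : p ≠ q) :
    (p.2 + 2 ≤ q.2 ∧ hi k g q ≤ lo g p) ∨ (q.2 + 2 ≤ p.2 ∧ hi k g p ≤ lo g q) := by
  rcases lt_trichotomy p.2 q.2 with h | h | h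
  · exact Or.inl ⟨(same_color_fact p hp q hq hc h).1, hg.hi_le_lo hp hq hc h⟩
  · exact absurd (Prod.ext hc h) hne
  · exact Or.inr ⟨(same_color_fact q hq p hp hc.symm h).1, hg.hi_le_lo hq hp hc.symm h⟩

theorem Pc_pos {k : ℕ} {g : N7 × ℕ → ℕ} (hg : Valid k g) {p : N7 × ℕ} (hp : p ∈ pos7)
    (hr : g p < hi k g p) : 0 < Pc k g p := by
  rw [Pc_eq, Num_eq hg.le, ← Finset.mul_prod_erase (col p.1) _ (mem_col.2 ⟨hp, rfl⟩), mul_assoc,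
    ← Finset.prod_mul_distrib, ← neg_mul]
  have hlo := hg.lo_le hp
  apply mul_pos
  · have h1 : (g p : ℚ) + 1 ≤ hi k g p := by exact_mod_cast hr
    have h2 : (lo g p : ℚ) ≤ g p := by exact_mod_cast hlo
    rw [← neg_mul]
    apply mul_pos <;> rw [el] <;> linarith
  · apply Finset.prod_pos
    intro q hq
    obtain ⟨hqp, hq⟩ := Finset.mem_erase.1 hq
    obtain ⟨hq, hc⟩ := mem_col.1 hq
    have q1 : (lo g q : ℚ) ≤ g q := by exact_mod_cast hg.lo_le hq
    have q2 : (g q : ℚ) ≤ hi k g q := by exact_mod_cast hg.le_hi hq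
    have h1 : (g p : ℚ) + 1 ≤ hi k g p := by exact_mod_cast hr
    have h2 : (lo g p : ℚ) ≤ g p := by exact_mod_cast hlo
    unfold el
    rcases color_tri hg hp hq hc.symm hqp.symm with ⟨a1, a2⟩ | ⟨a1, a2⟩
    · have a1' : (p.2 : ℚ) + 2 ≤ q.2 := by exact_mod_cast a1
      have a2' : (hi k g q : ℚ) ≤ lo g p := by exact_mod_cast a2
      apply mul_pos
      · apply mul_pos <;> linarith
      · apply inv_pos.2
        apply mul_pos <;> linarith
    · have a1' : (q.2 : ℚ) + 2 ≤ p.2 := by exact_mod_cast a1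
      have a2' : (hi k g p : ℚ) ≤ lo g q := by exact_mod_cast a2
      apply mul_pos
      · apply mul_pos_of_neg_of_neg <;> linarith
      · apply inv_pos.2
        apply mul_pos_of_neg_of_neg <;> linarith

theorem Pc_zero {k : ℕ} {g : N7 × ℕ → ℕ} (hg : Valid k g) {p : N7 × ℕ} (hp : p ∈ pos7)
    (hr : g p = hi k g p) : Pc k g p = 0 := by
  rw [Pc_eq, Num_eq hg.le, Finset.prod_eq_zero (mem_col.2 ⟨hp, rfl⟩), zero_mul, neg_zero]
  rw [el, hr]; ring

/-- Down coefficient at `p`. -/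
def Dc (k : ℕ) (g : N7 × ℕ → ℕ) (p : N7 × ℕ) : ℚ :=
  -(Num k g p.1 (el g p - 1) *
      ∏ q ∈ (col p.1).erase p, ((el g p - el g q - 1) * (el g p - el g q))⁻¹)

theorem Dc_zero {k : ℕ} {g : N7 × ℕ → ℕ} (hg : Valid k g) {p : N7 × ℕ} (hp : p ∈ pos7)
    (hr : g p = lo g p) : Dc k g p = 0 := by
  rw [Dc, Num_eq hg.le, Finset.prod_eq_zero (mem_col.2 ⟨hp, rfl⟩), zero_mul, neg_zero]
  rw [el, hr]; ring

theorem Dc_eq {k : ℕ} {g g' : N7 × ℕ → ℕ} {p : N7 × ℕ} (h : Add p g' g) :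
    Dc k g p = Pc k g' p := by
  rw [Pc_eq, Dc]
  have e : el g p = el g' p + 1 := h.el_self
  congr 2
  · rw [e, add_sub_cancel_right, Num, Num]
    congr 1
    apply Finset.prod_congr rfl
    intro y hy
    rw [h.el_ne]
    rintro rfl
    exact adj_irrefl _ (mem_nb.1 hy).2
  · apply Finset.prod_congr rfl
    intro q hq
    rw [e, h.el_ne (Finset.ne_of_mem_erase hq)]
    congr 1
    ring

theorem prod_erase_ite {ι : Type*} [DecidableEq ι] (T : Finset ι) (p : ι) (hp : p ∈ T)
    (F : ι → ℚ) : ∏ q ∈ T.erase p, F q = ∏ q ∈ T, if q = p then 1 else F q := by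
  rw [← Finset.mul_prod_erase T _ hp, if_pos rfl, one_mul]
  apply Finset.prod_congr rfl
  intro q hq
  rw [if_neg (Finset.ne_of_mem_erase hq)]

theorem residue_color {k : ℕ} {g : N7 × ℕ → ℕ} (hg : Valid k g) (i : N7) :
    ∑ x ∈ col i, (Dc k g x - Pc k g x) =
      ∑ x ∈ col i, (2 * (g x : ℚ) - (hi k g x : ℚ) - (lo g x : ℚ)) := by
  let v : (N7 × ℕ) × Bool → ℚ := fun p => if p.2 then el g p.1 else el g p.1 - 1
  let w : (N7 × ℕ) × Bool → ℚ := fun p =>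
    if p.2 then (hi k g p.1 : ℚ) - (p.1.2 : ℚ) / 2 else (lo g p.1 : ℚ) - (p.1.2 : ℚ) / 2 - 1
  have key := residue_sum (col i ×ˢ (Finset.univ : Finset Bool)) v w ?_
  · rw [Finset.sum_product, Finset.sum_product] at key
    have e2 : ∀ x ∈ col i, ∑ b : Bool, (v (x, b) - w (x, b)) =
        2 * (g x : ℚ) - (hi k g x : ℚ) - (lo g x : ℚ) := by
      intro x _
      simp only [Fintype.sum_bool, v, w, el]
      simp
      ring
    rw [Finset.sum_congr rfl e2] at key
    rw [← key]
    apply Finset.sum_congr rfl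
    intro x hx
    have hxc := (mem_col.1 hx).2
    have num : ∀ z : ℚ, ∏ q ∈ col i ×ˢ (Finset.univ : Finset Bool), (z - w q) = Num k g i z := by
      intro z
      rw [Finset.prod_product, Num_eq hg.le]
      apply Finset.prod_congr rfl
      intro y _
      simp [w]
    rw [Fintype.sum_bool, num, num]
    rw [prod_erase_ite _ _ (by simp [hx]), prod_erase_ite _ _ (by simp [hx]), Finset.prod_product,
      Finset.prod_product, ← Finset.mul_prod_erase (col i) _ hx,
      ← Finset.mul_prod_erase (col i) _ hx]
    have t1 : ∏ y ∈ (col i).erase x, ∏ b : Bool, (if (y, b) = (x, true) then 1 else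
        v (x, true) - v (y, b)) =
        ∏ y ∈ (col i).erase x, ((el g x - el g y) * (el g x - el g y + 1)) := by
      apply Finset.prod_congr rfl
      intro y hy
      have := Finset.ne_of_mem_erase hy
      simp [v, this]
      left
      ring
    have t2 : ∏ y ∈ (col i).erase x, ∏ b : Bool, (if (y, b) = (x, false) then 1 else
        v (x, false) - v (y, b)) =
        ∏ y ∈ (col i).erase x, ((el g x - el g y - 1) * (el g x - el g y)) := by
      apply Finset.prod_congr rfl
      intro y hy
      have := Finset.ne_of_mem_erase hy
      simp [v, this]
      left
      ring
    rw [t1, t2, Dc, Pc_eq, hxc, Finset.prod_inv_distrib, Finset.prod_inv_distrib]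
    simp [v]
    ring
  · rintro ⟨x, b⟩ hx hvw ⟨y, c⟩ hy hne
    simp only [Finset.mem_product, Finset.mem_univ, and_true] at hx hy
    obtain ⟨hx, hxc⟩ := mem_col.1 hx
    obtain ⟨hy, hyc⟩ := mem_col.1 hy
    have x1 : (lo g x : ℚ) ≤ g x := by exact_mod_cast hg.lo_le hx
    have x2 : (g x : ℚ) ≤ hi k g x := by exact_mod_cast hg.le_hi hx
    have y1 : (lo g y : ℚ) ≤ g y := by exact_mod_cast hg.lo_le hy
    have y2 : (g y : ℚ) ≤ hi k g y := by exact_mod_cast hg.le_hi hy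
    intro hv
    by_cases hxy : x = y
    · subst hxy
      cases b <;> cases c <;> simp [v] at hv hne <;> linarith
    · rcases color_tri hg hx hy (hxc.trans hyc.symm) hxy with ⟨a1, a2⟩ | ⟨a1, a2⟩
      · have a1' : (x.2 : ℚ) + 2 ≤ y.2 := by exact_mod_cast a1
        have a2' : (hi k g y : ℚ) ≤ lo g x := by exact_mod_cast a2
        cases b <;> cases c <;> simp [v, w, el] at hv hvw
        · linarith
        · apply hvw; apply (Nat.cast_injective (R := ℚ)); linarith
        · linarith
        · linarith
      · have a1' : (y.2 : ℚ) + 2 ≤ x.2 := by exact_mod_cast a1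
        have a2' : (hi k g x : ℚ) ≤ lo g y := by exact_mod_cast a2
        cases b <;> cases c <;> simp [v, w, el] at hv hvw
        · linarith
        · linarith
        · apply hvw; apply (Nat.cast_injective (R := ℚ)); linarith
        · linarith

end E7aux

/-! ### Elements of `L7(k)` -/

namespace E7aux

variable {k : ℕ}

/-- The labelling of an element, extended by zero. -/
def Cf (t : L7 k) (p : N7 × ℕ) : ℕ := if h : p ∈ pos7 then t.1 ⟨p, h⟩ else 0

theorem Cf_of_mem (t : L7 k) (x : {x : N7 × ℕ // x ∈ pos7}) : Cf t x.1 = t.1 x := by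
  rw [Cf, dif_pos x.2]

theorem Cf_of_notMem (t : L7 k) {p : N7 × ℕ} (hp : p ∉ pos7) : Cf t p = 0 := dif_neg hp

theorem Cf_valid (t : L7 k) : Valid k (Cf t) where
  le p := by
    by_cases hp : p ∈ pos7
    · rw [Cf, dif_pos hp]; exact t.2.1 _
    · rw [Cf_of_notMem t hp]; exact Nat.zero_le _
  anti p hp q hq := by
    have hq' := mem_pos_of_up hq
    rw [Cf, Cf, dif_pos hp, dif_pos hq']
    refine t.2.2.1 ⟨q, hq'⟩ ⟨p, hp⟩ (Relation.ReflTransGen.single ⟨hp, hq', ?_⟩)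
    exact (Finset.mem_filter.1 hq).2

theorem Cf_ext {s t : L7 k} (h : ∀ p ∈ pos7, Cf s p = Cf t p) : s = t := by
  apply Subtype.ext
  funext x
  rw [← Cf_of_mem, ← Cf_of_mem]
  exact h _ x.2

theorem exists_elt (g : N7 × ℕ → ℕ) (h1 : ∀ p ∈ pos7, g p ≤ k)
    (h2 : ∀ p ∈ pos7, ∀ q ∈ up p, g q ≤ g p) : ∃ t : L7 k, ∀ p ∈ pos7, Cf t p = g p := by
  refine ⟨⟨fun x => g x.1, fun x => h1 _ x.2, ?_, trivial⟩, ?_⟩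
  · intro x y hxy
    have : ∀ z : N7 × ℕ, CL.ple adj7 pos7 y.1 z → g z ≤ g y.1 := by
      intro z hz
      induction hz with
      | refl => exact le_rfl
      | tail _ hs ih =>
        exact (h2 _ hs.1 _ (Finset.mem_filter.2 ⟨hs.2.1, hs.2.2⟩)).trans ih
    exact this _ hxy
  · intro p hp
    exact dif_pos hp

/-- Covering by adding one at position `p`. -/
def Cov (p : N7 × ℕ) (r s : L7 k) : Prop := p ∈ pos7 ∧ Add p (Cf r) (Cf s)

theorem edge_iff {i : N7} {r s : L7 k} : CL.edge i r s ↔ ∃ p ∈ col i, Cov p r s := by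
  constructor
  · rintro ⟨x, hx, h1, h2⟩
    refine ⟨x.1, mem_col.2 ⟨x.2, hx⟩, x.2, ?_⟩
    intro q
    by_cases hq : q ∈ pos7
    · by_cases hqx : q = x.1
      · subst hqx
        rw [if_pos rfl, Cf_of_mem, Cf_of_mem, h1]
      · rw [if_neg hqx]
        have := h2 ⟨q, hq⟩ (fun h => hqx (congrArg Subtype.val h))
        rw [Cf, Cf, dif_pos hq, dif_pos hq, this, add_zero]
    · rw [Cf_of_notMem _ hq, Cf_of_notMem _ hq, if_neg]
      rintro rfl
      exact hq x.2
  · rintro ⟨p, hp, hp', h⟩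
    refine ⟨⟨p, hp'⟩, (mem_col.1 hp).2, ?_, ?_⟩
    · have := h p
      rwa [if_pos rfl, Cf, Cf, dif_pos hp', dif_pos hp'] at this
    · intro y hy
      have := h y.1
      rwa [if_neg (fun h => hy (Subtype.ext h)), Cf_of_mem, Cf_of_mem] at this

theorem Cov.unique {p q : N7 × ℕ} {r s : L7 k} (h : Cov p r s) (h' : Cov q r s) : p = q := by
  by_contra hne
  have h1 := h.2 p
  have h2 := h'.2 p
  rw [if_pos rfl] at h1
  rw [if_neg hne] at h2
  omega

theorem Cov.right_unique {p : N7 × ℕ} {r s s' : L7 k} (h : Cov p r s) (h' : Cov p r s') :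
    s = s' := Cf_ext fun q _ => by rw [h.2 q, h'.2 q]

theorem Cov.left_unique {p : N7 × ℕ} {r r' s : L7 k} (h : Cov p r s) (h' : Cov p r' s) :
    r = r' := Cf_ext fun q _ => by
  have h1 := h.2 q
  have h2 := h'.2 q
  omega

theorem Cov.color {p : N7 × ℕ} {i : N7} {r s : L7 k} (h : Cov p r s) (he : CL.edge i r s) :
    p ∈ col i := by
  obtain ⟨q, hq, hc⟩ := edge_iff.1 he
  rwa [h.unique hc]

theorem up_ne {p q : N7 × ℕ} (h : q ∈ up p) : q.1 ≠ p.1 := fun e =>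
  adj_irrefl p.1 (by have := (Finset.mem_filter.1 h).2.1; rwa [e] at this)

theorem dn_ne {p q : N7 × ℕ} (h : q ∈ dn p) : q.1 ≠ p.1 := fun e =>
  adj_irrefl p.1 (by have := (Finset.mem_filter.1 h).2.1; rwa [e] at this)

theorem exists_raise (t : L7 k) {p : N7 × ℕ} (hp : p ∈ pos7) (h : Cf t p < hi k (Cf t) p) :
    ∃ s, Cov p t s := by
  rw [lt_hi_iff] at h
  have hv := Cf_valid t
  have key := exists_elt (k := k) (fun q => Cf t q + if q = p then 1 else 0) ?_ ?_
  · obtain ⟨s, hs⟩ := key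
    refine ⟨s, hp, fun q => ?_⟩
    by_cases hq : q ∈ pos7
    · exact hs q hq
    · rw [Cf_of_notMem _ hq, Cf_of_notMem _ hq, if_neg]
      rintro rfl
      exact hq hp
  · intro q _
    have := hv.le q
    by_cases hqp : q = p
    · subst hqp; simp only [if_true]; omega
    · simp only [if_neg hqp]; omega
  · intro q hq r hr
    have h1 := hv.anti q hq r hr
    by_cases hrp : r = p
    · subst hrp
      have h2 := h.2 q (mem_dn_of_up hq hr)
      simp only [if_true]
      omega
    · simp only [if_neg hrp]
      omega

theorem exists_lower (t : L7 k) {p : N7 × ℕ} (hp : p ∈ pos7) (h : lo (Cf t) p < Cf t p) :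
    ∃ s, Cov p s t := by
  rw [lo_lt_iff] at h
  have hv := Cf_valid t
  have key := exists_elt (k := k) (fun q => Cf t q - if q = p then 1 else 0) ?_ ?_
  · obtain ⟨s, hs⟩ := key
    refine ⟨s, hp, fun q => ?_⟩
    by_cases hq : q ∈ pos7
    · rw [hs q hq]
      by_cases hqp : q = p
      · subst hqp; simp only [if_true]; omega
      · simp only [if_neg hqp]; omega
    · rw [Cf_of_notMem _ hq, Cf_of_notMem _ hq, if_neg]
      rintro rfl
      exact hq hp
  · intro q _
    have := hv.le q
    omega
  · intro q hq r hr
    have h1 := hv.anti q hq r hr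
    by_cases hqp : q = p
    · subst hqp
      have h2 := h.2 r hr
      simp only [if_true]
      omega
    · simp only [if_neg hqp]
      omega

theorem Cov.lt_hi {p : N7 × ℕ} {r s : L7 k} (h : Cov p r s) : Cf r p < hi k (Cf r) p := by
  have h1 := (Cf_valid s).le_hi h.1
  have h2 := h.2 p
  rw [if_pos rfl] at h2
  rw [lt_hi_iff]
  rw [le_hi_iff] at h1
  refine ⟨by omega, fun q hq => ?_⟩
  have h3 := h1.2 q hq
  have h4 := h.2 q
  rw [if_neg (fun e => dn_ne hq (congrArg Prod.fst e))] at h4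
  omega

theorem Cov.lo_lt {p : N7 × ℕ} {r s : L7 k} (h : Cov p r s) : lo (Cf s) p < Cf s p := by
  have h1 := (Cf_valid r).lo_le h.1
  have h2 := h.2 p
  rw [if_pos rfl] at h2
  rw [lo_lt_iff]
  rw [lo_le_iff] at h1
  refine ⟨by omega, fun q hq => ?_⟩
  have h3 := h1 q hq
  have h4 := h.2 q
  rw [if_neg (fun e => up_ne hq (congrArg Prod.fst e))] at h4
  omega

theorem hi_congr {g g' : N7 × ℕ → ℕ} {i : N7} (h : ∀ p, p.1 ≠ i → g p = g' p) {x : N7 × ℕ}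
    (hx : x.1 = i) : hi k g x = hi k g' x :=
  Finset.fold_congr fun q hq => h q (fun e => dn_ne hq (e.trans hx.symm))

theorem lo_congr {g g' : N7 × ℕ → ℕ} {i : N7} (h : ∀ p, p.1 ≠ i → g p = g' p) {x : N7 × ℕ}
    (hx : x.1 = i) : lo g x = lo g' x :=
  Finset.fold_congr fun q hq => h q (fun e => up_ne hq (e.trans hx.symm))

theorem rk_eq (t : L7 k) : CL.rk t = ∑ p ∈ pos7, Cf t p := by
  rw [CL.rk, ← Finset.sum_attach pos7]
  exact Finset.sum_congr rfl fun x _ => (Cf_of_mem t x).symm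

theorem rk_split (t : L7 k) (i : N7) :
    CL.rk t = ∑ p ∈ col i, Cf t p + ∑ p ∈ pos7.filter (fun p => ¬ p.1 = i), Cf t p := by
  rw [rk_eq]
  exact (Finset.sum_filter_add_sum_filter_not _ _ _).symm

theorem Cov.rk {p : N7 × ℕ} {r s : L7 k} (h : Cov p r s) : CL.rk s = CL.rk r + 1 := by
  rw [rk_eq, rk_eq, Finset.sum_congr rfl (fun q _ => h.2 q), Finset.sum_add_distrib]
  simp [h.1]

theorem comp_off {i : N7} {s t : L7 k} (h : s ∈ CL.comp i t) :
    ∀ p : N7 × ℕ, p.1 ≠ i → Cf s p = Cf t p := by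
  intro p hp
  induction h with
  | refl => rfl
  | tail _ hs ih =>
    rw [← ih]
    rcases hs with hs | hs
    · obtain ⟨q, hq, hc⟩ := edge_iff.1 hs
      rw [hc.2 p, if_neg (fun e => hp (by rw [e]; exact (mem_col.1 hq).2)), add_zero]
    · obtain ⟨q, hq, hc⟩ := edge_iff.1 hs
      rw [hc.2 p, if_neg (fun e => hp (by rw [e]; exact (mem_col.1 hq).2)), add_zero]

theorem sInf_comp (i : N7) (t : L7 k) :
    sInf (CL.rk '' CL.comp i t) =
      ∑ p ∈ col i, lo (Cf t) p + ∑ p ∈ pos7.filter (fun p => ¬ p.1 = i), Cf t p := by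
  obtain ⟨s, hs, hsr⟩ := Nat.sInf_mem (s := CL.rk '' CL.comp i t)
    ⟨CL.rk t, Set.mem_image_of_mem _ Relation.ReflTransGen.refl⟩
  have hoff := comp_off hs
  rw [← hsr, rk_split s i]
  refine congrArg₂ (fun a b : ℕ => a + b) (Finset.sum_congr rfl ?_) (Finset.sum_congr rfl ?_)
  · intro p hp
    obtain ⟨hp1, hp2⟩ := mem_col.1 hp
    rw [← lo_congr hoff hp2]
    by_contra hne
    have hlt : lo (Cf s) p < Cf s p := lt_of_le_of_ne ((Cf_valid s).lo_le hp1) (Ne.symm hne)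
    obtain ⟨r, hr⟩ := exists_lower s hp1 hlt
    have hmem : CL.rk r ∈ CL.rk '' CL.comp i t := Set.mem_image_of_mem _
      (Relation.ReflTransGen.tail hs (Or.inr (edge_iff.2 ⟨p, hp, hr⟩)))
    have h1 := Nat.sInf_le hmem
    have h2 := hr.rk
    omega
  · intro p hp
    exact hoff p (Finset.mem_filter.1 hp).2

theorem sSup_comp (i : N7) (t : L7 k) :
    sSup (CL.rk '' CL.comp i t) =
      ∑ p ∈ col i, hi k (Cf t) p + ∑ p ∈ pos7.filter (fun p => ¬ p.1 = i), Cf t p := by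
  have hbdd : BddAbove (CL.rk '' CL.comp i t) := (Set.toFinite _).bddAbove
  obtain ⟨s, hs, hsr⟩ := Nat.sSup_mem (s := CL.rk '' CL.comp i t)
    ⟨CL.rk t, Set.mem_image_of_mem _ Relation.ReflTransGen.refl⟩ hbdd
  have hoff := comp_off hs
  rw [← hsr, rk_split s i]
  refine congrArg₂ (fun a b : ℕ => a + b) (Finset.sum_congr rfl ?_) (Finset.sum_congr rfl ?_)
  · intro p hp
    obtain ⟨hp1, hp2⟩ := mem_col.1 hp
    rw [← hi_congr hoff hp2]
    by_contra hne
    have hlt : Cf s p < hi k (Cf s) p := lt_of_le_of_ne ((Cf_valid s).le_hi hp1) hne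
    obtain ⟨r, hr⟩ := exists_raise s hp1 hlt
    have hmem : CL.rk r ∈ CL.rk '' CL.comp i t := Set.mem_image_of_mem _
      (Relation.ReflTransGen.tail hs (Or.inl (edge_iff.2 ⟨p, hp, hr⟩)))
    have h1 := le_csSup hbdd hmem
    have h2 := hr.rk
    omega
  · intro p hp
    exact hoff p (Finset.mem_filter.1 hp).2

theorem mwt_eq (i : N7) (t : L7 k) :
    CL.mwt i t = ∑ p ∈ col i, (2 * (Cf t p : ℤ) - (hi k (Cf t) p : ℤ) - (lo (Cf t) p : ℤ)) := by
  rw [CL.mwt, sInf_comp, sSup_comp, rk_split t i, Finset.sum_sub_distrib, Finset.sum_sub_distrib,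
    ← Finset.mul_sum]
  push_cast
  ring

theorem mwt_eq' (i : N7) (t : L7 k) :
    CL.mwt i t = 2 * ∑ p ∈ col i, (Cf t p : ℤ) - ∑ p ∈ nb i, (Cf t p : ℤ) -
      if i = n1 then (k : ℤ) else 0 := by
  have h := hi_lo_sum (Cf_valid t).le i
  rw [Finset.sum_add_distrib] at h
  rw [mwt_eq, Finset.sum_sub_distrib, Finset.sum_sub_distrib, ← Finset.mul_sum]
  linarith

theorem Cov.mwt {p : N7 × ℕ} {r s : L7 k} (h : Cov p r s) (i : N7) :
    CL.mwt i s = CL.mwt i r + A7 p.1 i := by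
  have hs : ∀ T : Finset (N7 × ℕ), ∑ q ∈ T, (Cf s q : ℤ) =
      ∑ q ∈ T, (Cf r q : ℤ) + if p ∈ T then 1 else 0 := by
    intro T
    rw [Finset.sum_congr rfl (fun q _ => congrArg (Nat.cast (R := ℤ)) (h.2 q))]
    push_cast
    rw [Finset.sum_add_distrib]
    simp
  rw [mwt_eq', mwt_eq', hs, hs, A7]
  by_cases hc : p.1 = i
  · have h1 : p ∈ col i := mem_col.2 ⟨h.1, hc⟩
    have h2 : p ∉ nb i := fun hh => adj_irrefl i (by have := (mem_nb.1 hh).2; rwa [hc] at this)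
    rw [if_pos h1, if_neg h2, if_pos hc]
    ring
  · have h1 : p ∉ col i := fun hh => hc (mem_col.1 hh).2
    rw [if_neg h1, if_neg hc]
    by_cases ha : adj7 p.1 i
    · have h2 : p ∈ nb i := mem_nb.2 ⟨h.1, adj_symm _ _ ha⟩
      rw [if_pos h2, if_pos ha]
      ring
    · have h2 : p ∉ nb i := fun hh => ha (adj_symm _ _ (mem_nb.1 hh).2)
      rw [if_neg h2, if_neg ha]
      ring

theorem card_fact : ∀ i : N7, (2 * (col i).card : ℤ) = (nb i).card + if i = n1 then 2 else 0 := by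
  decide +kernel

theorem Cf_top {p : N7 × ℕ} (hp : p ∈ pos7) : Cf (top7 k) p = k := by
  rw [Cf, dif_pos hp, top7]

theorem mwt_top (i : N7) : CL.mwt i (top7 k) = if i = n1 then (k : ℤ) else 0 := by
  rw [mwt_eq', Finset.sum_congr rfl (fun p hp => congrArg (Nat.cast (R := ℤ))
    (Cf_top (k := k) (mem_col.1 hp).1)), Finset.sum_congr rfl (fun p hp =>
    congrArg (Nat.cast (R := ℤ)) (Cf_top (k := k) (mem_nb.1 hp).1))]
  have := card_fact i
  simp only [Finset.sum_const, nsmul_eq_mul]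
  split_ifs at this ⊢
  · linear_combination (k : ℤ) * this
  · linear_combination (k : ℤ) * this

end E7aux

/-! ### The commutation relations -/

namespace E7aux

variable {k : ℕ}

open Classical in
/-- The edge coefficients. -/
def Pfam (r s : L7 k) : ℚ := if h : ∃ p, Cov p r s then Pc k (Cf r) h.choose else 0

theorem Pfam_eq {p : N7 × ℕ} {r s : L7 k} (h : Cov p r s) : Pfam r s = Pc k (Cf r) p := by
  have he : ∃ p, Cov p r s := ⟨p, h⟩
  rw [Pfam, dif_pos he, he.choose_spec.unique h]

theorem Pfam_pos {r s : L7 k} (h : ∃ i, CL.edge i r s) : 0 < Pfam r s := by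
  obtain ⟨i, hi⟩ := h
  obtain ⟨p, _, hc⟩ := edge_iff.1 hi
  rw [Pfam_eq hc]
  exact Pc_pos (Cf_valid r) hc.1 hc.lt_hi

theorem Cov.eq_min {p q : N7 × ℕ} {u s t : L7 k} (h : Cov p u s) (h' : Cov q u t) (hst : s ≠ t)
    (r : N7 × ℕ) : Cf u r = min (Cf s r) (Cf t r) := by
  have hpq : p ≠ q := by
    rintro rfl
    exact hst (h.right_unique h')
  rw [h.2 r, h'.2 r]
  by_cases h1 : r = p
  · rw [if_pos h1, if_neg (fun h2 => hpq (h1.symm.trans h2))]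
    omega
  · rw [if_neg h1]
    omega

theorem Cov.eq_max {p q : N7 × ℕ} {w s t : L7 k} (h : Cov p s w) (h' : Cov q t w) (hst : s ≠ t)
    (r : N7 × ℕ) : Cf w r = max (Cf s r) (Cf t r) := by
  have hpq : p ≠ q := by
    rintro rfl
    exact hst (h.left_unique h')
  have h1 := h.2 r
  have h2 := h'.2 r
  by_cases h3 : r = p
  · rw [if_pos h3] at h1
    rw [if_neg (fun h4 => hpq (h3.symm.trans h4))] at h2
    omega
  · rw [if_neg h3] at h1
    omega

theorem Cov.dn_unique {p q p' q' : N7 × ℕ} {u u' s t : L7 k} (h : Cov p u s) (h' : Cov q u t)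
    (g : Cov p' u' s) (g' : Cov q' u' t) (hst : s ≠ t) : u = u' :=
  Cf_ext fun r _ => by rw [h.eq_min h' hst, g.eq_min g' hst]

theorem Cov.up_unique {p q p' q' : N7 × ℕ} {u u' s t : L7 k} (h : Cov p s u) (h' : Cov q t u)
    (g : Cov p' s u') (g' : Cov q' t u') (hst : s ≠ t) : u = u' :=
  Cf_ext fun r _ => by rw [h.eq_max h' hst, g.eq_max g' hst]

theorem exists_max (s t : L7 k) : ∃ w : L7 k, ∀ r, Cf w r = max (Cf s r) (Cf t r) := by
  obtain ⟨w, hw⟩ := exists_elt (k := k) (fun r => max (Cf s r) (Cf t r))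
    (fun p _ => max_le ((Cf_valid s).le p) ((Cf_valid t).le p))
    (fun p hp q hq => max_le_max ((Cf_valid s).anti p hp q hq) ((Cf_valid t).anti p hp q hq))
  refine ⟨w, fun r => ?_⟩
  by_cases hr : r ∈ pos7
  · exact hw r hr
  · rw [Cf_of_notMem _ hr, Cf_of_notMem _ hr, Cf_of_notMem _ hr]
    rfl

theorem exists_min (s t : L7 k) : ∃ w : L7 k, ∀ r, Cf w r = min (Cf s r) (Cf t r) := by
  obtain ⟨w, hw⟩ := exists_elt (k := k) (fun r => min (Cf s r) (Cf t r))
    (fun p _ => (min_le_left _ _).trans ((Cf_valid s).le p))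
    (fun p hp q hq => min_le_min ((Cf_valid s).anti p hp q hq) ((Cf_valid t).anti p hp q hq))
  refine ⟨w, fun r => ?_⟩
  by_cases hr : r ∈ pos7
  · exact hw r hr
  · rw [Cf_of_notMem _ hr, Cf_of_notMem _ hr, Cf_of_notMem _ hr]
    rfl

theorem Cov.diamond_up {p q : N7 × ℕ} {u s t : L7 k} (h : Cov p u s) (h' : Cov q u t)
    (hst : s ≠ t) : ∃ w, Cov q s w ∧ Cov p t w := by
  obtain ⟨w, hw⟩ := exists_max s t
  have hpq : p ≠ q := by
    rintro rfl
    exact hst (h.right_unique h')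
  refine ⟨w, ⟨h'.1, fun r => ?_⟩, ⟨h.1, fun r => ?_⟩⟩
  all_goals
    have h1 := h.2 r
    have h2 := h'.2 r
    rw [hw r]
    by_cases h3 : r = p
    · have h4 : r ≠ q := fun h4 => hpq (h3.symm.trans h4)
      simp only [if_pos h3, if_neg h4] at *
      omega
    · simp only [if_neg h3] at *
      omega

theorem Cov.diamond_dn {p q : N7 × ℕ} {w s t : L7 k} (h : Cov q s w) (h' : Cov p t w)
    (hst : s ≠ t) : ∃ u, Cov p u s ∧ Cov q u t := by
  obtain ⟨u, hu⟩ := exists_min s t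
  have hpq : q ≠ p := by
    rintro rfl
    exact hst (h.left_unique h')
  refine ⟨u, ⟨h'.1, fun r => ?_⟩, ⟨h.1, fun r => ?_⟩⟩
  all_goals
    have h1 := h.2 r
    have h2 := h'.2 r
    rw [hu r]
    by_cases h3 : r = q
    · have h4 : r ≠ p := fun h4 => hpq (h3.symm.trans h4)
      simp only [if_pos h3, if_neg h4] at *
      omega
    · simp only [if_neg h3] at *
      omega

/-- The matrix of the raising operator. -/
def MX (P : L7 k → L7 k → ℚ) (i : N7) : Matrix (L7 k) (L7 k) ℂ :=
  fun s r => if CL.edge i r s then (↑(Real.sqrt (P r s)) : ℂ) else 0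

/-- The matrix of the lowering operator. -/
def MY (P : L7 k → L7 k → ℚ) (i : N7) : Matrix (L7 k) (L7 k) ℂ :=
  fun r s => if CL.edge i r s then (↑(Real.sqrt (P r s)) : ℂ) else 0

/-- The matrix of the diagonal operator. -/
def MH (k : ℕ) (i : N7) : Matrix (L7 k) (L7 k) ℂ :=
  Matrix.diagonal fun t => ((CL.mwt i t : ℤ) : ℂ)

theorem MX_edge {P : L7 k → L7 k → ℚ} {i : N7} {r s : L7 k} (h : CL.edge i r s) :
    MX P i s r = (↑(Real.sqrt (P r s)) : ℂ) := if_pos h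

theorem MY_edge {P : L7 k → L7 k → ℚ} {i : N7} {r s : L7 k} (h : CL.edge i r s) :
    MY P i r s = (↑(Real.sqrt (P r s)) : ℂ) := if_pos h

theorem MX_ne {P : L7 k → L7 k → ℚ} {i : N7} {r s : L7 k} (h : MX P i s r ≠ 0) :
    CL.edge i r s := by
  by_contra hn
  exact h (if_neg hn)

theorem MY_ne {P : L7 k → L7 k → ℚ} {i : N7} {r s : L7 k} (h : MY P i r s ≠ 0) :
    CL.edge i r s := by
  by_contra hn
  exact h (if_neg hn)

theorem sqrt_mul_sqrt {a b c d : ℚ} (ha : 0 < a) (hc : 0 < c) (h : a * b = c * d) :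
    ((Real.sqrt a : ℝ) : ℂ) * ((Real.sqrt b : ℝ) : ℂ) =
      ((Real.sqrt c : ℝ) : ℂ) * ((Real.sqrt d : ℝ) : ℂ) := by
  have ha' : (0 : ℝ) ≤ (a : ℝ) := by exact_mod_cast ha.le
  have hc' : (0 : ℝ) ≤ (c : ℝ) := by exact_mod_cast hc.le
  rw [← Complex.ofReal_mul, ← Complex.ofReal_mul, ← Real.sqrt_mul ha', ← Real.sqrt_mul hc']
  congr 2
  exact_mod_cast h

theorem sqrt_mul_self' {a : ℚ} (ha : 0 < a) :
    ((Real.sqrt a : ℝ) : ℂ) * ((Real.sqrt a : ℝ) : ℂ) = ((a : ℚ) : ℂ) := by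
  have ha' : (0 : ℝ) ≤ (a : ℝ) := by exact_mod_cast ha.le
  rw [← Complex.ofReal_mul, Real.mul_self_sqrt ha']
  norm_cast

theorem comm_offdiag (i j : N7) {s t : L7 k} (hst : s ≠ t) :
    ∑ u, MX Pfam i s u * MY Pfam j u t = ∑ w, MY Pfam j s w * MX Pfam i w t := by
  by_cases hex : ∃ u p q, p ∈ col i ∧ q ∈ col j ∧ Cov p u s ∧ Cov q u t
  · obtain ⟨u, p, q, hp, hq, h, h'⟩ := hex
    obtain ⟨w, hw, hw'⟩ := h.diamond_up h' hst
    have hpq : p ≠ q := by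
      rintro rfl
      exact hst (h.right_unique h')
    rw [Finset.sum_eq_single u, Finset.sum_eq_single w]
    · have e1 : CL.edge i u s := edge_iff.2 ⟨p, hp, h⟩
      have e2 : CL.edge j u t := edge_iff.2 ⟨q, hq, h'⟩
      have e3 : CL.edge j s w := edge_iff.2 ⟨q, hq, hw⟩
      have e4 : CL.edge i t w := edge_iff.2 ⟨p, hp, hw'⟩
      rw [MX_edge e1, MX_edge e4, MY_edge e2, MY_edge e3]
      apply sqrt_mul_sqrt (Pfam_pos ⟨_, e1⟩) (Pfam_pos ⟨_, e3⟩)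
      rw [Pfam_eq h, Pfam_eq h', Pfam_eq hw, Pfam_eq hw']
      exact (Pc_diamond h.1 h'.1 hpq h.2 h'.2).symm
    · intro w' _ hne
      by_contra hn
      obtain ⟨a, _, ha⟩ := edge_iff.1 (MY_ne (left_ne_zero_of_mul hn))
      obtain ⟨b, _, hb⟩ := edge_iff.1 (MX_ne (right_ne_zero_of_mul hn))
      exact hne (ha.up_unique hb hw hw' hst)
    · intro hn
      exact absurd (Finset.mem_univ _) hn
    · intro w' _ hne
      by_contra hn
      obtain ⟨a, _, ha⟩ := edge_iff.1 (MX_ne (left_ne_zero_of_mul hn))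
      obtain ⟨b, _, hb⟩ := edge_iff.1 (MY_ne (right_ne_zero_of_mul hn))
      exact hne (ha.dn_unique hb h h' hst)
    · intro hn
      exact absurd (Finset.mem_univ _) hn
  · rw [Finset.sum_eq_zero, Finset.sum_eq_zero]
    · intro w _
      by_contra hn
      obtain ⟨a, ha', ha⟩ := edge_iff.1 (MY_ne (left_ne_zero_of_mul hn))
      obtain ⟨b, hb', hb⟩ := edge_iff.1 (MX_ne (right_ne_zero_of_mul hn))
      obtain ⟨u, hu, hu'⟩ := ha.diamond_dn hb hst
      exact hex ⟨u, b, a, hb', ha', hu, hu'⟩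
    · intro u _
      by_contra hn
      obtain ⟨a, ha', ha⟩ := edge_iff.1 (MX_ne (left_ne_zero_of_mul hn))
      obtain ⟨b, hb', hb⟩ := edge_iff.1 (MY_ne (right_ne_zero_of_mul hn))
      exact hex ⟨u, a, b, ha', hb', ha, hb⟩

theorem edge_color {i j : N7} {r s : L7 k} (h : CL.edge i r s) (h' : CL.edge j r s) : i = j := by
  obtain ⟨p, hp, hc⟩ := edge_iff.1 h
  have := hc.color h'
  rw [← (mem_col.1 hp).2, (mem_col.1 this).2]

open Classical in
theorem sum_dn (i : N7) (s : L7 k) :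
    ∑ u, MX Pfam i s u * MY Pfam i u s = ∑ x ∈ col i, ((Dc k (Cf s) x : ℚ) : ℂ) := by
  have h1 : ∀ u, MX Pfam i s u * MY Pfam i u s =
      ∑ x ∈ col i, if Cov x u s then ((Dc k (Cf s) x : ℚ) : ℂ) else 0 := by
    intro u
    by_cases he : CL.edge i u s
    · obtain ⟨p, hp, hc⟩ := edge_iff.1 he
      rw [MX_edge he, MY_edge he, sqrt_mul_self' (Pfam_pos ⟨i, he⟩), Pfam_eq hc,
        Finset.sum_eq_single p, if_pos hc, Dc_eq hc.2]
      · intro q _ hne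
        exact if_neg (fun h => hne (h.unique hc))
      · exact fun hn => absurd hp hn
    · have h0 : MX Pfam i s u = 0 := if_neg he
      rw [h0, zero_mul, Finset.sum_eq_zero]
      intro x hx
      exact if_neg (fun h => he (edge_iff.2 ⟨x, hx, h⟩))
  rw [Finset.sum_congr rfl (fun u _ => h1 u), Finset.sum_comm]
  refine Finset.sum_congr rfl fun x hx => ?_
  by_cases hlt : lo (Cf s) x < Cf s x
  · obtain ⟨u, hu⟩ := exists_lower s (mem_col.1 hx).1 hlt
    rw [Finset.sum_eq_single u, if_pos hu]
    · intro u' _ hne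
      exact if_neg (fun h => hne (h.left_unique hu))
    · exact fun hn => absurd (Finset.mem_univ _) hn
  · have hz : Dc k (Cf s) x = 0 := Dc_zero (Cf_valid s) (mem_col.1 hx).1
      (le_antisymm (not_lt.1 hlt) ((Cf_valid s).lo_le (mem_col.1 hx).1))
    simp [hz]

open Classical in
theorem sum_up (i : N7) (s : L7 k) :
    ∑ u, MY Pfam i s u * MX Pfam i u s = ∑ x ∈ col i, ((Pc k (Cf s) x : ℚ) : ℂ) := by
  have h1 : ∀ u, MY Pfam i s u * MX Pfam i u s =
      ∑ x ∈ col i, if Cov x s u then ((Pc k (Cf s) x : ℚ) : ℂ) else 0 := by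
    intro u
    by_cases he : CL.edge i s u
    · obtain ⟨p, hp, hc⟩ := edge_iff.1 he
      rw [MX_edge he, MY_edge he, sqrt_mul_self' (Pfam_pos ⟨i, he⟩), Pfam_eq hc,
        Finset.sum_eq_single p, if_pos hc]
      · intro q _ hne
        exact if_neg (fun h => hne (h.unique hc))
      · exact fun hn => absurd hp hn
    · have h0 : MY Pfam i s u = 0 := if_neg he
      rw [h0, zero_mul, Finset.sum_eq_zero]
      intro x hx
      exact if_neg (fun h => he (edge_iff.2 ⟨x, hx, h⟩))
  rw [Finset.sum_congr rfl (fun u _ => h1 u), Finset.sum_comm]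
  refine Finset.sum_congr rfl fun x hx => ?_
  by_cases hlt : Cf s x < hi k (Cf s) x
  · obtain ⟨u, hu⟩ := exists_raise s (mem_col.1 hx).1 hlt
    rw [Finset.sum_eq_single u, if_pos hu]
    · intro u' _ hne
      exact if_neg (fun h => hne (h.right_unique hu))
    · exact fun hn => absurd (Finset.mem_univ _) hn
  · have hz : Pc k (Cf s) x = 0 := Pc_zero (Cf_valid s) (mem_col.1 hx).1
      (le_antisymm ((Cf_valid s).le_hi (mem_col.1 hx).1) (not_lt.1 hlt))
    simp [hz]

theorem comm_XY (i : N7) :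
    MX (Pfam (k := k)) i * MY Pfam i - MY Pfam i * MX Pfam i = MH k i := by
  ext s t
  rw [Matrix.sub_apply, Matrix.mul_apply, Matrix.mul_apply]
  by_cases hst : s = t
  · subst hst
    have h := residue_color (Cf_valid s) i
    have h' := mwt_eq i s
    rw [sum_dn, sum_up, MH, Matrix.diagonal_apply_eq, ← Finset.sum_sub_distrib, h']
    have h2 := congrArg (Rat.cast (K := ℂ)) h
    push_cast at h2 ⊢
    exact h2
  · rw [comm_offdiag i i hst, sub_self, MH, Matrix.diagonal_apply_ne _ hst]

theorem comm_XY' {i j : N7} (hij : i ≠ j) :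
    MX (Pfam (k := k)) i * MY Pfam j - MY Pfam j * MX Pfam i = 0 := by
  ext s t
  rw [Matrix.sub_apply, Matrix.mul_apply, Matrix.mul_apply, Matrix.zero_apply]
  by_cases hst : s = t
  · subst hst
    rw [Finset.sum_eq_zero, Finset.sum_eq_zero, sub_self]
    · intro w _
      by_contra hn
      exact hij (edge_color (MX_ne (right_ne_zero_of_mul hn)) (MY_ne (left_ne_zero_of_mul hn)))
    · intro w _
      by_contra hn
      exact hij (edge_color (MX_ne (left_ne_zero_of_mul hn)) (MY_ne (right_ne_zero_of_mul hn)))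
  · rw [comm_offdiag i j hst, sub_self]

theorem edge_mwt {j : N7} {r s : L7 k} (h : CL.edge j r s) (i : N7) :
    CL.mwt i s = CL.mwt i r + A7 j i := by
  obtain ⟨p, hp, hc⟩ := edge_iff.1 h
  rw [hc.mwt i, (mem_col.1 hp).2]

theorem comm_HX (i j : N7) :
    MH k i * MX Pfam j - MX Pfam j * MH k i = A7 j i • MX Pfam j := by
  ext s r
  rw [MH, Matrix.sub_apply, Matrix.diagonal_mul, Matrix.mul_diagonal, Matrix.smul_apply]
  by_cases he : CL.edge j r s
  · rw [edge_mwt he i]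
    simp only [zsmul_eq_mul]
    push_cast
    ring
  · have h0 : MX Pfam j s r = 0 := if_neg he
    simp [h0]

theorem comm_HY (i j : N7) :
    MH k i * MY Pfam j - MY Pfam j * MH k i = -(A7 j i • MY Pfam j) := by
  ext r s
  rw [MH, Matrix.sub_apply, Matrix.diagonal_mul, Matrix.mul_diagonal, Matrix.neg_apply,
    Matrix.smul_apply]
  by_cases he : CL.edge j r s
  · rw [edge_mwt he i]
    simp only [zsmul_eq_mul]
    push_cast
    ring
  · have h0 : MY Pfam j r s = 0 := if_neg he
    simp [h0]

theorem lie_mulVecLin (M N : Matrix (L7 k) (L7 k) ℂ) :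
    ⁅(M.mulVecLin : Module.End ℂ (L7 k → ℂ)), (N.mulVecLin : Module.End ℂ (L7 k → ℂ))⁆ =
      (M * N - N * M).mulVecLin := by
  rw [LieRing.of_associative_ring_bracket]
  apply LinearMap.ext
  intro v
  simp [Module.End.mul_apply]

theorem A7_off : ∀ i j : N7, i ≠ j → A7 j i = 0 ∨ A7 j i = -1 := by
  decide +kernel

theorem A7_diag (i : N7) : A7 i i = 2 := if_pos rfl

theorem exists_hom (k : ℕ) : ∃ φ : CL.gLie A7 →ₗ⁅ℂ⁆ Module.End ℂ (L7 k → ℂ),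
    ∀ i : N7, φ (CL.px A7 i) = CL.opX Pfam i ∧ φ (CL.py A7 i) = CL.opY Pfam i ∧
      φ (CL.ph A7 i) = CL.opH i := by
  have hX : ∀ i, (CL.opX Pfam i : Module.End ℂ (L7 k → ℂ)) = (MX Pfam i).mulVecLin := fun _ => rfl
  have hY : ∀ i, (CL.opY Pfam i : Module.End ℂ (L7 k → ℂ)) = (MY Pfam i).mulVecLin := fun _ => rfl
  have hH : ∀ i, (CL.opH i : Module.End ℂ (L7 k → ℂ)) = (MH k i).mulVecLin := fun _ => rfl
  have hsmul : ∀ (a : ℤ) (M : Matrix (L7 k) (L7 k) ℂ), (a • M).mulVecLin = a • M.mulVecLin := by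
    intro a M
    apply LinearMap.ext
    intro v
    rw [LinearMap.smul_apply, Matrix.mulVecLin_apply, Matrix.mulVecLin_apply, Matrix.smul_mulVec]
  have hneg : ∀ (M : Matrix (L7 k) (L7 k) ℂ), (-M).mulVecLin = -M.mulVecLin := by
    intro M
    apply LinearMap.ext
    intro v
    simp
  apply exists_gLie_hom A7 A7_off A7_diag
  · intro i j
    rw [hH, hH, lie_mulVecLin, MH, MH, Matrix.diagonal_mul_diagonal, Matrix.diagonal_mul_diagonal]
    simp only [mul_comm, sub_self, Matrix.mulVecLin_zero]
  · intro i
    rw [hX, hY, hH, lie_mulVecLin, comm_XY]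
  · intro i j hij
    rw [hX, hY, lie_mulVecLin, comm_XY' hij, Matrix.mulVecLin_zero]
  · intro i j
    rw [hX, hH, lie_mulVecLin, comm_HX, hsmul]
  · intro i j
    rw [hY, hH, lie_mulVecLin, comm_HY, hneg, hsmul]

end E7aux

/-! ### Irreducibility -/

namespace E7aux

variable {k : ℕ}

/-- A statistic used to order the elements of a given rank. -/
def Psi (t : L7 k) : ℕ := ∑ p ∈ pos7, Cf t p * p.2

theorem Cov.psi {p : N7 × ℕ} {r s : L7 k} (h : Cov p r s) : Psi s = Psi r + p.2 := by
  rw [Psi, Psi, Finset.sum_congr rfl (fun q _ => congrArg (· * q.2) (h.2 q))]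
  simp only [add_mul, Finset.sum_add_distrib, ite_mul, one_mul, zero_mul]
  simp [h.1]

theorem exists_defect {t : L7 k} (ht : t ≠ top7 k) :
    ∃ x ∈ pos7, Cf t x < k ∧ ∀ y ∈ pos7, y.2 < x.2 → Cf t y = k := by
  have hne : (pos7.filter (fun x => Cf t x < k)).Nonempty := by
    by_contra hn
    rw [Finset.not_nonempty_iff_eq_empty] at hn
    apply ht
    apply Cf_ext
    intro p hp
    rw [Cf_top hp]
    by_contra hpk
    have : p ∈ pos7.filter (fun x => Cf t x < k) :=
      Finset.mem_filter.2 ⟨hp, lt_of_le_of_ne ((Cf_valid t).le p) hpk⟩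
    rw [hn] at this
    exact absurd this (Finset.notMem_empty _)
  obtain ⟨x, hx, hmin⟩ := Finset.exists_min_image _ (fun x : N7 × ℕ => x.2) hne
  obtain ⟨hx1, hx2⟩ := Finset.mem_filter.1 hx
  refine ⟨x, hx1, hx2, fun y hy hlt => ?_⟩
  by_contra hyk
  have := hmin y (Finset.mem_filter.2 ⟨hy, lt_of_le_of_ne ((Cf_valid t).le y) hyk⟩)
  omega

theorem vanish {P : L7 k → L7 k → ℚ} (hP : ∀ r s : L7 k, (∃ i, CL.edge i r s) → 0 < P r s)
    {v : L7 k → ℂ} (hv : ∀ i, (MX P i).mulVec v = 0) :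
    ∀ (n : ℕ) (t : L7 k), Psi t = n → t ≠ top7 k → v t = 0 := by
  intro n
  induction n using Nat.strong_induction_on with
  | _ n ih =>
  intro t htn ht
  obtain ⟨x, hx, hxk, hlow⟩ := exists_defect ht
  have hdn : ∀ q ∈ dn x, q ∈ pos7 ∧ q.2 < x.2 := fun q hq => by
    have h := Finset.mem_filter.1 hq
    exact ⟨h.1, by have := h.2.2; omega⟩
  have hraise : Cf t x < hi k (Cf t) x := by
    rw [lt_hi_iff]
    refine ⟨hxk, fun q hq => ?_⟩
    rw [hlow q (hdn q hq).1 (hdn q hq).2]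
    exact hxk
  obtain ⟨s, hs⟩ := exists_raise t hx hraise
  have hxc : x ∈ col x.1 := mem_col.2 ⟨hx, rfl⟩
  have he : CL.edge x.1 t s := edge_iff.2 ⟨x, hxc, hs⟩
  have h0 := congrFun (hv x.1) s
  have h1 : (MX P x.1).mulVec v s = MX P x.1 s t * v t := by
    rw [Matrix.mulVec, dotProduct]
    apply Finset.sum_eq_single
    · intro u _ hut
      by_contra hn
      obtain ⟨p, hp, hc⟩ := edge_iff.1 (MX_ne (left_ne_zero_of_mul hn))
      obtain ⟨hp1, hp2⟩ := mem_col.1 hp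
      have hpx : p ≠ x := by
        rintro rfl
        exact hut (hc.left_unique hs)
      have hlo := hc.lo_lt
      rcases color_tri (Cf_valid s) hp1 hx hp2 hpx with h | h
      · have h3 : k ≤ hi k (Cf s) x := by
          rw [le_hi_iff]
          refine ⟨le_rfl, fun q hq => ?_⟩
          rw [hs.2 q, hlow q (hdn q hq).1 (hdn q hq).2]
          exact Nat.le_add_right _ _
        have h4 := (Cf_valid s).le p
        omega
      · apply right_ne_zero_of_mul hn
        have h5 := hs.psi
        have h6 := hc.psi
        refine ih (Psi u) (by omega) u rfl ?_
        intro hu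
        have h7 := hc.2 p
        rw [if_pos rfl, hu, Cf_top hp1] at h7
        have h8 := (Cf_valid s).le p
        omega
    · exact fun hn => absurd (Finset.mem_univ _) hn
  rw [h1] at h0
  rcases mul_eq_zero.1 h0 with h2 | h2
  · exfalso
    rw [MX_edge he] at h2
    have hpos : (0 : ℝ) < (P t s : ℝ) := by exact_mod_cast hP t s ⟨_, he⟩
    exact (Real.sqrt_pos.2 hpos).ne' (by exact_mod_cast h2)
  · exact h2

theorem edge_rk {i : N7} {r s : L7 k} (h : CL.edge i r s) : CL.rk s = CL.rk r + 1 := by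
  obtain ⟨p, _, hc⟩ := edge_iff.1 h
  exact hc.rk

theorem exists_killed {P : L7 k → L7 k → ℚ} (W : Submodule ℂ (L7 k → ℂ))
    (hX : ∀ i, ∀ v ∈ W, (MX P i).mulVec v ∈ W) (N : ℕ) (hN : ∀ t : L7 k, CL.rk t < N) :
    ∀ (n : ℕ) (w : L7 k → ℂ), w ∈ W → w ≠ 0 → (∀ t, w t ≠ 0 → N ≤ CL.rk t + n) →
      ∃ v ∈ W, v ≠ 0 ∧ ∀ i, (MX P i).mulVec v = 0 := by
  intro n
  induction n with
  | zero =>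
    intro w _ hw0 hsupp
    exfalso
    apply hw0
    funext t
    by_contra ht
    have h1 := hsupp t ht
    have h2 := hN t
    omega
  | succ n ih =>
    intro w hw hw0 hsupp
    by_cases hk : ∀ i, (MX P i).mulVec w = 0
    · exact ⟨w, hw, hw0, hk⟩
    · obtain ⟨i, hi⟩ := not_forall.1 hk
      refine ih _ (hX i w hw) hi fun t ht => ?_
      rw [Matrix.mulVec, dotProduct] at ht
      obtain ⟨u, _, hu⟩ := Finset.exists_ne_zero_of_sum_ne_zero ht
      have h1 := edge_rk (MX_ne (left_ne_zero_of_mul hu))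
      have h2 := hsupp u (right_ne_zero_of_mul hu)
      omega

theorem top_mem {P : L7 k → L7 k → ℚ} (hP : ∀ r s : L7 k, (∃ i, CL.edge i r s) → 0 < P r s)
    (W : Submodule ℂ (L7 k → ℂ)) (hX : ∀ i, ∀ v ∈ W, (MX P i).mulVec v ∈ W) (hW : W ≠ ⊥) :
    (Pi.single (top7 k) 1 : L7 k → ℂ) ∈ W := by
  obtain ⟨w, hw, hw0⟩ := Submodule.exists_mem_ne_zero_of_ne_bot hW
  obtain ⟨M, hM⟩ := (Set.finite_range (CL.rk : L7 k → ℕ)).bddAbove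
  have hN : ∀ t : L7 k, CL.rk t < M + 1 := fun t => Nat.lt_succ_of_le (hM (Set.mem_range_self t))
  obtain ⟨v, hv, hv0, hk⟩ := exists_killed W hX (M + 1) hN (M + 1) w hw hw0
    (fun t _ => Nat.le_add_left _ _)
  have hz : ∀ t, t ≠ top7 k → v t = 0 := fun t ht => vanish hP hk _ t rfl ht
  have hc : v (top7 k) ≠ 0 := by
    intro h
    apply hv0
    funext t
    by_cases ht : t = top7 k
    · rw [ht, h, Pi.zero_apply]
    · exact hz t ht
  have heq : (Pi.single (top7 k) 1 : L7 k → ℂ) = (v (top7 k))⁻¹ • v := by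
    funext t
    by_cases ht : t = top7 k
    · subst ht
      rw [Pi.single_eq_same, Pi.smul_apply, smul_eq_mul, inv_mul_cancel₀ hc]
    · rw [Pi.single_eq_of_ne ht, Pi.smul_apply, hz t ht, smul_zero]
  rw [heq]
  exact W.smul_mem _ hv

theorem MX_transpose (P : L7 k → L7 k → ℚ) (i : N7) : (MX P i).transpose = MY P i := rfl

theorem irred {P : L7 k → L7 k → ℚ} (hP : ∀ r s : L7 k, (∃ i, CL.edge i r s) → 0 < P r s)
    (U : Submodule ℂ (L7 k → ℂ)) (hX : ∀ i, ∀ v ∈ U, (MX P i).mulVec v ∈ U)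
    (hY : ∀ i, ∀ v ∈ U, (MY P i).mulVec v ∈ U) : U = ⊥ ∨ U = ⊤ := by
  by_cases hU : U = ⊥
  · exact Or.inl hU
  right
  have htop := top_mem hP U hX hU
  let W : Submodule ℂ (L7 k → ℂ) :=
    { carrier := {w | ∀ u ∈ U, w ⬝ᵥ u = 0}
      add_mem' := fun {a b} ha hb u hu => by rw [add_dotProduct, ha u hu, hb u hu, add_zero]
      zero_mem' := fun u _ => zero_dotProduct u
      smul_mem' := fun c a ha u hu => by rw [smul_dotProduct, ha u hu, smul_zero] }
  have hWX : ∀ i, ∀ v ∈ W, (MX P i).mulVec v ∈ W := by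
    intro i v hv u hu
    have h := hv _ (hY i u hu)
    rw [← MX_transpose, Matrix.dotProduct_mulVec, Matrix.vecMul_transpose] at h
    exact h
  have hW : W = ⊥ := by
    by_contra hW
    have h := top_mem hP W hWX hW _ htop
    rw [single_dotProduct, Pi.single_eq_same, one_mul] at h
    exact one_ne_zero h
  by_contra hne
  obtain ⟨f, hf, hker⟩ := Submodule.exists_le_ker_of_lt_top U (lt_top_iff_ne_top.2 hne)
  have hrep : ∀ u : L7 k → ℂ, (fun t => f (Pi.single t 1)) ⬝ᵥ u = f u := by
    intro u
    rw [LinearMap.pi_apply_eq_sum_univ f u, dotProduct]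
    refine Finset.sum_congr rfl fun t _ => ?_
    rw [smul_eq_mul, mul_comm]
    congr 2
    funext s
    rw [Pi.single_apply]
    simp only [eq_comm]
  have hmem : (fun t => f (Pi.single t 1)) ∈ W := by
    intro u hu
    rw [hrep]
    exact hker hu
  rw [hW, Submodule.mem_bot] at hmem
  apply hf
  apply LinearMap.ext
  intro u
  rw [← hrep u, hmem, zero_dotProduct, LinearMap.zero_apply]

theorem opX_top (P : L7 k → L7 k → ℚ) (i : N7) :
    CL.opX P i ((Pi.single (top7 k) 1 : L7 k → ℂ)) = 0 := by
  change (MX P i).mulVec _ = 0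
  rw [Matrix.mulVec_single_one]
  funext s
  by_contra hn
  obtain ⟨p, hp, hc⟩ := edge_iff.1 (MX_ne (P := P) (i := i) (r := top7 k) (s := s) hn)
  have h := hc.2 p
  rw [if_pos rfl, Cf_top hc.1] at h
  have := (Cf_valid s).le p
  omega

theorem opH_top (i : N7) : CL.opH i ((Pi.single (top7 k) 1 : L7 k → ℂ)) =
    (if i = n1 then (k : ℂ) else 0) • (Pi.single (top7 k) 1 : L7 k → ℂ) := by
  change (MH k i).mulVec _ = _
  funext t
  rw [MH, Matrix.mulVec_diagonal, Pi.smul_apply, smul_eq_mul]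
  by_cases ht : t = top7 k
  · rw [ht, mwt_top]
    congr 1
    split_ifs <;> simp
  · rw [Pi.single_eq_of_ne ht, mul_zero, mul_zero]

end E7aux

/-- Theorem 4.4: there is a family of positive rational edge coefficients
on `L7(k)` whose square roots define a representation of `𝔤(E₇)` on `⟨v_t : t ∈ L7(k)⟩`;
any such representation is irreducible with highest weight `kω₁`. -/
theorem statement_11 (k : ℕ) :
    ∃ P : L7 k → L7 k → ℚ,
      (∀ r s : L7 k, (∃ i, CL.edge i r s) → 0 < P r s) ∧
      (∃ φ : CL.gLie A7 →ₗ⁅ℂ⁆ Module.End ℂ (L7 k → ℂ),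
        ∀ i : N7, φ (CL.px A7 i) = CL.opX P i ∧ φ (CL.py A7 i) = CL.opY P i ∧
          φ (CL.ph A7 i) = CL.opH i) ∧
      ∀ P' : L7 k → L7 k → ℚ, (∀ r s : L7 k, (∃ i, CL.edge i r s) → 0 < P' r s) →
        ∀ φ : CL.gLie A7 →ₗ⁅ℂ⁆ Module.End ℂ (L7 k → ℂ),
          (∀ i : N7, φ (CL.px A7 i) = CL.opX P' i ∧ φ (CL.py A7 i) = CL.opY P' i ∧
            φ (CL.ph A7 i) = CL.opH i) →
          (∀ U : Submodule ℂ (L7 k → ℂ), (∀ g : CL.gLie A7, ∀ v ∈ U, φ g v ∈ U) →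
            U = ⊥ ∨ U = ⊤) ∧
          (∀ i : N7, CL.opX P' i ((Pi.single (top7 k) 1 : L7 k → ℂ)) = 0) ∧
          CL.opH n1 ((Pi.single (top7 k) 1 : L7 k → ℂ)) = (k : ℂ) • (Pi.single (top7 k) 1 : L7 k → ℂ) ∧
          (∀ j : N7, j ≠ n1 → CL.opH j ((Pi.single (top7 k) 1 : L7 k → ℂ)) = 0) := by
  refine ⟨E7aux.Pfam, fun r s h => E7aux.Pfam_pos h, E7aux.exists_hom k, ?_⟩
  intro P' hP' φ hφ
  refine ⟨fun U hU => ?_, fun i => E7aux.opX_top P' i, ?_, fun j hj => ?_⟩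
  · refine E7aux.irred hP' U (fun i v hv => ?_) (fun i v hv => ?_)
    · have h := hU (CL.px A7 i) v hv
      rw [(hφ i).1] at h
      exact h
    · have h := hU (CL.py A7 i) v hv
      rw [(hφ i).2.1] at h
      exact h
  · rw [E7aux.opH_top, if_pos rfl]
  · rw [E7aux.opH_top, if_neg hj, zero_smul]

end
end

section
/- For all nonnegative integers a and b there exists a family (P_e) of positive rational numbers, indexed by the covering edges e of L6(a,b), with the following property: let V be the complex vector space with basis {v_t : t ∈ L6(a,b)} and, for each node i of the E6 Dynkin diagram, define linear operators on V by X_i v_r := Σ √(P_e)·v_s (sum over color-i edges e: r ⋖ s out of r), Y_i v_s := Σ √(P_e)·v_r (sum over color-i edges e: r ⋖ s into s), and H_i v_t := m_i(t)·v_t; then there is a Lie algebra homomorphism φ : 𝔤(E6) → End(V) with φ(x_i) = X_i, φ(y_i) = Y_i, φ(h_i) = H_i for every node i. Moreover, for any such family and homomorphism, the resulting 𝔤(E6)-module V is irreducible (its only 𝔤(E6)-invariant subspaces are 0 and V) and has highest weight aω_{1'} + bω_{6'}: the vector v_{t_max} indexed by the maximal element t_max of L6(a,b) satisfies X_i v_{t_max}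 = 0 for every node i, H_{1'} v_{t_max} = a·v_{t_max}, H_{6'} v_{t_max} = b·v_{t_max}, and H_j v_{t_max} = 0 for every other node j. -/
noncomputable section

/-! ### Type `E₆` data -/

/-- The nodes `1', 2', 3', 4', 5', 6'` of the `E₆` Dynkin diagram. -/
inductive N6 : Type
  | m1 | m2 | m3 | m4 | m5 | m6
  deriving DecidableEq

instance : Fintype N6 where
  elems := ⟨[N6.m1, N6.m2, N6.m3, N6.m4, N6.m5, N6.m6], by decide⟩
  complete := by intro x; cases x <;> decide

open N6

/-- Adjacency in the `E₆` Dynkin diagram: edges `1'-2', 2'-3', 3'-4', 3'-5', 5'-6'`. -/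
abbrev adj6 : N6 → N6 → Prop := fun a b =>
  (a, b) ∈ ([(m1, m2), (m2, m3), (m3, m4), (m3, m5), (m5, m6)] : List (N6 × N6)) ∨
  (b, a) ∈ ([(m1, m2), (m2, m3), (m3, m4), (m3, m5), (m5, m6)] : List (N6 × N6))

/-- The Cartan matrix of type `E₆`, indexed by the nodes. -/
def A6 : N6 → N6 → ℤ := fun i j => if i = j then 2 else if adj6 i j then -1 else 0

/-- The 24 (color, rank) positions of the poset `P24 = 𝒫`. -/
def pos24 : Finset (N6 × ℕ) :=
  {(m1, 0), (m2, 1), (m3, 2), (m4, 3), (m5, 3), (m3, 4), (m6, 4), (m2, 5), (m5, 5),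
   (m1, 6), (m3, 6), (m2, 7), (m4, 7), (m1, 8), (m3, 8), (m2, 9), (m5, 9), (m3, 10),
   (m6, 10), (m4, 11), (m5, 11), (m3, 12), (m2, 13), (m1, 14)}

/-- The 16 (color, rank) positions of the minuscule poset `P16' = P_{E₆}(ω₁')`. -/
def pos16p : Finset (N6 × ℕ) :=
  {(m6, 0), (m5, 1), (m3, 2), (m2, 3), (m4, 3), (m1, 4), (m3, 4), (m2, 5), (m5, 5),
   (m3, 6), (m6, 6), (m4, 7), (m5, 7), (m3, 8), (m2, 9), (m1, 10)}

/-- The 16 (color, rank) positions of the minuscule poset `P16'' = P_{E₆}(ω₆')`. -/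
def pos16pp : Finset (N6 × ℕ) :=
  {(m1, 0), (m2, 1), (m3, 2), (m4, 3), (m5, 3), (m3, 4), (m6, 4), (m2, 5), (m5, 5),
   (m1, 6), (m3, 6), (m2, 7), (m4, 7), (m3, 8), (m5, 9), (m6, 10)}

/-- The extra constraints on elements of `L6(a,b)`: `c((1',8)) ≤ a` and `c((1',6)) ≥ a`. -/
def extra6 (a : ℕ) : ({x : N6 × ℕ // x ∈ pos24} → ℕ) → Prop := fun c =>
  c ⟨(m1, 8), by decide⟩ ≤ a ∧ a ≤ c ⟨(m1, 6), by decide⟩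

/-- The lattice `L6(a,b) = L_{E₆}(aω₁' + bω₆')`. -/
abbrev L6ab (a b : ℕ) : Type := CL.Elt adj6 pos24 (a + b) (extra6 a)

/-- The lattice `L6'(k) = L_{E₆}(kω₁')`. -/
abbrev L6p (k : ℕ) : Type := CL.Elt adj6 pos16p k (fun _ => True)

/-- The lattice `L6''(k) = L_{E₆}(kω₆')`. -/
abbrev L6pp (k : ℕ) : Type := CL.Elt adj6 pos16pp k (fun _ => True)

attribute [local instance 100] LieRing.ofAssociativeRing

section aux12

/-- Sum of residues at distinct nodes (Lagrange interpolation). -/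
theorem lag_inj {ι κ : Type} [DecidableEq ι] [DecidableEq κ] (S : Finset ι) (T : Finset κ)
    (z : ι → ℚ) (q : κ → ℚ) (hc : S.card = T.card) (hinj : Set.InjOn z S) :
    ∑ k ∈ S, (∏ l ∈ T, (z k - q l)) / ∏ j ∈ S.erase k, (z k - z j)
      = ∑ k ∈ S, z k - ∑ l ∈ T, q l := by
  rcases S.eq_empty_or_nonempty with rfl | hne
  · have : T = ∅ := by simpa using hc.symm
    subst this
    simp
  have hpos : 0 < S.card := hne.card_pos
  set p : Polynomial ℚ := ∏ l ∈ T, (Polynomial.X - Polynomial.C (q l)) with hp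
  set r : Polynomial ℚ := ∏ k ∈ S, (Polynomial.X - Polynomial.C (z k)) with hr
  have hpm : p.Monic := Polynomial.monic_prod_X_sub_C _ _
  have hrm : r.Monic := Polynomial.monic_prod_X_sub_C _ _
  have hpd : p.natDegree = S.card := by
    rw [hc]; exact Polynomial.natDegree_finsetProd_X_sub_C_eq_card ..
  have hrd : r.natDegree = S.card := Polynomial.natDegree_finsetProd_X_sub_C_eq_card ..
  have hdeg : (p - r).degree < S.card := by
    have := Polynomial.degree_sub_lt_left (p := p) (q := r)
      (by rw [Polynomial.degree_eq_natDegree hpm.ne_zero, Polynomial.degree_eq_natDegree hrm.ne_zero,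
        hpd, hrd]) hpm.ne_zero (by rw [hpm.leadingCoeff, hrm.leadingCoeff])
    rwa [Polynomial.degree_eq_natDegree hpm.ne_zero, hpd] at this
  have h := Lagrange.coeff_eq_sum hinj hdeg
  have h1 : (p - r).coeff (S.card - 1) = ∑ k ∈ S, z k - ∑ l ∈ T, q l := by
    rw [Polynomial.coeff_sub, hr, Polynomial.prod_X_sub_C_coeff_card_pred S z hpos, hc, hp,
      Polynomial.prod_X_sub_C_coeff_card_pred T q (hc ▸ hpos)]
    ring
  rw [← h1, h]
  refine Finset.sum_congr rfl fun k hk => ?_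
  have h2 : r.eval (z k) = 0 := by
    rw [hr, Polynomial.eval_prod]
    exact Finset.prod_eq_zero hk (by simp)
  rw [Polynomial.eval_sub, h2, hp, Polynomial.eval_prod]
  simp

/-- Sum of residues, allowing coinciding nodes as long as they are cancelled by zeros. -/
theorem lag_gen {ι κ : Type} [DecidableEq ι] [DecidableEq κ] (z : ι → ℚ) (q : κ → ℚ) (n : ℕ) :
    ∀ (S : Finset ι) (T : Finset κ), S.card = n → T.card = n →
    (∀ k ∈ S, 2 ≤ (S.filter fun j => z j = z k).card →
      (S.filter fun j => z j = z k).card ≤ (T.filter fun l => q l = z k).card) →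
    ∑ k ∈ S, (∏ l ∈ T, (z k - q l)) / ∏ j ∈ S.erase k, (z k - z j)
      = ∑ k ∈ S, z k - ∑ l ∈ T, q l := by
  induction n with
  | zero =>
    intro S T hS hT _
    have hS' : S = ∅ := by simpa using hS
    have hT' : T = ∅ := by simpa using hT
    subst hS'; subst hT'; simp
  | succ n ih =>
    intro S T hS hT h
    by_cases hinj : Set.InjOn z S
    · exact lag_inj S T z q (hS.trans hT.symm) hinj
    have hex : ∃ k ∈ S, ∃ j ∈ S, z k = z j ∧ k ≠ j := by
      simp only [Set.InjOn] at hinj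
      push Not at hinj
      obtain ⟨k, hk, j, hj, h1, h2⟩ := hinj
      exact ⟨k, hk, j, hj, h1, h2⟩
    obtain ⟨k, hk, j, hj, hkj, hne⟩ := hex
    have h2 : 2 ≤ (S.filter fun j => z j = z k).card := by
      have : ({k, j} : Finset ι) ⊆ S.filter fun j => z j = z k := by
        intro x hx
        simp only [Finset.mem_insert, Finset.mem_singleton] at hx
        rcases hx with rfl | rfl
        · simp [hk]
        · simp [hj, hkj]
      calc 2 = ({k, j} : Finset ι).card := (Finset.card_pair hne).symm
        _ ≤ _ := Finset.card_le_card this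
    have h3 := h k hk h2
    obtain ⟨l, hl, l', hl', hll⟩ := Finset.one_lt_card.mp (lt_of_lt_of_le (by omega : 1 < 2) (h2.trans h3))
    simp only [Finset.mem_filter] at hl hl'
    have hIH := ih (S.erase k) (T.erase l) (by rw [Finset.card_erase_of_mem hk, hS]; rfl)
      (by rw [Finset.card_erase_of_mem hl.1, hT]; rfl) (by
        intro k' hk' h4
        have hk'S := Finset.mem_of_mem_erase hk'
        rw [Finset.filter_erase] at h4 ⊢
        rw [Finset.filter_erase]
        by_cases hz : z k' = z k
        · have e1 : k ∈ S.filter fun j => z j = z k' := by simp [hk, hz]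
          have e2 : l ∈ T.filter fun l => q l = z k' := by simp [hl.1, hl.2, hz]
          rw [Finset.card_erase_of_mem e1] at h4 ⊢
          rw [Finset.card_erase_of_mem e2]
          have := h k' hk'S (by omega)
          omega
        · have e1 : k ∉ S.filter fun j => z j = z k' := by simp [hk, Ne.symm hz]
          have e2 : l ∉ T.filter fun l => q l = z k' := by
            simp only [Finset.mem_filter, not_and]
            intro _ h5
            exact hz (h5.symm.trans hl.2)
          rw [Finset.erase_eq_of_notMem e1] at h4 ⊢
          rw [Finset.erase_eq_of_notMem e2]
          exact h k' hk'S h4)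
    rw [← Finset.add_sum_erase S _ hk, ← Finset.add_sum_erase S z hk,
      ← Finset.add_sum_erase T q hl.1, hl.2]
    have hk0 : (∏ l ∈ T, (z k - q l)) = 0 := Finset.prod_eq_zero hl.1 (by rw [hl.2]; ring)
    rw [hk0, zero_div, zero_add]
    have : ∑ x ∈ S.erase k, (∏ l ∈ T, (z x - q l)) / ∏ j ∈ S.erase x, (z x - z j)
        = ∑ x ∈ S.erase k, (∏ l ∈ T.erase l, (z x - q l)) / ∏ j ∈ (S.erase k).erase x, (z x - z j) := by
      refine Finset.sum_congr rfl fun x hx => ?_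
      by_cases hz : z x = z k
      · rw [Finset.prod_eq_zero hl.1 (by rw [hl.2, hz]; ring),
          Finset.prod_eq_zero (Finset.mem_erase.mpr ⟨Ne.symm hll, hl'.1⟩) (by rw [hl'.2, hz]; ring)]
        simp
      · have hxk : k ∈ S.erase x := Finset.mem_erase.mpr ⟨fun e => hz (by rw [e]), hk⟩
        rw [← Finset.mul_prod_erase T _ hl.1, ← Finset.mul_prod_erase (S.erase x) _ hxk, hl.2,
          Finset.erase_right_comm, mul_div_mul_left _ _ (sub_ne_zero.mpr hz)]
    rw [this, hIH]
    ring

/-- Colors of the 24 positions and of 3 frozen positions (color 0). -/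
def col : Fin 27 → Fin 7 :=
  ![1, 2, 3, 4, 5, 3, 6, 2, 5, 1, 3, 2, 4, 1, 3, 2, 5, 3, 6, 4, 5, 3, 2, 1, 0, 0, 0]

/-- Ranks, shifted by one. -/
def rnk : Fin 27 → ℕ :=
  ![1, 2, 3, 4, 4, 5, 5, 6, 6, 7, 7, 8, 8, 9, 9, 10, 10, 11, 11, 12, 12, 13, 14, 15, 0, 8, 16]

/-- Adjacency of colors. -/
def adjC (p q : Fin 7) : Bool :=
  [((0 : Fin 7), (1 : Fin 7)), (1, 0), (1, 2), (2, 1), (2, 3), (3, 2), (3, 4), (4, 3), (3, 5),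
    (5, 3), (5, 6), (6, 5)].contains (p, q)

/-- Covering steps on the extended poset. -/
abbrev stp (u v : Fin 27) : Prop := adjC (col u) (col v) = true ∧ rnk v = rnk u + 1

/-- Order-reversing integer labellings of the extended poset. -/
def good (g : Fin 27 → ℤ) : Prop := ∀ u v, stp u v → g v ≤ g u

/-- The strict order of the extended poset. -/
abbrev blw (u v : Fin 27) : Prop := rnk u < rnk v ∧
  [((3 : Fin 27), (6 : Fin 27)), (6, 7), (6, 9), (6, 25), (8, 9), (8, 25), (9, 12), (10, 25),
    (12, 13), (13, 16), (13, 18), (15, 18), (18, 19), (25, 14), (25, 16), (25, 18)].contains (u, v)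
      = false

theorem blw_step : ∀ u v, blw u v → stp u v ∨ ∃ w, stp u w ∧ blw w v := by decide +kernel

theorem blw_rel : ∀ u v, (adjC (col u) (col v) = true ∨ col u = col v) → rnk u < rnk v → blw u v := by
  decide +kernel

theorem good_blw {g : Fin 27 → ℤ} (hg : good g) (n : ℕ) :
    ∀ u v, rnk v - rnk u ≤ n → blw u v → g v ≤ g u := by
  induction n with
  | zero => intro u v h1 h2; have := h2.1; omega
  | succ n ih =>
    intro u v h1 h2
    rcases blw_step u v h2 with h | ⟨w, hw, hwv⟩
    · exact hg u v h
    · have := hw.2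
      exact (ih w v (by omega) hwv).trans (hg u w hw)

theorem good_rel {g : Fin 27 → ℤ} (hg : good g) {u v : Fin 27}
    (h : adjC (col u) (col v) = true ∨ col u = col v) (hr : rnk u < rnk v) : g v ≤ g u :=
  good_blw hg _ u v le_rfl (blw_rel u v h hr)

/-- Shifted labels. -/
def lab (g : Fin 27 → ℤ) (x : Fin 27) : ℚ := (g x : ℚ) - (rnk x : ℚ) / 2

/-- The factor contributed by `u` to the coefficient at `x`. -/
def fac (x u : Fin 27) (d : ℚ) : ℚ :=
  if adjC (col x) (col u) then d + 1 / 2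
  else if col x = col u ∧ u ≠ x then (d * (d + 1))⁻¹ else 1

/-- The edge coefficient for raising the label at `x`. -/
def cF (g : Fin 27 → ℤ) (x : Fin 27) : ℚ := -∏ u, fac x u (lab g x - lab g u)

theorem adjC_symm : ∀ p q, adjC p q = adjC q p := by decide
theorem adjC_self : ∀ p, adjC p p = false := by decide

theorem fac_self (x : Fin 27) (d : ℚ) : fac x x d = 1 := by
  simp [fac, adjC_self]

theorem fac_swap {x y : Fin 27} (d : ℚ) :
    fac y x (-d - 1) * fac x y (d - 1) = fac x y d * fac y x (-d) := by
  unfold fac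
  rw [adjC_symm (col y) (col x)]
  by_cases h : adjC (col x) (col y)
  · simp only [h, if_true]; ring
  · simp only [h]
    by_cases h2 : col x = col y ∧ y ≠ x
    · have h3 : col y = col x ∧ x ≠ y := ⟨h2.1.symm, h2.2.symm⟩
      simp only [Bool.false_eq_true, if_false, if_pos h2, if_pos h3]
      rw [← mul_inv, ← mul_inv]
      congr 1
      ring
    · have h3 : ¬ (col y = col x ∧ x ≠ y) := fun h => h2 ⟨h.1.symm, h.2.symm⟩
      simp only [Bool.false_eq_true, if_false, if_neg h2, if_neg h3]

theorem lab_add (g : Fin 27 → ℤ) (x u : Fin 27) :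
    lab (g + Pi.single x 1) u = lab g u + if u = x then 1 else 0 := by
  unfold lab
  by_cases h : u = x
  · subst h; simp; ring
  · simp [h]

theorem lab_sub (g : Fin 27 → ℤ) (x u : Fin 27) :
    lab (g - Pi.single x 1) u = lab g u - if u = x then 1 else 0 := by
  unfold lab
  by_cases h : u = x
  · subst h; simp; ring
  · simp [h]

theorem diamond (g : Fin 27 → ℤ) {x y : Fin 27} (h : x ≠ y) :
    cF (g + Pi.single x 1) y * cF (g + Pi.single y 1) x = cF g x * cF g y := by
  have key : ∀ x y : Fin 27, x ≠ y → ∃ R : ℚ, cF g x = R * fac x y (lab g x - lab g y) ∧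
      cF (g + Pi.single y 1) x = R * fac x y (lab g x - lab g y - 1) := by
    intro x y h
    refine ⟨-∏ u ∈ Finset.univ.erase y, fac x u (lab g x - lab g u), ?_, ?_⟩
    · rw [cF, ← Finset.mul_prod_erase Finset.univ _ (Finset.mem_univ y)]; ring
    · rw [cF, ← Finset.mul_prod_erase Finset.univ _ (Finset.mem_univ y)]
      rw [lab_add, lab_add, if_neg h, if_pos rfl]
      have : ∏ u ∈ Finset.univ.erase y, fac x u (lab g x + 0 - lab (g + Pi.single y 1) u)
          = ∏ u ∈ Finset.univ.erase y, fac x u (lab g x - lab g u) := by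
        refine Finset.prod_congr rfl fun u hu => ?_
        rw [lab_add, if_neg (Finset.ne_of_mem_erase hu)]; congr 1; ring
      rw [this, show lab g x + 0 - (lab g y + 1) = lab g x - lab g y - 1 by ring]; ring
  obtain ⟨R, h1, h2⟩ := key x y h
  obtain ⟨R', h3, h4⟩ := key y x h.symm
  rw [h1, h2, h3, h4]
  have := fac_swap (x := x) (y := y) (lab g x - lab g y)
  rw [show lab g y - lab g x = -(lab g x - lab g y) by ring]
  linear_combination R * R' * this

theorem cF_zero_up {g : Fin 27 → ℤ} {x u : Fin 27} (hs : stp u x) (h : g x = g u) : cF g x = 0 := by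
  rw [cF, Finset.prod_eq_zero (Finset.mem_univ u), neg_zero]
  have h1 : (rnk x : ℚ) = rnk u + 1 := by exact_mod_cast hs.2
  rw [fac, if_pos (by rw [adjC_symm]; exact hs.1), lab, lab, h, h1]
  ring

theorem cF_zero_dn {g : Fin 27 → ℤ} {x v : Fin 27} (hs : stp x v) (h : g x = g v) :
    cF (g - Pi.single x 1) x = 0 := by
  rw [cF, Finset.prod_eq_zero (Finset.mem_univ v), neg_zero]
  have hne : v ≠ x := by rintro rfl; have := hs.2; omega
  have h1 : (rnk v : ℚ) = rnk x + 1 := by exact_mod_cast hs.2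
  rw [fac, if_pos hs.1, lab_sub, lab_sub, if_pos rfl, if_neg hne, lab, lab, h, h1]
  ring

/-- The sign of a factor. -/
def sg (x u : Fin 27) : ℤ := if adjC (col x) (col u) = true ∧ rnk u < rnk x then -1 else 1

theorem sg_prod : ∀ x, col x ≠ 0 → ∏ u, sg x u = -1 := by decide +kernel

theorem same_rank : ∀ x u, adjC (col x) (col u) = true ∨ (col x = col u ∧ u ≠ x) → rnk u ≠ rnk x := by
  decide +kernel

theorem same_gap : ∀ x u, col x = col u → rnk x < rnk u → rnk x + 2 ≤ rnk u := by
  decide +kernel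

theorem cF_pos {g : Fin 27 → ℤ} {x : Fin 27} (hx : col x ≠ 0) (hg : good g)
    (hg' : good (g + Pi.single x 1)) : 0 < cF g x := by
  have hpos : ∀ u, 0 < (sg x u : ℚ) * fac x u (lab g x - lab g u) := by
    intro u
    by_cases hux : u = x
    · subst hux; simp [fac_self, sg, adjC_self]
    have hlt : ∀ (hrel : adjC (col x) (col u) = true ∨ col x = col u), rnk u < rnk x →
        (g x : ℚ) + 1 ≤ g u := by
      intro hrel hr
      have := good_rel hg' (u := u) (v := x) (hrel.imp (by rw [adjC_symm]; exact id) Eq.symm) hr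
      simp only [Pi.add_apply, Pi.single_eq_same, Pi.single_eq_of_ne hux, add_zero] at this
      exact_mod_cast this
    have hgt : ∀ (hrel : adjC (col x) (col u) = true ∨ col x = col u), rnk x < rnk u →
        (g u : ℚ) ≤ g x := by
      intro hrel hr
      exact_mod_cast good_rel hg (u := x) (v := u) hrel hr
    unfold sg fac
    by_cases ha : adjC (col x) (col u) = true
    · rcases lt_or_gt_of_ne (same_rank x u (Or.inl ha)) with hr | hr
      · have h1 := hlt (Or.inl ha) hr
        have h2 : (rnk u : ℚ) + 1 ≤ rnk x := by exact_mod_cast hr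
        rw [if_pos ⟨ha, hr⟩, if_pos ha]
        unfold lab
        push_cast
        linarith
      · have h1 := hgt (Or.inl ha) hr
        have h2 : (rnk x : ℚ) + 1 ≤ rnk u := by exact_mod_cast hr
        rw [if_neg (by omega), if_pos ha]
        unfold lab
        push_cast
        linarith
    · rw [if_neg (fun h => ha h.1), if_neg ha]
      by_cases hc : col x = col u ∧ u ≠ x
      · rw [if_pos hc]
        rcases lt_or_gt_of_ne (same_rank x u (Or.inr hc)) with hr | hr
        · have h1 := hlt (Or.inr hc.1) hr
          have h2 : (rnk u : ℚ) + 2 ≤ rnk x := by exact_mod_cast same_gap u x hc.1.symm hr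
          have : 0 < (lab g x - lab g u) * (lab g x - lab g u + 1) := by
            apply mul_pos_of_neg_of_neg <;> unfold lab <;> linarith
          push_cast
          rw [one_mul]
          exact inv_pos.mpr this
        · have h1 := hgt (Or.inr hc.1) hr
          have h2 : (rnk x : ℚ) + 2 ≤ rnk u := by exact_mod_cast same_gap x u hc.1 hr
          have : 0 < (lab g x - lab g u) * (lab g x - lab g u + 1) := by
            apply mul_pos <;> unfold lab <;> linarith
          push_cast
          rw [one_mul]
          exact inv_pos.mpr this
      · rw [if_neg hc]; norm_num
  have h := Finset.prod_pos (s := Finset.univ) (fun u _ => hpos u)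
  rw [Finset.prod_mul_distrib] at h
  have h2 : ∏ u, (sg x u : ℚ) = -1 := by
    have := sg_prod x hx
    have h3 : ((∏ u, sg x u : ℤ) : ℚ) = ((-1 : ℤ) : ℚ) := by rw [this]
    push_cast at h3
    exact h3
  rw [h2] at h
  unfold cF
  linarith

theorem mid_two : ∀ x x', col x ≠ 0 → col x = col x' → rnk x' = rnk x + 2 →
    ∃ y y', y ≠ y' ∧ stp x y ∧ stp y x' ∧ stp x y' ∧ stp y' x' := by decide +kernel

theorem card_nbr : ∀ i : Fin 7, i ≠ 0 →
    ((Finset.univ.filter fun x => col x = i) ×ˢ (Finset.univ : Finset Bool)).card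
      = (Finset.univ.filter fun y => adjC i (col y) = true).card := by decide +kernel

theorem rnk_nbr : ∀ i : Fin 7, i ≠ 0 →
    2 * ∑ x with col x = i, rnk x = ∑ y with adjC i (col y) = true, rnk y := by decide +kernel

/-- The weight as a linear function of the labelling. -/
def wtM (i : Fin 7) (g : Fin 27 → ℤ) : ℤ :=
  2 * ∑ x with col x = i, g x - ∑ y with adjC i (col y) = true, g y

/-- nodes -/
def nod (g : Fin 27 → ℤ) (k : Fin 27 × Bool) : ℚ := lab g k.1 + if k.2 then 1 / 2 else -1 / 2

theorem lab_ge {g : Fin 27 → ℤ} (hg : good g) {x x' : Fin 27} (hc : col x = col x')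
    (hr : rnk x < rnk x') : lab g x' + 1 ≤ lab g x ∧
      (lab g x' + 1 = lab g x → rnk x' = rnk x + 2 ∧ g x = g x') := by
  have h1 : (g x' : ℚ) ≤ g x := by exact_mod_cast good_rel hg (Or.inr hc) hr
  have h2' := same_gap x x' hc hr
  have h2 : (rnk x : ℚ) + 2 ≤ rnk x' := by exact_mod_cast h2'
  unfold lab
  refine ⟨by linarith, fun h => ⟨?_, ?_⟩⟩
  · have : (rnk x' : ℚ) ≤ rnk x + 2 := by linarith
    have : rnk x' ≤ rnk x + 2 := by exact_mod_cast this
    omega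
  · have : (g x : ℚ) = g x' := by linarith
    exact_mod_cast this

theorem lab_inj {g : Fin 27 → ℤ} (hg : good g) {x x' : Fin 27} (hc : col x = col x')
    (h : lab g x = lab g x') : x = x' := by
  by_contra hne
  rcases lt_or_gt_of_ne (same_rank x x' (Or.inr ⟨hc, fun e => hne e.symm⟩)) with hr | hr
  · have := (lab_ge hg hc.symm hr).1; linarith
  · have := (lab_ge hg hc hr).1; linarith

theorem two_zeros {g : Fin 27 → ℤ} (hg : good g) {x x' : Fin 27} (hx : col x ≠ 0)
    (hc : col x = col x') (hr : rnk x < rnk x') (h : lab g x' + 1 = lab g x) :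
    2 ≤ (Finset.univ.filter fun y => adjC (col x) (col y) = true ∧ lab g y = lab g x - 1 / 2).card := by
  obtain ⟨h1, h2⟩ := (lab_ge hg hc hr).2 h
  obtain ⟨y, y', hne, s1, s2, s3, s4⟩ := mid_two x x' hx hc h1
  have key : ∀ y, stp x y → stp y x' → lab g y = lab g x - 1 / 2 := by
    intro y s1 s2
    have e1 := hg _ _ s1
    have e2 := hg _ _ s2
    have e3 : g y = g x := by omega
    have e4 : (rnk y : ℚ) = rnk x + 1 := by exact_mod_cast s1.2
    rw [lab, lab, e3, e4]; ring
  have : ({y, y'} : Finset (Fin 27)) ⊆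
      Finset.univ.filter fun y => adjC (col x) (col y) = true ∧ lab g y = lab g x - 1 / 2 := by
    intro u hu
    simp only [Finset.mem_insert, Finset.mem_singleton] at hu
    rcases hu with rfl | rfl
    · simp only [Finset.mem_filter, Finset.mem_univ, true_and]
      exact ⟨s1.1, key _ s1 s2⟩
    · simp only [Finset.mem_filter, Finset.mem_univ, true_and]
      exact ⟨s3.1, key _ s3 s4⟩
  calc 2 = ({y, y'} : Finset (Fin 27)).card := (Finset.card_pair hne).symm
    _ ≤ _ := Finset.card_le_card this

theorem nod_zeros {g : Fin 27 → ℤ} (hg : good g) {x x' : Fin 27} {b b' : Bool} (hx : col x ≠ 0)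
    (hc : col x = col x') (hne : (x, b) ≠ (x', b')) (h : nod g (x, b) = nod g (x', b')) :
    2 ≤ (Finset.univ.filter fun y => adjC (col x) (col y) = true ∧ lab g y = nod g (x, b)).card := by
  have hxx : x ≠ x' := by
    rintro rfl
    cases b <;> cases b' <;> simp [nod] at h hne <;> norm_num at h
  rcases lt_or_gt_of_ne (same_rank x x' (Or.inr ⟨hc, fun e => hxx e.symm⟩)) with hr | hr
  · have h1 := (lab_ge hg hc.symm hr).1
    have h2 : lab g x + 1 = lab g x' ∧ b = true := by
      cases b <;> cases b' <;> simp [nod] at h ⊢ <;> linarith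
    have h3 := two_zeros hg (hc ▸ hx) hc.symm hr h2.1
    rw [← hc] at h3
    convert h3 using 5
    rw [nod, h2.2, ← h2.1]
    simp; ring
  · have h1 := (lab_ge hg hc hr).1
    have h2 : lab g x' + 1 = lab g x ∧ b = false := by
      cases b <;> cases b' <;> simp [nod] at h ⊢ <;> linarith
    have h3 := two_zeros hg hx hc hr h2.1
    convert h3 using 5
    rw [nod, h2.2]
    simp; ring

theorem prod_fac (i : Fin 7) (x : Fin 27) (hx : col x = i) (d : Fin 27 → ℚ) :
    ∏ u, fac x u (d u) = (∏ y with adjC i (col y) = true, (d y + 1 / 2)) /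
      ∏ u ∈ (Finset.univ.filter fun u => col u = i).erase x, (d u * (d u + 1)) := by
  have h : ∀ u, fac x u (d u) = (if adjC i (col u) = true then d u + 1 / 2 else 1) *
      (if u ∈ (Finset.univ.filter fun u => col u = i).erase x then (d u * (d u + 1))⁻¹ else 1) := by
    intro u
    unfold fac
    rw [hx]
    by_cases h1 : adjC i (col u) = true
    · have : ¬ (u ∈ (Finset.univ.filter fun u => col u = i).erase x) := by
        simp only [Finset.mem_erase, Finset.mem_filter, Finset.mem_univ, true_and, not_and]
        rintro _ rfl
        rw [adjC_self] at h1; exact absurd h1 (by simp)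
      rw [if_pos h1, if_pos h1, if_neg this, mul_one]
    · rw [if_neg h1, if_neg h1, one_mul]
      congr 1
      simp only [Finset.mem_erase, Finset.mem_filter, Finset.mem_univ, true_and, eq_iff_iff]
      exact ⟨fun h => ⟨h.2, h.1.symm⟩, fun h => ⟨h.2.symm, h.1⟩⟩
  rw [Finset.prod_congr rfl fun u _ => h u, Finset.prod_mul_distrib,
    div_eq_mul_inv (∏ y with adjC i (col y) = true, (d y + 1 / 2)),
    Finset.prod_filter, ← Finset.prod_inv_distrib, Finset.prod_ite_mem, Finset.univ_inter]

theorem crossing {g : Fin 27 → ℤ} (hg : good g) (i : Fin 7) (hi : i ≠ 0) :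
    ∑ x with col x = i, (cF (g - Pi.single x 1) x - cF g x) = (wtM i g : ℚ) := by
  set X := Finset.univ.filter fun x => col x = i with hX
  set T := Finset.univ.filter fun y => adjC i (col y) = true with hT
  have key := lag_gen (nod g) (lab g) T.card (X ×ˢ (Finset.univ : Finset Bool)) T (card_nbr i hi) rfl
    (by
      rintro ⟨x, b⟩ hk h2
      have hx : col x = i := by simpa [hX] using hk
      have hle : (((X ×ˢ (Finset.univ : Finset Bool))).filter fun j => nod g j = nod g (x, b)).card ≤ 2 := by
        have : (((X ×ˢ (Finset.univ : Finset Bool))).filter fun j => nod g j = nod g (x, b)).card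
            ≤ (Finset.univ : Finset Bool).card := by
          apply Finset.card_le_card_of_injOn (fun j => j.2) (fun _ _ => Finset.mem_coe.mpr (Finset.mem_univ _))
          rintro ⟨x1, b1⟩ h1 ⟨x2, b2⟩ h2 h3
          simp only [hX, Finset.coe_filter, Finset.mem_product, Finset.mem_filter, Finset.mem_univ,
            true_and, and_true, Set.mem_ofPred_eq] at h1 h2 h3
          subst h3
          have h4 : lab g x1 = lab g x2 := by
            have := h1.2.trans h2.2.symm
            simpa [nod] using this
          rw [lab_inj hg (h1.1.trans h2.1.symm) h4]
        simpa using this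
      refine hle.trans ?_
      obtain ⟨⟨x', b'⟩, hj, hne⟩ := Finset.exists_mem_ne (lt_of_lt_of_le (by norm_num) h2) (x, b)
      simp only [hX, Finset.mem_product, Finset.mem_filter, Finset.mem_univ,
            true_and, and_true] at hj
      have := nod_zeros hg (x := x) (x' := x') (b := b) (b' := b') (hx ▸ hi) (hx.trans hj.1.symm)
        hne.symm hj.2.symm
      rw [hx] at this
      rw [hT, Finset.filter_filter]
      exact this)
  have hsum : (∑ k ∈ X ×ˢ (Finset.univ : Finset Bool), nod g k) - ∑ l ∈ T, lab g l = (wtM i g : ℚ) := by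
    rw [Finset.sum_product]
    have h1 : ∀ x ∈ X, ∑ b : Bool, nod g (x, b) = 2 * lab g x := by
      intro x _
      simp [nod]; ring
    rw [Finset.sum_congr rfl h1]
    have h2 := rnk_nbr i hi
    have h3 : (2 : ℚ) * ∑ x ∈ X, (rnk x : ℚ) = ∑ y ∈ T, (rnk y : ℚ) := by exact_mod_cast h2
    unfold lab wtM
    push_cast
    rw [← Finset.mul_sum, Finset.sum_sub_distrib, Finset.sum_sub_distrib, ← Finset.sum_div,
      ← Finset.sum_div]
    linarith
  rw [← hsum, ← key, Finset.sum_product]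
  refine Finset.sum_congr rfl fun x hx => ?_
  have hxi : col x = i := by simpa [hX] using hx
  rw [Fintype.sum_bool]
  have hden : ∀ b : Bool, ∏ j ∈ (X ×ˢ (Finset.univ : Finset Bool)).erase (x, b), (nod g (x, b) - nod g j)
      = (nod g (x, b) - nod g (x, !b)) * ∏ u ∈ X.erase x, ((nod g (x, b) - nod g (u, true)) *
        (nod g (x, b) - nod g (u, false))) := by
    intro b
    have : (X ×ˢ (Finset.univ : Finset Bool)).erase (x, b)
        = insert (x, !b) (X.erase x ×ˢ (Finset.univ : Finset Bool)) := by
      ext ⟨u, c⟩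
      simp only [Finset.mem_erase, Finset.mem_product, Finset.mem_univ, and_true, Finset.mem_insert,
        Prod.mk.injEq, ne_eq]
      by_cases hu : u = x
      · subst hu
        cases b <;> cases c <;> simp [hx]
      · simp [hu]
    rw [this, Finset.prod_insert (by simp), Finset.prod_product]
    congr 1
    refine Finset.prod_congr rfl fun u _ => ?_
    rw [Fintype.prod_bool]
  rw [hden, hden]
  have e1 : cF g x = -((∏ l ∈ T, (nod g (x, true) - lab g l)) /
      ((nod g (x, true) - nod g (x, !true)) * ∏ u ∈ X.erase x, ((nod g (x, true) - nod g (u, true)) *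
        (nod g (x, true) - nod g (u, false))))) := by
    rw [cF, prod_fac i x hxi]
    have a1 : ∏ y ∈ T, (lab g x - lab g y + 1 / 2) = ∏ l ∈ T, (nod g (x, true) - lab g l) := by
      refine Finset.prod_congr rfl fun u _ => ?_
      simp [nod]; ring
    have a2 : ∏ u ∈ X.erase x, ((lab g x - lab g u) * (lab g x - lab g u + 1))
        = ∏ u ∈ X.erase x, ((nod g (x, true) - nod g (u, true)) *
        (nod g (x, true) - nod g (u, false))) := by
      refine Finset.prod_congr rfl fun u _ => ?_
      simp only [nod, if_true, Bool.false_eq_true, if_false]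
      ring
    rw [a1, a2]
    have a3 : nod g (x, true) - nod g (x, !true) = 1 := by simp [nod]; ring
    rw [a3, one_mul]
  have e2 : cF (g - Pi.single x 1) x = ((∏ l ∈ T, (nod g (x, false) - lab g l)) /
      ((nod g (x, false) - nod g (x, !false)) * ∏ u ∈ X.erase x, ((nod g (x, false) - nod g (u, true)) *
        (nod g (x, false) - nod g (u, false))))) := by
    rw [cF, prod_fac i x hxi]
    have a1 : ∏ y ∈ T, (lab (g - Pi.single x 1) x - lab (g - Pi.single x 1) y + 1 / 2)
        = ∏ l ∈ T, (nod g (x, false) - lab g l) := by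
      refine Finset.prod_congr rfl fun u hu => ?_
      have : u ≠ x := by
        rintro rfl
        simp [hT, hxi, adjC_self] at hu
      rw [lab_sub, lab_sub, if_pos rfl, if_neg this]
      simp only [nod, Bool.false_eq_true, if_false]
      ring
    have a2 : ∏ u ∈ X.erase x, ((lab (g - Pi.single x 1) x - lab (g - Pi.single x 1) u) *
          (lab (g - Pi.single x 1) x - lab (g - Pi.single x 1) u + 1))
        = ∏ u ∈ X.erase x, ((nod g (x, false) - nod g (u, true)) *
        (nod g (x, false) - nod g (u, false))) := by
      refine Finset.prod_congr rfl fun u hu => ?_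
      rw [lab_sub, lab_sub, if_pos rfl, if_neg (Finset.ne_of_mem_erase hu)]
      simp only [nod, if_true, Bool.false_eq_true, if_false]
      ring
    rw [a1, a2]
    have a3 : nod g (x, false) - nod g (x, !false) = -1 := by simp [nod]; ring
    rw [a3, neg_one_mul, div_neg]
  rw [e1, e2]
  ring

/-- The positions of `P24` in the order of the list. -/
def ptab : Fin 24 → N6 × ℕ :=
  ![(m1, 0), (m2, 1), (m3, 2), (m4, 3), (m5, 3), (m3, 4), (m6, 4), (m2, 5), (m5, 5),
   (m1, 6), (m3, 6), (m2, 7), (m4, 7), (m1, 8), (m3, 8), (m2, 9), (m5, 9), (m3, 10),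
   (m6, 10), (m4, 11), (m5, 11), (m3, 12), (m2, 13), (m1, 14)]

/-- The numbering of the colors. -/
def nc : N6 → Fin 7
  | m1 => 1 | m2 => 2 | m3 => 3 | m4 => 4 | m5 => 5 | m6 => 6

theorem nc_inj : ∀ i j, nc i = nc j → i = j := by decide
theorem nc_ne : ∀ i, nc i ≠ 0 := by decide
theorem nc_surj : ∀ p : Fin 7, p ≠ 0 → ∃ i, nc i = p := by decide
theorem nc_adj : ∀ i j, adj6 i j ↔ adjC (nc i) (nc j) = true := by decide

theorem ptab_mem : ∀ e, ptab e ∈ pos24 := by decide +kernel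
theorem ptab_inj : ∀ e f, ptab e = ptab f → e = f := by decide +kernel
theorem ptab_surj : ∀ x ∈ pos24, ∃ e, ptab e = x := by decide +kernel
theorem ptab_col : ∀ e : Fin 24, col (Fin.castLE (by omega) e) = nc (ptab e).1 := by decide +kernel
theorem ptab_rnk : ∀ e : Fin 24, rnk (Fin.castLE (by omega) e) = (ptab e).2 + 1 := by decide +kernel

/-- The positions as a type. -/
def pt (e : Fin 24) : {x : N6 × ℕ // x ∈ pos24} := ⟨ptab e, ptab_mem e⟩

/-- The numbering of the positions as an equivalence. -/
def pte : Fin 24 ≃ {x : N6 × ℕ // x ∈ pos24} := Equiv.ofBijective pt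
  ⟨fun e f h => ptab_inj e f (congrArg Subtype.val h), fun x => by
    obtain ⟨e, he⟩ := ptab_surj x.1 x.2
    exact ⟨e, Subtype.ext he⟩⟩

/-- The inclusion of the positions in the extended poset. -/
abbrev emb (e : Fin 24) : Fin 27 := Fin.castLE (by omega) e

/-- Frozen values. -/
def fr (a b : ℕ) (e : Fin 27) : ℤ := if e = 24 then a + b else if e = 25 then a else 0

theorem col_zero_iff : ∀ e : Fin 27, col e = 0 ↔ ¬ e.1 < 24 := by decide
theorem stp_cases : ∀ u v : Fin 27, stp u v → (u.1 < 24 ∧ v.1 < 24) ∨ (u = 24 ∧ v = 0) ∨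
    (u = 9 ∧ v = 25) ∨ (u = 25 ∧ v = 13) ∨ (u = 23 ∧ v = 26) := by decide +kernel

variable {a b : ℕ}

/-- The extended labelling. -/
def CC (t : L6ab a b) (e : Fin 27) : ℤ :=
  if h : e.1 < 24 then (t.1 (pt ⟨e.1, h⟩) : ℤ) else fr a b e

theorem CC_emb (t : L6ab a b) (e : Fin 24) : CC t (emb e) = t.1 (pt e) := by
  unfold CC
  rw [dif_pos (by simp)]
  rfl

theorem CC_fr (t : L6ab a b) (e : Fin 27) (h : col e = 0) : CC t e = fr a b e := by
  unfold CC
  rw [dif_neg ((col_zero_iff e).1 h)]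

theorem exists_emb (e : Fin 27) (h : col e ≠ 0) : ∃ f, emb f = e := by
  have : e.1 < 24 := by by_contra h1; exact h ((col_zero_iff e).2 h1)
  exact ⟨⟨e.1, this⟩, rfl⟩

theorem CC_inj {s t : L6ab a b} (h : CC s = CC t) : s = t := by
  apply Subtype.ext
  funext x
  obtain ⟨e, rfl⟩ := pte.surjective x
  have := congrFun h (emb e)
  rw [CC_emb, CC_emb] at this
  exact_mod_cast this

theorem CC_good (t : L6ab a b) : good (CC t) := by
  intro u v h
  rcases stp_cases u v h with h1 | h1 | h1 | h1 | h1
  · unfold CC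
    rw [dif_pos h1.1, dif_pos h1.2]
    have := t.2.2.1 (pt ⟨v.1, h1.2⟩) (pt ⟨u.1, h1.1⟩) (Relation.ReflTransGen.single ⟨(pt _).2,
      (pt _).2, ?_, ?_⟩)
    · exact_mod_cast this
    · rw [nc_adj]
      change adjC (nc (ptab _).1) (nc (ptab _).1) = true
      rw [← ptab_col, ← ptab_col]
      exact h.1
    · have h2 := h.2
      have h3 := ptab_rnk ⟨u.1, h1.1⟩
      have h4 := ptab_rnk ⟨v.1, h1.2⟩
      change rnk u = _ at h3
      change rnk v = _ at h4
      change (ptab ⟨v.1, h1.2⟩).2 = (ptab ⟨u.1, h1.1⟩).2 + 1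
      omega
  · obtain ⟨rfl, rfl⟩ := h1
    rw [CC_fr t 24 (by decide), show (0 : Fin 27) = emb 0 from rfl, CC_emb]
    have := t.2.1 (pt 0)
    simp only [fr, if_true]
    exact_mod_cast this
  · obtain ⟨rfl, rfl⟩ := h1
    rw [CC_fr t 25 (by decide), show (9 : Fin 27) = emb 9 from rfl, CC_emb]
    have := t.2.2.2.2
    simp only [fr, if_true]
    exact_mod_cast this
  · obtain ⟨rfl, rfl⟩ := h1
    rw [CC_fr t 25 (by decide), show (13 : Fin 27) = emb 13 from rfl, CC_emb]
    have := t.2.2.2.1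
    simp only [fr, if_true]
    exact_mod_cast this
  · obtain ⟨rfl, rfl⟩ := h1
    rw [CC_fr t 26 (by decide), show (23 : Fin 27) = emb 23 from rfl, CC_emb]
    have h0 : fr a b 26 = 0 := by simp [fr]
    rw [h0]
    positivity

theorem blw_bot : ∀ e : Fin 27, col e ≠ 0 → blw 24 e ∧ blw e 26 := by decide +kernel

theorem exCC {g : Fin 27 → ℤ} (hg : good g) (hf : ∀ e, col e = 0 → g e = fr a b e) :
    ∃ t : L6ab a b, CC t = g := by
  have hemb : ∀ e : Fin 24, col (emb e) ≠ 0 := fun e => by rw [ptab_col]; exact nc_ne _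
  have hnn : ∀ e : Fin 24, 0 ≤ g (emb e) := fun e => by
    have := good_blw hg _ _ _ le_rfl (blw_bot (emb e) (hemb e)).2
    rw [hf 26 (by decide)] at this
    simpa [fr] using this
  have hub : ∀ e : Fin 24, g (emb e) ≤ (a + b : ℕ) := fun e => by
    have := good_blw hg _ _ _ le_rfl (blw_bot (emb e) (hemb e)).1
    rw [hf 24 (by decide)] at this
    simpa [fr] using this
  have hpt : ∀ e, pte.symm (pt e) = e := fun e => pte.symm_apply_apply e
  have hmon : ∀ x y : N6 × ℕ, CL.ple adj6 pos24 y x → ∀ (hx : x ∈ pos24) (hy : y ∈ pos24),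
      g (emb (pte.symm ⟨x, hx⟩)) ≤ g (emb (pte.symm ⟨y, hy⟩)) := by
    intro x y h
    induction h with
    | refl => intro _ _; exact le_rfl
    | tail h1 h2 ih =>
      intro hx hy
      rename_i p q
      refine le_trans ?_ (ih h2.1 hy)
      obtain ⟨e, he⟩ := ptab_surj q h2.2.1
      obtain ⟨f, hf⟩ := ptab_surj p h2.1
      subst he; subst hf
      change g (emb (pte.symm (pt e))) ≤ g (emb (pte.symm (pt f)))
      rw [hpt, hpt]
      apply hg
      refine ⟨?_, ?_⟩
      · rw [ptab_col, ptab_col, ← nc_adj]; exact h2.2.2.1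
      · rw [ptab_rnk, ptab_rnk, h2.2.2.2]
  refine ⟨⟨fun x => (g (emb (pte.symm x))).toNat, ?_, ?_, ?_, ?_⟩, ?_⟩
  · intro x
    have := hub (pte.symm x)
    change (g (emb (pte.symm x))).toNat ≤ a + b
    omega
  · intro x y h
    exact Int.toNat_le_toNat (hmon x.1 y.1 h x.2 y.2)
  · change (g (emb (pte.symm (pt 13)))).toNat ≤ a
    rw [hpt]
    have := hg 25 13 (by decide)
    rw [hf 25 (by decide)] at this
    change g (emb 13) ≤ a at this
    omega
  · change a ≤ (g (emb (pte.symm (pt 9)))).toNat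
    rw [hpt]
    have := hg 9 25 (by decide)
    rw [hf 25 (by decide)] at this
    change a ≤ g (emb 9) at this
    omega
  · funext e
    by_cases he : col e = 0
    · exact (CC_fr _ _ he).trans (hf e he).symm
    · obtain ⟨f, rfl⟩ := exists_emb e he
      refine (CC_emb _ f).trans ?_
      change (((g (emb (pte.symm (pt f)))).toNat : ℕ) : ℤ) = _
      rw [hpt]
      exact Int.toNat_of_nonneg (hnn f)

theorem edge_iff {i : N6} {r s : L6ab a b} :
    CL.edge i r s ↔ ∃ e, col e = nc i ∧ CC s = CC r + Pi.single e 1 := by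
  constructor
  · rintro ⟨x, hx, h1, h2⟩
    obtain ⟨e, rfl⟩ := pte.surjective x
    refine ⟨emb e, ?_, ?_⟩
    · rw [ptab_col, ← hx]; rfl
    · funext f
      by_cases hf : col f = 0
      · have : f ≠ emb e := by
          rintro rfl
          rw [ptab_col] at hf; exact nc_ne _ hf
        rw [Pi.add_apply, Pi.single_eq_of_ne this, CC_fr _ _ hf, CC_fr _ _ hf, add_zero]
      · obtain ⟨f, rfl⟩ := exists_emb f hf
        rw [Pi.add_apply, CC_emb, CC_emb]
        by_cases hfe : f = e
        · subst hfe
          rw [Pi.single_eq_same]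
          exact_mod_cast h1
        · rw [Pi.single_eq_of_ne (fun h => hfe (Fin.castLE_injective _ h)), add_zero]
          exact_mod_cast h2 (pt f) (fun h => hfe (pte.injective h))
  · rintro ⟨e, he, h⟩
    obtain ⟨e, rfl⟩ := exists_emb e (by rw [he]; exact nc_ne i)
    refine ⟨pt e, ?_, ?_, ?_⟩
    · rw [ptab_col] at he; exact nc_inj _ _ he
    · have := congrFun h (emb e)
      rw [Pi.add_apply, CC_emb, CC_emb, Pi.single_eq_same] at this
      exact_mod_cast this
    · intro y hy
      obtain ⟨f, rfl⟩ := pte.surjective y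
      have := congrFun h (emb f)
      rw [Pi.add_apply, CC_emb, CC_emb, Pi.single_eq_of_ne
        (fun h => hy (by rw [Fin.castLE_injective _ h]; rfl)), add_zero] at this
      exact_mod_cast this

theorem rk_eq (t : L6ab a b) : (CL.rk t : ℤ) = ∑ e : Fin 24, CC t (emb e) := by
  simp only [CC_emb]
  unfold CL.rk
  push_cast
  rw [← Finset.univ_eq_attach]
  exact (Equiv.sum_comp pte (fun x => (t.1 x : ℤ))).symm

theorem rk_add {r s : L6ab a b} {e : Fin 27} (he : col e ≠ 0) (h : CC s = CC r + Pi.single e 1) :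
    CL.rk s = CL.rk r + 1 := by
  have h1 := rk_eq s
  rw [h] at h1
  simp only [Pi.add_apply, Finset.sum_add_distrib] at h1
  rw [← rk_eq] at h1
  obtain ⟨e, rfl⟩ := exists_emb e he
  have h2 : ∑ x : Fin 24, (Pi.single (emb e) (1 : ℤ) : Fin 27 → ℤ) (emb x) = 1 := by
    rw [Finset.sum_eq_single e]
    · simp
    · intro x _ hx
      exact Pi.single_eq_of_ne (fun h => hx (Fin.castLE_injective _ h)) _
    · simp
  rw [h2] at h1
  exact_mod_cast h1

theorem edge_rk {i : N6} {r s : L6ab a b} (h : CL.edge i r s) : CL.rk s = CL.rk r + 1 := by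
  obtain ⟨e, he, h⟩ := edge_iff.1 h
  exact rk_add (by rw [he]; exact nc_ne i) h

theorem good_add {g : Fin 27 → ℤ} (hg : good g) {x : Fin 27} (h : ∀ u, stp u x → g x < g u) :
    good (g + Pi.single x 1) := by
  intro u v hs
  have hne : u ≠ v := by rintro rfl; have := hs.2; omega
  have := hg u v hs
  by_cases hu : u = x
  · subst hu
    simp only [Pi.add_apply, Pi.single_eq_same, Pi.single_eq_of_ne hne.symm]; omega
  · by_cases hv : v = x
    · subst hv
      have := h u hs
      simp only [Pi.add_apply, Pi.single_eq_same, Pi.single_eq_of_ne hu]; omega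
    · simp only [Pi.add_apply, Pi.single_eq_of_ne hv, Pi.single_eq_of_ne hu]; omega

theorem good_sub {g : Fin 27 → ℤ} (hg : good g) {x : Fin 27} (h : ∀ v, stp x v → g v < g x) :
    good (g - Pi.single x 1) := by
  intro u v hs
  have hne : u ≠ v := by rintro rfl; have := hs.2; omega
  have := hg u v hs
  by_cases hu : u = x
  · subst hu
    have := h v hs
    simp only [Pi.sub_apply, Pi.single_eq_same, Pi.single_eq_of_ne hne.symm]; omega
  · by_cases hv : v = x
    · subst hv
      simp only [Pi.sub_apply, Pi.single_eq_same, Pi.single_eq_of_ne hu]; omega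
    · simp only [Pi.sub_apply, Pi.single_eq_of_ne hv, Pi.single_eq_of_ne hu]; omega

theorem exists_up (t : L6ab a b) {x : Fin 27} (hx : col x ≠ 0)
    (h : ∀ u, stp u x → CC t x < CC t u) : ∃ s : L6ab a b, CC s = CC t + Pi.single x 1 :=
  exCC (good_add (CC_good t) h) fun e he => by
    have : e ≠ x := by rintro rfl; exact hx he
    rw [Pi.add_apply, Pi.single_eq_of_ne this, CC_fr _ _ he, add_zero]

theorem exists_dn (t : L6ab a b) {x : Fin 27} (hx : col x ≠ 0)
    (h : ∀ v, stp x v → CC t v < CC t x) : ∃ s : L6ab a b, CC s = CC t - Pi.single x 1 :=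
  exCC (good_sub (CC_good t) h) fun e he => by
    have : e ≠ x := by rintro rfl; exact hx he
    rw [Pi.sub_apply, Pi.single_eq_of_ne this, CC_fr _ _ he, sub_zero]

theorem wtM_add (i : Fin 7) (g : Fin 27 → ℤ) (x : Fin 27) :
    wtM i (g + Pi.single x 1) = wtM i g +
      (if col x = i then 2 else if adjC i (col x) = true then -1 else 0) := by
  have key : ∀ (p : Fin 27 → Prop) [DecidablePred p],
      ∑ y with p y, (g + Pi.single x 1 : Fin 27 → ℤ) y = ∑ y with p y, g y + if p x then 1 else 0 := by
    intro p _
    simp only [Pi.add_apply, Finset.sum_add_distrib]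
    congr 1
    rw [Finset.sum_filter, Finset.sum_eq_single x]
    · simp
    · intro y _ hy
      simp [hy]
    · simp
  unfold wtM
  rw [key, key]
  by_cases h : col x = i
  · subst h
    simp [adjC_self]; ring
  · by_cases h2 : adjC i (col x) = true
    · simp [h, h2]; ring
    · simp [h, h2]

/-- First lower neighbour. -/
def dn1 : Fin 27 → Fin 27 :=
  ![24, 0, 1, 2, 2, 3, 4, 5, 5, 7, 7, 9, 10, 11, 11, 13, 14, 15, 16, 17, 17, 19, 21, 22, 24, 9, 23]
/-- Second lower neighbour. -/
def dn2 : Fin 27 → Fin 27 :=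
  ![24, 0, 1, 2, 2, 4, 4, 5, 6, 7, 8, 10, 10, 25, 12, 14, 14, 16, 16, 17, 18, 20, 21, 22, 24, 9, 23]
/-- First upper neighbour. -/
def up1 : Fin 27 → Fin 27 :=
  ![1, 2, 3, 5, 5, 7, 8, 9, 10, 11, 11, 13, 14, 15, 15, 17, 17, 19, 20, 21, 21, 22, 23, 26, 0, 13, 26]
/-- Second upper neighbour. -/
def up2 : Fin 27 → Fin 27 :=
  ![1, 2, 4, 5, 6, 8, 8, 10, 10, 25, 12, 14, 14, 15, 16, 17, 18, 20, 20, 21, 21, 22, 23, 26, 0, 13, 26]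

theorem stp_dn : ∀ u x, col x ≠ 0 → (stp u x ↔ u = dn1 x ∨ u = dn2 x) := by decide +kernel
theorem stp_up : ∀ x v, col x ≠ 0 → (stp x v ↔ v = up1 x ∨ v = up2 x) := by decide +kernel

theorem stp_ne {u v : Fin 27} (h : stp u v) : col u ≠ col v := by
  intro h1
  have := h.1
  rw [h1, adjC_self] at this
  cases this

theorem bal_sum (g : Fin 27 → ℤ) (i : Fin 7) (hi : i ≠ 0) :
    ∑ x with col x = i, (min (g (dn1 x)) (g (dn2 x)) + max (g (up1 x)) (g (up2 x)))
      = ∑ y with adjC i (col y) = true, g y := by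
  have m1 := min_add_max (g 3) (g 4)
  have m2 := min_add_max (g 5) (g 6)
  have m3 := min_add_max (g 7) (g 8)
  have m4 := min_add_max (g 9) (g 10)
  have m5 := min_add_max (g 11) (g 12)
  have m6 := min_add_max (g 11) (g 25)
  have m7 := min_add_max (g 13) (g 14)
  have m8 := min_add_max (g 15) (g 16)
  have m9 := min_add_max (g 17) (g 18)
  have m10 := min_add_max (g 19) (g 20)
  have expd : ∀ (L M : List (Fin 27)), L.Nodup → M.Nodup →
      (Finset.univ.filter fun x => col x = i) = L.toFinset →
      (Finset.univ.filter fun x => adjC i (col x) = true) = M.toFinset →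
      (L.map fun x => min (g (dn1 x)) (g (dn2 x)) + max (g (up1 x)) (g (up2 x))).sum
        = (M.map g).sum →
      ∑ x with col x = i, (min (g (dn1 x)) (g (dn2 x)) + max (g (up1 x)) (g (up2 x)))
      = ∑ y with adjC i (col y) = true, g y := by
    intro L M hL hM h1 h2 h3
    rw [h1, h2, List.sum_toFinset _ hL, List.sum_toFinset _ hM, h3]
  fin_cases i
  · exact absurd rfl hi
  · refine expd [0, 9, 13, 23] [1, 7, 11, 15, 22, 24, 25, 26] (by decide) (by decide) (by decide)
      (by decide) ?_
    simp [dn1, dn2, up1, up2]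
    linarith
  · refine expd [1, 7, 11, 15, 22] [0, 2, 5, 9, 10, 13, 14, 17, 21, 23] (by decide) (by decide)
      (by decide) (by decide) ?_
    simp [dn1, dn2, up1, up2]
    linarith
  · refine expd [2, 5, 10, 14, 17, 21] [1, 3, 4, 7, 8, 11, 12, 15, 16, 19, 20, 22] (by decide)
      (by decide) (by decide) (by decide) ?_
    simp [dn1, dn2, up1, up2]
    linarith
  · refine expd [3, 12, 19] [2, 5, 10, 14, 17, 21] (by decide) (by decide) (by decide)
      (by decide) ?_
    simp [dn1, dn2, up1, up2]
    linarith
  · refine expd [4, 8, 16, 20] [2, 5, 6, 10, 14, 17, 18, 21] (by decide) (by decide) (by decide)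
      (by decide) ?_
    simp [dn1, dn2, up1, up2]
    linarith
  · refine expd [6, 18] [4, 8, 16, 20] (by decide) (by decide) (by decide)
      (by decide) ?_
    simp [dn1, dn2, up1, up2]
    ring

theorem comp_prop {i : N6} {t s : L6ab a b} (h : s ∈ CL.comp i t) :
    (∀ e, col e ≠ nc i → CC s e = CC t e) ∧
      wtM (nc i) (CC s) - wtM (nc i) (CC t) = 2 * ((CL.rk s : ℤ) - CL.rk t) := by
  have hstep : ∀ r s : L6ab a b, CL.edge i r s → (∀ e, col e ≠ nc i → CC s e = CC r e) ∧
      wtM (nc i) (CC s) = wtM (nc i) (CC r) + 2 ∧ (CL.rk s : ℤ) = CL.rk r + 1 := by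
    intro r s h
    have h3 := edge_rk h
    obtain ⟨e, he, h⟩ := edge_iff.1 h
    refine ⟨fun f hf => ?_, ?_, by exact_mod_cast h3⟩
    · have : f ≠ e := by rintro rfl; exact hf he
      rw [h, Pi.add_apply, Pi.single_eq_of_ne this, add_zero]
    · rw [h, wtM_add, if_pos he]
  change Relation.ReflTransGen _ t s at h
  induction h with
  | refl => exact ⟨fun _ _ => rfl, by rw [sub_self, sub_self, mul_zero]⟩
  | tail h1 h2 ih =>
    rcases h2 with h2 | h2
    · obtain ⟨p1, p2, p3⟩ := hstep _ _ h2
      refine ⟨fun e he => (p1 e he).trans (ih.1 e he), ?_⟩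
      have := ih.2
      linarith
    · obtain ⟨p1, p2, p3⟩ := hstep _ _ h2
      refine ⟨fun e he => (p1 e he).symm.trans (ih.1 e he), ?_⟩
      have := ih.2
      linarith

theorem mwt_eq (i : N6) (t : L6ab a b) : CL.mwt i t = wtM (nc i) (CC t) := by
  have hne : (CL.rk '' CL.comp i t).Nonempty := ⟨_, t, Relation.ReflTransGen.refl, rfl⟩
  have hfin : (CL.rk '' CL.comp i t).Finite := (Set.toFinite (CL.comp i t)).image _
  have hbdd : BddAbove (CL.rk '' CL.comp i t) := hfin.bddAbove
  obtain ⟨s1, hs1, e1⟩ := Nat.sSup_mem hne hbdd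
  obtain ⟨s0, hs0, e0⟩ := Nat.sInf_mem hne
  have hmax : ∀ s ∈ CL.comp i t, CL.rk s ≤ CL.rk s1 := fun s hs => by
    rw [e1]; exact le_csSup hbdd ⟨s, hs, rfl⟩
  have hmin : ∀ s ∈ CL.comp i t, CL.rk s0 ≤ CL.rk s := fun s hs => by
    rw [e0]; exact Nat.sInf_le ⟨s, hs, rfl⟩
  obtain ⟨p1, q1⟩ := comp_prop hs1
  obtain ⟨p0, q0⟩ := comp_prop hs0
  have hn : ∀ x, col x = nc i → col x ≠ 0 := fun x hx => by rw [hx]; exact nc_ne i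
  have h1 : ∀ x, col x = nc i → CC s1 x = min (CC t (dn1 x)) (CC t (dn2 x)) := by
    intro x hx
    have d1 : stp (dn1 x) x := (stp_dn _ x (hn x hx)).2 (Or.inl rfl)
    have d2 : stp (dn2 x) x := (stp_dn _ x (hn x hx)).2 (Or.inr rfl)
    rw [← p1 _ (hx ▸ stp_ne d1), ← p1 _ (hx ▸ stp_ne d2)]
    have g1 := CC_good s1 _ _ d1
    have g2 := CC_good s1 _ _ d2
    by_contra hc
    obtain ⟨s, hs⟩ := exists_up s1 (hn x hx) (by
      intro u hu
      rcases (stp_dn u x (hn x hx)).1 hu with rfl | rfl <;> omega)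
    have he : CL.edge i s1 s := edge_iff.2 ⟨x, hx, hs⟩
    have := hmax s (Relation.ReflTransGen.tail hs1 (Or.inl he))
    rw [edge_rk he] at this
    omega
  have h0 : ∀ x, col x = nc i → CC s0 x = max (CC t (up1 x)) (CC t (up2 x)) := by
    intro x hx
    have d1 : stp x (up1 x) := (stp_up x _ (hn x hx)).2 (Or.inl rfl)
    have d2 : stp x (up2 x) := (stp_up x _ (hn x hx)).2 (Or.inr rfl)
    rw [← p0 _ (hx ▸ (stp_ne d1).symm), ← p0 _ (hx ▸ (stp_ne d2).symm)]
    have g1 := CC_good s0 _ _ d1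
    have g2 := CC_good s0 _ _ d2
    by_contra hc
    obtain ⟨s, hs⟩ := exists_dn s0 (hn x hx) (by
      intro u hu
      rcases (stp_up x u (hn x hx)).1 hu with rfl | rfl <;> omega)
    have he : CL.edge i s s0 := edge_iff.2 ⟨x, hx, by rw [hs]; simp⟩
    have := hmin s (Relation.ReflTransGen.tail hs0 (Or.inr he))
    rw [edge_rk he] at this
    omega
  have hsum : wtM (nc i) (CC s1) + wtM (nc i) (CC s0) = 0 := by
    have hb := bal_sum (CC t) (nc i) (nc_ne i)
    rw [Finset.sum_add_distrib] at hb
    have ha : ∀ y, adjC (nc i) (col y) = true → col y ≠ nc i := by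
      intro y hy h; rw [h, adjC_self] at hy; cases hy
    unfold wtM
    rw [Finset.sum_congr rfl fun x hx => h1 x (Finset.mem_filter.1 hx).2,
      Finset.sum_congr rfl fun x hx => h0 x (Finset.mem_filter.1 hx).2,
      Finset.sum_congr rfl fun x hx => p1 x (ha x (Finset.mem_filter.1 hx).2),
      Finset.sum_congr rfl fun x hx => p0 x (ha x (Finset.mem_filter.1 hx).2)]
    linarith
  unfold CL.mwt
  rw [← e1, ← e0]
  linarith

/-- Universal property of the Serre presentation. -/
theorem serre_lift {I L : Type} [LieRing L] [LieAlgebra ℂ L] (A : I → I → ℤ) (X Y H : I → L)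
    (h1 : ∀ i j, ⁅H i, H j⁆ = 0) (h2 : ∀ i, ⁅X i, Y i⁆ = H i) (h3 : ∀ i j, i ≠ j → ⁅X i, Y j⁆ = 0)
    (h4 : ∀ i j, ⁅H i, X j⁆ = A j i • X j) (h5 : ∀ i j, ⁅H i, Y j⁆ = -(A j i • Y j))
    (h6 : ∀ i j, i ≠ j → ((LieAlgebra.ad ℂ L (X i)) ^ (1 - A j i).toNat) (X j) = 0)
    (h7 : ∀ i j, i ≠ j → ((LieAlgebra.ad ℂ L (Y i)) ^ (1 - A j i).toNat) (Y j) = 0) :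
    ∃ φ : CL.gLie A →ₗ⁅ℂ⁆ L, ∀ i, φ (CL.px A i) = X i ∧ φ (CL.py A i) = Y i ∧
      φ (CL.ph A i) = H i := by
  let f : CL.SGen I → L := fun g => match g with
    | .X i => X i
    | .Y i => Y i
    | .H i => H i
  let F : FreeLieAlgebra ℂ (CL.SGen I) →ₗ⁅ℂ⁆ L := FreeLieAlgebra.lift ℂ f
  have fx : ∀ i, F (CL.gx i) = X i := fun i => FreeLieAlgebra.lift_of_apply f (.X i)
  have fy : ∀ i, F (CL.gy i) = Y i := fun i => FreeLieAlgebra.lift_of_apply f (.Y i)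
  have fh : ∀ i, F (CL.gh i) = H i := fun i => FreeLieAlgebra.lift_of_apply f (.H i)
  have fad : ∀ (n : ℕ) (u v : FreeLieAlgebra ℂ (CL.SGen I)),
      F (((LieAlgebra.ad ℂ (FreeLieAlgebra ℂ (CL.SGen I)) u) ^ n) v)
        = ((LieAlgebra.ad ℂ L (F u)) ^ n) (F v) := by
    intro n u v
    induction n with
    | zero => simp
    | succ n ih =>
      rw [pow_succ', pow_succ', Module.End.mul_apply, Module.End.mul_apply, LieAlgebra.ad_apply,
        LieHom.map_lie, ih, LieAlgebra.ad_apply]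
  have hker : CL.serreIdeal A ≤ F.ker := by
    unfold CL.serreIdeal
    rw [LieSubmodule.lieSpan_le]
    intro z hz
    rw [SetLike.mem_coe, LieHom.mem_ker]
    rcases hz with (((((⟨i, j, rfl⟩ | ⟨i, rfl⟩) | ⟨i, j, hij, rfl⟩) | ⟨i, j, rfl⟩) | ⟨i, j, rfl⟩)
      | ⟨i, j, hij, rfl⟩) | ⟨i, j, hij, rfl⟩
    · rw [LieHom.map_lie, fh, fh, h1]
    · rw [map_sub, LieHom.map_lie, fx, fy, fh, h2, sub_self]
    · rw [LieHom.map_lie, fx, fy, h3 i j hij]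
    · rw [map_sub, LieHom.map_lie, map_zsmul, fh, fx, h4, sub_self]
    · rw [map_add, LieHom.map_lie, map_zsmul, fh, fy, h5, neg_add_cancel]
    · rw [fad, fx, fx, h6 i j hij]
    · rw [fad, fy, fy, h7 i j hij]
  let G : CL.gLie A →ₗ[ℂ] L := (CL.serreIdeal A).toSubmodule.liftQ (F : _ →ₗ[ℂ] L) (by
    intro z hz
    exact LieHom.mem_ker.1 (hker hz))
  have hG : ∀ z, G (LieSubmodule.Quotient.mk (N := CL.serreIdeal A) z) = F z := fun z => rfl
  refine ⟨{ G with map_lie' := ?_ }, fun i => ⟨fx i, fy i, fh i⟩⟩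
  intro u v
  obtain ⟨u, rfl⟩ := LieSubmodule.Quotient.surjective_mk' (CL.serreIdeal A) u
  obtain ⟨v, rfl⟩ := LieSubmodule.Quotient.surjective_mk' (CL.serreIdeal A) v
  change G ⁅(LieSubmodule.Quotient.mk (N := CL.serreIdeal A) u : CL.gLie A),
    (LieSubmodule.Quotient.mk (N := CL.serreIdeal A) v : CL.gLie A)⁆ = _
  rw [← LieSubmodule.Quotient.mk_bracket]
  change F ⁅u, v⁆ = ⁅F u, F v⁆
  exact LieHom.map_lie F u v

theorem A6_symm : ∀ i j, A6 i j = A6 j i := by decide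
theorem A6_vals : ∀ i j, i ≠ j → A6 i j = 0 ∨ A6 i j = -1 := by decide
theorem A6_diag : ∀ i, A6 i i = 2 := by decide

section mat
variable {n : Type} [Fintype n] [DecidableEq n]

open scoped ComplexOrder in
theorem tr_zero (z Y w : Matrix n n ℂ) (hz : ⁅Y, z⁆ = 0) (hw : z.conjTranspose = ⁅Y, w⁆) :
    z = 0 := by
  rw [← Matrix.trace_conjTranspose_mul_self_eq_zero_iff, hw, Ring.lie_def]
  rw [Ring.lie_def, sub_eq_zero] at hz
  rw [sub_mul, Matrix.trace_sub, mul_assoc w, hz, Matrix.mul_assoc Y w z, Matrix.trace_mul_comm Y,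
    mul_assoc, sub_self]

theorem conj_lie (x y : Matrix n n ℂ) :
    ⁅x, y⁆.conjTranspose = ⁅y.conjTranspose, x.conjTranspose⁆ := by
  rw [Ring.lie_def, Ring.lie_def, Matrix.conjTranspose_sub, Matrix.conjTranspose_mul,
    Matrix.conjTranspose_mul]

theorem serre_mat (X Y H : N6 → Matrix n n ℂ) (hXY : ∀ i, (X i).conjTranspose = Y i)
    (h2 : ∀ i, ⁅X i, Y i⁆ = H i) (h3 : ∀ i j, i ≠ j → ⁅X i, Y j⁆ = 0)
    (h4 : ∀ i j, ⁅H i, X j⁆ = A6 j i • X j) (i j : N6) (hij : i ≠ j) :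
    ((LieAlgebra.ad ℂ (Matrix n n ℂ) (X i)) ^ (1 - A6 j i).toNat) (X j) = 0 ∧
    ((LieAlgebra.ad ℂ (Matrix n n ℂ) (Y i)) ^ (1 - A6 j i).toNat) (Y j) = 0 := by
  have e1 : ⁅Y i, X i⁆ = -H i := by rw [← lie_skew, h2]
  have e2 : ⁅Y i, X j⁆ = 0 := by rw [← lie_skew, h3 j i hij.symm, neg_zero]
  have e3 : ⁅Y i, ⁅X i, X j⁆⁆ = -(A6 j i • X j) := by
    rw [leibniz_lie, e1, e2, lie_zero, add_zero, neg_lie, h4]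
  have hYX : ∀ i, (Y i).conjTranspose = X i := fun i => by
    rw [← hXY, Matrix.conjTranspose_conjTranspose]
  rcases A6_vals j i hij.symm with hA | hA
  · have z0 : ⁅X i, X j⁆ = 0 := by
      apply tr_zero _ (Y i) (-Y j)
      · rw [e3, hA]; simp
      · rw [conj_lie, hXY, hXY, ← lie_skew, lie_neg]
    have y0 : ⁅Y i, Y j⁆ = 0 := by
      rw [← hXY, ← hXY, ← conj_lie, ← lie_skew, z0]; simp
    rw [hA]
    simpa using ⟨z0, y0⟩
  · have z0 : ⁅X i, ⁅X i, X j⁆⁆ = 0 := by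
      apply tr_zero _ (Y i) ⁅Y i, Y j⁆
      · rw [leibniz_lie (Y i), e1, e3, hA, neg_lie, leibniz_lie (H i), h4, h4, hA, A6_diag]
        simp only [two_smul, add_lie, neg_smul, one_smul, neg_neg, lie_neg]
        abel
      · rw [conj_lie, conj_lie, hXY, hXY, ← lie_skew, ← lie_skew (Y i) (Y j), lie_neg]
    have y0 : ⁅Y i, ⁅Y i, Y j⁆⁆ = 0 := by
      have := congrArg Matrix.conjTranspose z0
      rw [conj_lie, conj_lie, hXY, hXY, Matrix.conjTranspose_zero] at this
      rw [← lie_skew, ← lie_skew (Y i) (Y j), neg_lie, neg_neg, this]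
    rw [hA]
    simpa [pow_succ] using ⟨z0, y0⟩

theorem rep_of_mat (X Y H : N6 → Matrix n n ℂ) (hXY : ∀ i, (X i).conjTranspose = Y i)
    (hH : ∀ i, (H i).conjTranspose = H i)
    (h1 : ∀ i j, ⁅H i, H j⁆ = 0)
    (h2 : ∀ i, ⁅X i, Y i⁆ = H i) (h3 : ∀ i j, i ≠ j → ⁅X i, Y j⁆ = 0)
    (h4 : ∀ i j, ⁅H i, X j⁆ = A6 j i • X j) :
    ∃ φ : CL.gLie A6 →ₗ⁅ℂ⁆ Module.End ℂ (n → ℂ), ∀ i, φ (CL.px A6 i) = Matrix.mulVecLin (X i) ∧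
      φ (CL.py A6 i) = Matrix.mulVecLin (Y i) ∧ φ (CL.ph A6 i) = Matrix.mulVecLin (H i) := by
  have h5 : ∀ i j, ⁅H i, Y j⁆ = -(A6 j i • Y j) := by
    intro i j
    have := congrArg Matrix.conjTranspose (h4 i j)
    rw [conj_lie, hXY, hH, Matrix.conjTranspose_smul, hXY] at this
    rw [← lie_skew, this]; simp
  obtain ⟨ψ, hψ⟩ := serre_lift A6 X Y H h1 h2 h3 h4 h5
    (fun i j hij => (serre_mat X Y H hXY h2 h3 h4 i j hij).1)
    (fun i j hij => (serre_mat X Y H hXY h2 h3 h4 i j hij).2)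
  refine ⟨((Matrix.toLinAlgEquiv' : Matrix n n ℂ ≃ₐ[ℂ] _).toAlgHom.toLieHom).comp ψ, fun i => ?_⟩
  obtain ⟨p, q, r⟩ := hψ i
  refine ⟨?_, ?_, ?_⟩
  · rw [LieHom.comp_apply, p]; rfl
  · rw [LieHom.comp_apply, q]; rfl
  · rw [LieHom.comp_apply, r]; rfl
end mat

/-- Square roots of rationals as complex numbers. -/
def sqR (q : ℚ) : ℂ := ((Real.sqrt (q : ℝ) : ℝ) : ℂ)

theorem sqR_mul {p q : ℚ} (hp : 0 ≤ p) : sqR p * sqR q = sqR (p * q) := by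
  unfold sqR
  rw [← Complex.ofReal_mul, ← Real.sqrt_mul (by exact_mod_cast hp)]
  push_cast
  rfl

theorem sqR_self {p : ℚ} (hp : 0 ≤ p) : sqR p * sqR p = (p : ℂ) := by
  unfold sqR
  rw [← Complex.ofReal_mul, Real.mul_self_sqrt (by exact_mod_cast hp)]
  simp

/-- The part of the raising operator acting at the position `e`. -/
def Em (a b : ℕ) (e : Fin 27) : Matrix (L6ab a b) (L6ab a b) ℂ := fun s r =>
  if CC s = CC r + Pi.single e 1 then sqR (cF (CC r) e) else 0

theorem up_col {r s : L6ab a b} {e : Fin 27} (h : CC s = CC r + Pi.single e 1) : col e ≠ 0 := by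
  intro h0
  have := congrFun h e
  rw [Pi.add_apply, CC_fr _ _ h0, CC_fr _ _ h0, Pi.single_eq_same] at this
  omega

theorem cF_up {r s : L6ab a b} {e : Fin 27} (h : CC s = CC r + Pi.single e 1) :
    0 < cF (CC r) e :=
  cF_pos (up_col h) (CC_good r) (h ▸ CC_good s)

theorem Em_apply {r s : L6ab a b} {e : Fin 27} (h : CC s = CC r + Pi.single e 1) :
    Em a b e s r = sqR (cF (CC r) e) := if_pos h

theorem Em_zero {r s : L6ab a b} {e : Fin 27} (h : ¬ CC s = CC r + Pi.single e 1) :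
    Em a b e s r = 0 := if_neg h

theorem Em_comm {e f : Fin 27} (hef : e ≠ f) :
    Em a b e * (Em a b f).transpose = (Em a b f).transpose * Em a b e := by
  ext s u
  rw [Matrix.mul_apply, Matrix.mul_apply]
  simp only [Matrix.transpose_apply]
  by_cases h : CC s + Pi.single f 1 = CC u + Pi.single e 1
  · have hs : ∀ x, CC s x = CC u x + (if x = e then 1 else 0) - (if x = f then 1 else 0) := by
      intro x
      have := congrFun h x
      simp only [Pi.add_apply, Pi.single_apply] at this
      omega
    obtain ⟨r, hr⟩ : ∃ r : L6ab a b, CC r = fun x => min (CC s x) (CC u x) := by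
      apply exCC
      · intro p q hpq
        exact min_le_min (CC_good s p q hpq) (CC_good u p q hpq)
      · intro x hx
        simp only [CC_fr _ _ hx, min_self]
    obtain ⟨w, hw⟩ : ∃ w : L6ab a b, CC w = fun x => max (CC s x) (CC u x) := by
      apply exCC
      · intro p q hpq
        exact max_le_max (CC_good s p q hpq) (CC_good u p q hpq)
      · intro x hx
        simp only [CC_fr _ _ hx, max_self]
    have r1 : CC s = CC r + Pi.single e 1 := by
      funext x
      rw [hr, Pi.add_apply, Pi.single_apply]
      have := hs x
      by_cases h1 : x = e
      · have h2 : x ≠ f := fun h => hef (h1 ▸ h)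
        simp only [h1, if_true, hef, if_false] at this ⊢; omega
      · by_cases h2 : x = f
        · simp only [h2, if_true, if_false, hef.symm] at this ⊢; omega
        · simp only [h1, h2, if_false] at this ⊢; omega
    have r2 : CC u = CC r + Pi.single f 1 := by
      rw [r1] at h
      apply add_right_cancel (b := (Pi.single e 1 : Fin 27 → ℤ))
      rw [← h]; abel
    have w1 : CC w = CC s + Pi.single f 1 := by
      funext x
      rw [hw, Pi.add_apply, Pi.single_apply]
      have := hs x
      by_cases h1 : x = e
      · have h2 : x ≠ f := fun h => hef (h1 ▸ h)
        simp only [h1, if_true, hef, if_false] at this ⊢; omega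
      · by_cases h2 : x = f
        · simp only [h2, if_true, if_false, hef.symm] at this ⊢; omega
        · simp only [h1, h2, if_false] at this ⊢; omega
    have w2 : CC w = CC u + Pi.single e 1 := by rw [w1, h]
    rw [Finset.sum_eq_single r, Finset.sum_eq_single w, Em_apply r1, Em_apply r2, Em_apply w1,
      Em_apply w2, sqR_mul (cF_up r1).le, sqR_mul (cF_up w1).le, r1, r2, diamond _ hef]
    · intro x _ hx
      rw [Em_zero, zero_mul]
      intro h1
      exact hx (CC_inj (h1.trans w1.symm))
    · simp
    · intro x _ hx
      rw [Em_zero, zero_mul]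
      intro h1
      exact hx (CC_inj (add_right_cancel (h1.symm.trans r1)))
    · simp
  · rw [Finset.sum_eq_zero, Finset.sum_eq_zero]
    · intro w _
      by_cases h1 : CC w = CC s + Pi.single f 1
      · rw [Em_zero (r := u), mul_zero]
        intro h2
        exact h (h1.symm.trans h2)
      · rw [Em_zero h1, zero_mul]
    · intro r _
      by_cases h1 : CC s = CC r + Pi.single e 1
      · rw [Em_zero (s := u), mul_zero]
        intro h2
        apply h
        rw [h1, h2]; abel
      · rw [Em_zero h1, zero_mul]

theorem Em_dn {e : Fin 27} (he : col e ≠ 0) : Em a b e * (Em a b e).transpose =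
    Matrix.diagonal fun s => ((cF (CC s - Pi.single e 1) e : ℚ) : ℂ) := by
  ext s u
  rw [Matrix.mul_apply]
  simp only [Matrix.transpose_apply]
  by_cases hsu : s = u
  · subst hsu
    rw [Matrix.diagonal_apply_eq]
    by_cases h : ∃ r : L6ab a b, CC r = CC s - Pi.single e 1
    · obtain ⟨r, hr⟩ := h
      have hr' : CC s = CC r + Pi.single e 1 := by rw [hr]; abel
      rw [Finset.sum_eq_single r, Em_apply hr', sqR_self (cF_up hr').le, hr]
      · intro x _ hx
        rw [Em_zero, zero_mul]
        intro h1
        exact hx (CC_inj (add_right_cancel (h1.symm.trans hr')))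
      · simp
    · rw [Finset.sum_eq_zero]
      · have : ∃ v, stp e v ∧ CC s e ≤ CC s v := by
          by_contra hc
          push Not at hc
          exact h (exists_dn s he hc)
        obtain ⟨v, hv, hle⟩ := this
        rw [cF_zero_dn hv (le_antisymm hle (CC_good s _ _ hv))]
        simp
      · intro r _
        rw [Em_zero, zero_mul]
        intro h1
        exact h ⟨r, by rw [h1]; abel⟩
  · rw [Matrix.diagonal_apply_ne _ hsu, Finset.sum_eq_zero]
    intro r _
    by_cases h1 : CC s = CC r + Pi.single e 1
    · rw [Em_zero (s := u), mul_zero]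
      intro h2
      exact hsu (CC_inj (h1.trans h2.symm))
    · rw [Em_zero h1, zero_mul]

theorem Em_up {e : Fin 27} (he : col e ≠ 0) : (Em a b e).transpose * Em a b e =
    Matrix.diagonal fun s => ((cF (CC s) e : ℚ) : ℂ) := by
  ext s u
  rw [Matrix.mul_apply]
  simp only [Matrix.transpose_apply]
  by_cases hsu : s = u
  · subst hsu
    rw [Matrix.diagonal_apply_eq]
    by_cases h : ∃ r : L6ab a b, CC r = CC s + Pi.single e 1
    · obtain ⟨r, hr⟩ := h
      rw [Finset.sum_eq_single r, Em_apply hr, sqR_self (cF_up hr).le]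
      · intro x _ hx
        rw [Em_zero, zero_mul]
        intro h1
        exact hx (CC_inj (h1.trans hr.symm))
      · simp
    · rw [Finset.sum_eq_zero]
      · have : ∃ v, stp v e ∧ CC s v ≤ CC s e := by
          by_contra hc
          push Not at hc
          exact h (exists_up s he hc)
        obtain ⟨v, hv, hle⟩ := this
        rw [cF_zero_up hv (le_antisymm (CC_good s _ _ hv) hle)]
        simp
      · intro r _
        rw [Em_zero, zero_mul]
        intro h1
        exact h ⟨r, h1⟩
  · rw [Matrix.diagonal_apply_ne _ hsu, Finset.sum_eq_zero]
    intro r _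
    by_cases h1 : CC r = CC s + Pi.single e 1
    · rw [Em_zero (r := u), mul_zero]
      intro h2
      exact hsu (CC_inj (add_right_cancel (h1.symm.trans h2)))
    · rw [Em_zero h1, zero_mul]

/-- The matrix of the raising operator. -/
def XM (a b : ℕ) (i : N6) : Matrix (L6ab a b) (L6ab a b) ℂ := ∑ e with col e = nc i, Em a b e
/-- The matrix of the diagonal operator. -/
def HM (a b : ℕ) (i : N6) : Matrix (L6ab a b) (L6ab a b) ℂ :=
  Matrix.diagonal fun t => ((wtM (nc i) (CC t) : ℤ) : ℂ)

theorem XM_lie (i j : N6) : ⁅XM a b i, (XM a b j).transpose⁆ =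
    ∑ e with col e = nc i, ∑ f with col f = nc j,
      (Em a b e * (Em a b f).transpose - (Em a b f).transpose * Em a b e) := by
  unfold XM
  rw [Ring.lie_def, Matrix.transpose_sum, Finset.sum_mul_sum, Finset.sum_mul_sum]
  rw [Finset.sum_comm (s := Finset.univ.filter fun f => col f = nc j)]
  simp only [Finset.sum_sub_distrib]

theorem XM_ne (i j : N6) (hij : i ≠ j) : ⁅XM a b i, (XM a b j).transpose⁆ = 0 := by
  rw [XM_lie]
  refine Finset.sum_eq_zero fun e he => Finset.sum_eq_zero fun f hf => ?_
  rw [Em_comm, sub_self]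
  rintro rfl
  exact hij (nc_inj _ _ ((Finset.mem_filter.1 he).2.symm.trans (Finset.mem_filter.1 hf).2))

theorem XM_eq (i : N6) : ⁅XM a b i, (XM a b i).transpose⁆ = HM a b i := by
  rw [XM_lie]
  have h1 : ∀ e ∈ Finset.univ.filter (fun e => col e = nc i), ∑ f with col f = nc i,
      (Em a b e * (Em a b f).transpose - (Em a b f).transpose * Em a b e) =
      Matrix.diagonal fun s => (((cF (CC s - Pi.single e 1) e - cF (CC s) e : ℚ)) : ℂ) := by
    intro e he
    have he0 : col e ≠ 0 := by rw [(Finset.mem_filter.1 he).2]; exact nc_ne i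
    rw [Finset.sum_eq_single e, Em_dn he0, Em_up he0, Matrix.diagonal_sub]
    · simp
    · intro f _ hf
      rw [Em_comm hf.symm, sub_self]
    · intro h; exact absurd he h
  rw [Finset.sum_congr rfl h1]
  ext s u
  rw [Matrix.sum_apply, HM]
  by_cases hsu : s = u
  · subst hsu
    simp only [Matrix.diagonal_apply_eq]
    rw [← Rat.cast_sum, crossing (CC_good s) _ (nc_ne i)]
    simp
  · simp only [Matrix.diagonal_apply_ne _ hsu, Finset.sum_const_zero]

theorem HM_lie (i j : N6) : ⁅HM a b i, XM a b j⁆ = A6 j i • XM a b j := by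
  have hA : ∀ i j, (if nc j = nc i then (2 : ℤ) else if adjC (nc i) (nc j) = true then -1 else 0)
      = A6 j i := by decide
  unfold XM
  rw [Ring.lie_def, Finset.mul_sum, Finset.sum_mul, ← Finset.sum_sub_distrib, Finset.smul_sum]
  refine Finset.sum_congr rfl fun e he => ?_
  have he := (Finset.mem_filter.1 he).2
  ext s r
  rw [HM, Matrix.sub_apply, Matrix.diagonal_mul, Matrix.mul_diagonal, Matrix.smul_apply]
  by_cases h : CC s = CC r + Pi.single e 1
  · have h2 : wtM (nc i) (CC s) = wtM (nc i) (CC r) + A6 j i := by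
      rw [h, wtM_add, he, hA]
    rw [h2]
    push_cast
    simp only [zsmul_eq_mul]
    ring
  · rw [Em_zero h]; simp

/-- The edge coefficients. -/
def Pc (a b : ℕ) (r s : L6ab a b) : ℚ := ∑ e, if CC s = CC r + Pi.single e 1 then cF (CC r) e else 0

theorem single_inj {e f : Fin 27} (h : (Pi.single e 1 : Fin 27 → ℤ) = Pi.single f 1) : e = f := by
  by_contra hc
  have := congrFun h e
  rw [Pi.single_eq_same, Pi.single_eq_of_ne hc] at this
  exact one_ne_zero this

theorem Pc_eq {r s : L6ab a b} {e : Fin 27} (h : CC s = CC r + Pi.single e 1) :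
    Pc a b r s = cF (CC r) e := by
  unfold Pc
  rw [Finset.sum_eq_single e, if_pos h]
  · intro f _ hf
    rw [if_neg]
    intro h1
    exact hf (single_inj (add_left_cancel (h1.symm.trans h)))
  · simp

theorem XM_entry (i : N6) (s r : L6ab a b) :
    XM a b i s r = if CL.edge i r s then (↑(Real.sqrt (Pc a b r s)) : ℂ) else 0 := by
  unfold XM
  rw [Matrix.sum_apply]
  split_ifs with h
  · obtain ⟨e, he, h⟩ := edge_iff.1 h
    rw [Finset.sum_eq_single e, Em_apply h, Pc_eq h]
    · rfl
    · intro f _ hf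
      rw [Em_zero]
      intro h1
      exact hf (single_inj (add_left_cancel (h1.symm.trans h)))
    · intro h1
      exact absurd (by simpa using he) h1
  · refine Finset.sum_eq_zero fun e he => Em_zero fun h1 => h ?_
    exact edge_iff.2 ⟨e, (Finset.mem_filter.1 he).2, h1⟩

theorem exist_part (a b : ℕ) :
    (∀ r s : L6ab a b, (∃ i, CL.edge i r s) → 0 < Pc a b r s) ∧
      (∃ φ : CL.gLie A6 →ₗ⁅ℂ⁆ Module.End ℂ (L6ab a b → ℂ),
        ∀ i : N6, φ (CL.px A6 i) = CL.opX (Pc a b) i ∧ φ (CL.py A6 i) = CL.opY (Pc a b) i ∧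
          φ (CL.ph A6 i) = CL.opH i) := by
  refine ⟨?_, ?_⟩
  · rintro r s ⟨i, h⟩
    obtain ⟨e, he, h⟩ := edge_iff.1 h
    rw [Pc_eq h]
    exact cF_up h
  obtain ⟨φ, hφ⟩ := rep_of_mat (XM a b) (fun i => (XM a b i).transpose) (HM a b) (by
      intro i
      ext s r
      rw [Matrix.conjTranspose_apply, Matrix.transpose_apply, XM_entry]
      split_ifs
      · exact Complex.conj_ofReal _
      · exact star_zero _)
    (by
      intro i
      rw [HM, Matrix.diagonal_conjTranspose]
      congr 1
      funext t
      simp)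
    (by
      intro i j
      rw [HM, HM, Ring.lie_def, Matrix.diagonal_mul_diagonal, Matrix.diagonal_mul_diagonal]
      rw [sub_eq_zero]
      congr 1
      funext t
      ring) XM_eq XM_ne HM_lie
  refine ⟨φ, fun i => ?_⟩
  obtain ⟨p, q, r⟩ := hφ i
  refine ⟨p.trans ?_, q.trans ?_, r.trans ?_⟩
  · unfold CL.opX
    congr 1
    ext s r
    exact XM_entry i s r
  · unfold CL.opY
    congr 1
    ext r s
    exact XM_entry i s r
  · unfold CL.opH HM
    simp only [mwt_eq]

/-- Classes of positions with constant value in the maximal element. -/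
def cls : Fin 27 → ℕ :=
  ![2, 2, 2, 2, 2, 2, 2, 2, 2, 2, 2, 2, 2, 1, 2, 1, 2, 1, 2, 1, 1, 1, 1, 1, 2, 1, 0]

/-- The labelling of the maximal element. -/
def tm (a b : ℕ) (e : Fin 27) : ℤ :=
  ((a : ℤ) + b) * (if cls e = 2 then 1 else 0) + a * (if cls e = 1 then 1 else 0)

theorem tm_cls {e f : Fin 27} (h : cls e = cls f) : tm a b e = tm a b f := by
  unfold tm; rw [h]

theorem cls_cases : ∀ e, cls e = 2 ∨ cls e = 1 ∨ cls e = 0 := by decide +kernel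

theorem tm_mono {e f : Fin 27} (h : cls e ≤ cls f) : tm a b e ≤ tm a b f := by
  unfold tm
  rcases cls_cases e with h1 | h1 | h1 <;> rcases cls_cases f with h2 | h2 | h2 <;>
    rw [h1, h2] at h <;> simp [h1, h2] at h ⊢ <;> omega

theorem cls_stp : ∀ u v, stp u v → cls v ≤ cls u := by decide +kernel
theorem cls_blw : ∀ e, col e ≠ 0 → (cls e = 2 ∧ blw 24 e) ∨ (cls e = 1 ∧ blw 25 e) := by
  decide +kernel

theorem tm_fr : ∀ e, col e = 0 → tm a b e = fr a b e := by
  intro e he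
  have : ∀ e, col e = 0 → e = 24 ∨ e = 25 ∨ e = 26 := by decide
  rcases this e he with rfl | rfl | rfl <;> simp [tm, fr, cls]

theorem exists_tmax (a b : ℕ) : ∃ t : L6ab a b, CC t = tm a b :=
  exCC (fun u v h => tm_mono (cls_stp u v h)) tm_fr

theorem le_tm (t : L6ab a b) (e : Fin 27) : CC t e ≤ tm a b e := by
  by_cases he : col e = 0
  · rw [CC_fr _ _ he, tm_fr e he]
  rcases cls_blw e he with ⟨h1, h2⟩ | ⟨h1, h2⟩
  · have := good_blw (CC_good t) _ _ _ le_rfl h2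
    rw [CC_fr _ 24 (by decide), ← tm_fr 24 (by decide)] at this
    rwa [tm_cls (e := e) (f := 24) (by rw [h1]; rfl)]
  · have := good_blw (CC_good t) _ _ _ le_rfl h2
    rw [CC_fr _ 25 (by decide), ← tm_fr 25 (by decide)] at this
    rwa [tm_cls (e := e) (f := 25) (by rw [h1]; rfl)]

theorem cls_key : ∀ x e, col x ≠ 0 → col x = col e → x < e →
    ∃ v, stp x v ∧ (v < e ∨ col v = 0) ∧ cls v = cls x := by decide +kernel

theorem stp_lt : ∀ u v, stp u v → col u ≠ 0 → u < v ∨ col v = 0 := by decide +kernel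

theorem wtM_lin (i : Fin 7) (p q : ℤ) (f g : Fin 27 → ℤ) :
    wtM i (fun e => p * f e + q * g e) = p * wtM i f + q * wtM i g := by
  unfold wtM
  simp only [Finset.sum_add_distrib, ← Finset.mul_sum]
  ring

theorem wt_tm (i : N6) : wtM (nc i) (tm a b) = if i = m1 then (a : ℤ) else if i = m6 then b else 0 := by
  have h1 : ∀ i : N6, wtM (nc i) (fun e => if cls e = 2 then 1 else 0) =
      if i = m1 then 0 else if i = m6 then 1 else 0 := by decide +kernel
  have h2 : ∀ i : N6, wtM (nc i) (fun e => if cls e = 1 then 1 else 0) =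
      if i = m1 then 1 else if i = m6 then -1 else 0 := by decide +kernel
  have h3 := wtM_lin (nc i) ((a : ℤ) + b) a (fun e => if cls e = 2 then 1 else 0)
    (fun e => if cls e = 1 then 1 else 0)
  rw [h1, h2] at h3
  refine h3.trans ?_
  split_ifs <;> ring

section irr
variable (P : L6ab a b → L6ab a b → ℚ)

theorem opX_apply (i : N6) (v : L6ab a b → ℂ) (s : L6ab a b) : CL.opX P i v s =
    ∑ r, (if CL.edge i r s then (↑(Real.sqrt (P r s)) : ℂ) else 0) * v r := rfl

theorem opY_apply (i : N6) (v : L6ab a b → ℂ) (r : L6ab a b) : CL.opY P i v r =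
    ∑ s, (if CL.edge i r s then (↑(Real.sqrt (P r s)) : ℂ) else 0) * v s := rfl

theorem no_edge {i : N6} {t s : L6ab a b} (ht : CC t = tm a b) : ¬ CL.edge i t s := by
  intro h
  obtain ⟨e, _, h⟩ := edge_iff.1 h
  have h1 := le_tm s e
  rw [h, ht, Pi.add_apply, Pi.single_eq_same] at h1
  omega

theorem opX_tmax {t : L6ab a b} (ht : CC t = tm a b) (i : N6) :
    CL.opX P i (Pi.single t 1 : L6ab a b → ℂ) = 0 := by
  funext s
  rw [opX_apply]
  refine Finset.sum_eq_zero fun r _ => ?_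
  by_cases hr : r = t
  · subst hr
    rw [if_neg (no_edge ht), zero_mul]
  · rw [Pi.single_eq_of_ne hr, mul_zero]

theorem ker_tmax (hP : ∀ r s : L6ab a b, (∃ i, CL.edge i r s) → 0 < P r s)
    {v : L6ab a b → ℂ} (hv : v ≠ 0) (hX : ∀ i, CL.opX P i v = 0) {tx : L6ab a b}
    (htx : CC tx = tm a b) : v tx ≠ 0 := by
  classical
  obtain ⟨t0, ht0⟩ : ∃ t, v t ≠ 0 := by
    by_contra hc
    push Not at hc
    exact hv (funext hc)
  obtain ⟨t, ht, hmax⟩ := Finset.exists_max_image (Finset.univ.filter fun t => v t ≠ 0)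
    (fun t => toLex (CC t)) ⟨t0, by simpa using ht0⟩
  have htv : v t ≠ 0 := (Finset.mem_filter.1 ht).2
  have hraise : ∀ e, col e ≠ 0 → (∀ u, stp u e → CC t e < CC t u) →
      ∃ x, x < e ∧ col x = col e ∧ ∀ w, stp x w → CC t w < CC t x := by
    intro e he hup
    obtain ⟨s, hs⟩ := exists_up t he hup
    obtain ⟨i, hi⟩ := nc_surj (col e) he
    have hedge : CL.edge i t s := edge_iff.2 ⟨e, hi.symm, hs⟩
    have h0 := congrFun (hX i) s
    rw [opX_apply, Pi.zero_apply] at h0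
    obtain ⟨r, hrt, hr⟩ : ∃ r, r ≠ t ∧
        (if CL.edge i r s then (↑(Real.sqrt (P r s)) : ℂ) else 0) * v r ≠ 0 := by
      by_contra hc
      push Not at hc
      rw [Finset.sum_eq_single t (fun r _ h => hc r h) (by simp), if_pos hedge] at h0
      rcases mul_eq_zero.1 h0 with h | h
      · have h1 : 0 < Real.sqrt (P t s : ℝ) :=
          Real.sqrt_pos.2 (by exact_mod_cast hP t s ⟨i, hedge⟩)
        exact h1.ne' (by exact_mod_cast h)
      · exact htv h
    have hrv : v r ≠ 0 := right_ne_zero_of_mul hr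
    have hre : CL.edge i r s := by
      by_contra hc
      rw [if_neg hc, zero_mul] at hr
      exact hr rfl
    obtain ⟨x, hx, hxs⟩ := edge_iff.1 hre
    have hcc : ∀ y, CC r y + (Pi.single x 1 : Fin 27 → ℤ) y
        = CC t y + (Pi.single e 1 : Fin 27 → ℤ) y := fun y =>
      congrFun (hxs.symm.trans hs) y
    have hxe : x ≠ e := by
      rintro rfl
      exact hrt (CC_inj (add_right_cancel (hxs.symm.trans hs)))
    have hle := hmax r (by simpa using hrv)
    have hlt : x < e := by
      by_contra hc
      have hex : e < x := lt_of_le_of_ne (not_lt.1 hc) hxe.symm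
      refine absurd hle (not_le.2 ?_)
      refine ⟨e, fun y hy => ?_, ?_⟩
      · have := hcc y
        rw [Pi.single_eq_of_ne (hy.trans hex).ne, Pi.single_eq_of_ne hy.ne] at this
        change CC t y = CC r y
        omega
      · have := hcc e
        rw [Pi.single_eq_of_ne hex.ne, Pi.single_eq_same] at this
        change CC t e < CC r e
        omega
    refine ⟨x, hlt, hx.trans hi, fun w hw => ?_⟩
    have hwx : w ≠ x := by rintro rfl; have := hw.2; omega
    have hwe : w ≠ e := by
      rintro rfl
      exact stp_ne hw (hx.trans hi)
    have g1 := CC_good r x w hw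
    have c1 := hcc w
    have c2 := hcc x
    rw [Pi.single_eq_of_ne hwx, Pi.single_eq_of_ne hwe] at c1
    rw [Pi.single_eq_same, Pi.single_eq_of_ne hxe] at c2
    omega
  have hall : ∀ n : ℕ, ∀ e : Fin 27, e.1 < n → CC t e = tm a b e := by
    intro n
    induction n with
    | zero => intro e he; omega
    | succ n ih =>
      intro e he
      by_cases hce : col e = 0
      · rw [CC_fr _ _ hce, tm_fr e hce]
      have hval : ∀ u, u < e ∨ col u = 0 → CC t u = tm a b u := by
        rintro u (hu | hu)
        · exact ih u (by have : u.1 < e.1 := hu; omega)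
        · rw [CC_fr _ _ hu, tm_fr u hu]
      by_contra hne
      have hlt : CC t e < tm a b e := lt_of_le_of_ne (le_tm t e) hne
      obtain ⟨x, hxe, hc, hw⟩ := hraise e hce (by
        intro u hu
        have : u < e ∨ col u = 0 := by
          by_cases h : col u = 0
          · exact Or.inr h
          · rcases stp_lt u e hu h with h1 | h1
            · exact Or.inl h1
            · exact absurd h1 hce
        rw [hval u this]
        exact lt_of_lt_of_le hlt (tm_mono (cls_stp u e hu)))
      obtain ⟨w, h1, h2, h3⟩ := cls_key x e (hc ▸ hce) hc hxe
      have := hw w h1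
      rw [hval w h2, hval x (Or.inl hxe), tm_cls h3] at this
      exact lt_irrefl _ this
  have : t = tx := CC_inj ((funext fun e => hall 27 e e.2).trans htx.symm)
  exact this ▸ htv

theorem tmax_mem (hP : ∀ r s : L6ab a b, (∃ i, CL.edge i r s) → 0 < P r s)
    {tx : L6ab a b} (htx : CC tx = tm a b) (U : Submodule ℂ (L6ab a b → ℂ)) (hU : U ≠ ⊥)
    (hinv : ∀ i, ∀ v ∈ U, CL.opX P i v ∈ U) : (Pi.single tx 1 : L6ab a b → ℂ) ∈ U := by
  obtain ⟨w, hwU, hw0, hwX⟩ : ∃ w ∈ U, w ≠ 0 ∧ ∀ i, CL.opX P i w = 0 := by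
    by_contra hc
    push Not at hc
    have hQ : ∀ n : ℕ, ∃ v ∈ U, v ≠ 0 ∧ ∀ t, v t ≠ 0 → n ≤ CL.rk t := by
      intro n
      induction n with
      | zero =>
        obtain ⟨v, hv, h0⟩ := U.exists_mem_ne_zero_of_ne_bot hU
        exact ⟨v, hv, h0, fun _ _ => Nat.zero_le _⟩
      | succ n ih =>
        obtain ⟨v, hv, h0, hr⟩ := ih
        obtain ⟨i, hi⟩ := hc v hv h0
        refine ⟨_, hinv i v hv, hi, fun s hs => ?_⟩
        rw [opX_apply] at hs
        obtain ⟨r, _, hr'⟩ := Finset.exists_ne_zero_of_sum_ne_zero hs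
        have h1 := hr r (right_ne_zero_of_mul hr')
        have h2 : CL.edge i r s := by
          by_contra h2
          rw [if_neg h2, zero_mul] at hr'
          exact hr' rfl
        rw [edge_rk h2]
        omega
    obtain ⟨v, _, h0, hr⟩ := hQ (∑ t : L6ab a b, CL.rk t + 1)
    apply h0
    funext t
    by_contra h
    have h1 := hr t h
    have h2 := Finset.single_le_sum (f := fun t : L6ab a b => CL.rk t)
      (fun _ _ => Nat.zero_le _) (Finset.mem_univ t)
    change CL.rk t ≤ ∑ t : L6ab a b, CL.rk t at h2
    omega
  have hw := ker_tmax P hP hw0 hwX htx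
  have hz : w - w tx • (Pi.single tx 1 : L6ab a b → ℂ) = 0 := by
    by_contra hc
    refine ker_tmax P hP hc (fun i => ?_) htx ?_
    · rw [map_sub, map_smul, hwX, opX_tmax P htx, smul_zero, sub_zero]
    · simp
  rw [sub_eq_zero] at hz
  have h3 : (Pi.single tx 1 : L6ab a b → ℂ) = (w tx)⁻¹ • w := by
    conv_rhs => rw [hz]
    rw [smul_smul]
    simp [hw]
  rw [h3]
  exact U.smul_mem _ hwU

theorem irr_part (hP : ∀ r s : L6ab a b, (∃ i, CL.edge i r s) → 0 < P r s)
    (U : Submodule ℂ (L6ab a b → ℂ))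
    (hX : ∀ i, ∀ v ∈ U, CL.opX P i v ∈ U) (hY : ∀ i, ∀ v ∈ U, CL.opY P i v ∈ U) :
    U = ⊥ ∨ U = ⊤ := by
  obtain ⟨tx, htx⟩ := exists_tmax a b
  by_contra hc
  push Not at hc
  obtain ⟨hb, ht⟩ := hc
  let W : Submodule ℂ (L6ab a b → ℂ) :=
    { carrier := {w | ∀ v ∈ U, ∑ t, w t * v t = 0}
      add_mem' := by
        intro p q hp hq v hv
        simp only [Pi.add_apply, add_mul, Finset.sum_add_distrib]
        rw [hp v hv, hq v hv, add_zero]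
      zero_mem' := by
        intro v _
        simp
      smul_mem' := by
        intro c p hp v hv
        simp only [Pi.smul_apply, smul_eq_mul, mul_assoc, ← Finset.mul_sum]
        rw [hp v hv, mul_zero] }
  have hW : W ≠ ⊥ := by
    obtain ⟨f, hf, hle⟩ := Submodule.exists_le_ker_of_lt_top U (lt_top_iff_ne_top.2 ht)
    have hfv : ∀ v, f v = ∑ t, f (Pi.single t 1) * v t := by
      intro v
      conv_lhs => rw [pi_eq_sum_univ' v]
      rw [map_sum]
      refine Finset.sum_congr rfl fun t _ => ?_
      rw [map_smul, smul_eq_mul, mul_comm]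
    intro hW
    have hmem : (fun t => f (Pi.single t 1)) ∈ W := by
      intro v hv
      rw [← hfv]
      exact hle hv
    rw [hW, Submodule.mem_bot] at hmem
    apply hf
    ext1 t
    ext
    simpa using congrFun hmem t
  have h1 := tmax_mem P hP htx U hb hX
  have h2 := tmax_mem P hP htx W hW (by
    intro i w hw v hv
    have h3 := hw _ (hY i v hv)
    rw [← h3]
    simp only [opX_apply, opY_apply, Finset.sum_mul, Finset.mul_sum]
    rw [Finset.sum_comm]
    refine Finset.sum_congr rfl fun r _ => Finset.sum_congr rfl fun s _ => ?_
    ring)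
  have h3 := h2 _ h1
  rw [Finset.sum_eq_single tx] at h3
  · simp at h3
  · intro t _ h
    simp [h]
  · simp
end irr

theorem opH_single (i : N6) (t : L6ab a b) : CL.opH i (Pi.single t 1 : L6ab a b → ℂ) =
    ((CL.mwt i t : ℤ) : ℂ) • (Pi.single t 1 : L6ab a b → ℂ) := by
  funext s
  change ((Matrix.diagonal fun t => ((CL.mwt i t : ℤ) : ℂ)).mulVec (Pi.single t 1)) s = _
  rw [Matrix.mulVec_diagonal]
  by_cases h : s = t
  · subst h; simp
  · simp [h]

end aux12

/-- Corollary 4.5 for `L6(a,b)`: there is a family of positive rational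
edge coefficients on `L6(a,b)` whose square roots define a representation of `𝔤(E₆)`;
any such representation is irreducible with highest weight `aω₁' + bω₆'`. -/
theorem statement_12 (a b : ℕ) :
    ∃ P : L6ab a b → L6ab a b → ℚ,
      (∀ r s : L6ab a b, (∃ i, CL.edge i r s) → 0 < P r s) ∧
      (∃ φ : CL.gLie A6 →ₗ⁅ℂ⁆ Module.End ℂ (L6ab a b → ℂ),
        ∀ i : N6, φ (CL.px A6 i) = CL.opX P i ∧ φ (CL.py A6 i) = CL.opY P i ∧
          φ (CL.ph A6 i) = CL.opH i) ∧
      ∀ P' : L6ab a b → L6ab a b → ℚ,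
        (∀ r s : L6ab a b, (∃ i, CL.edge i r s) → 0 < P' r s) →
        ∀ φ : CL.gLie A6 →ₗ⁅ℂ⁆ Module.End ℂ (L6ab a b → ℂ),
          (∀ i : N6, φ (CL.px A6 i) = CL.opX P' i ∧ φ (CL.py A6 i) = CL.opY P' i ∧
            φ (CL.ph A6 i) = CL.opH i) →
          (∀ U : Submodule ℂ (L6ab a b → ℂ), (∀ g : CL.gLie A6, ∀ v ∈ U, φ g v ∈ U) →
            U = ⊥ ∨ U = ⊤) ∧
          ∃ tmax : L6ab a b, (∀ t : L6ab a b, CL.elLe t tmax) ∧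
            (∀ i : N6, CL.opX P' i ((Pi.single tmax 1 : L6ab a b → ℂ)) = 0) ∧
            CL.opH m1 ((Pi.single tmax 1 : L6ab a b → ℂ)) = (a : ℂ) • (Pi.single tmax 1 : L6ab a b → ℂ) ∧
            CL.opH m6 ((Pi.single tmax 1 : L6ab a b → ℂ)) = (b : ℂ) • (Pi.single tmax 1 : L6ab a b → ℂ) ∧
            (∀ j : N6, j ≠ m1 → j ≠ m6 → CL.opH j ((Pi.single tmax 1 : L6ab a b → ℂ)) = 0) := by
  refine ⟨Pc a b, (exist_part a b).1, (exist_part a b).2, ?_⟩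
  intro P' hP φ hφ
  refine ⟨fun U hU => irr_part P' hP U (fun i v hv => ?_) (fun i v hv => ?_), ?_⟩
  · rw [← (hφ i).1]; exact hU _ v hv
  · rw [← (hφ i).2.1]; exact hU _ v hv
  obtain ⟨tx, htx⟩ := exists_tmax a b
  refine ⟨tx, ?_, opX_tmax P' htx, ?_, ?_, ?_⟩
  · intro t x
    obtain ⟨e, rfl⟩ := pte.surjective x
    have := le_tm t (emb e)
    rw [← htx, CC_emb, CC_emb] at this
    exact_mod_cast this
  · rw [opH_single, mwt_eq, htx, wt_tm]; simp
  · rw [opH_single, mwt_eq, htx, wt_tm]; simp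
  · intro j h1 h6
    rw [opH_single, mwt_eq, htx, wt_tm]; simp [h1, h6]

end
end
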